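/- arXiv:2411.03516 — 3 statements merged into one kernel-verified Lean document; each statement's English description precedes it below -/
import Mathlib

section
/- The critical value function τ has no downward jumps: for every β_0 ∈ (1,∞), lim_{β↘β_0} τ(β) ≥ τ(β_0) and lim_{β↗β_0} τ(β) = τ(β_0). -/
open Set Filter MeasureTheory Topology

noncomputable section

/-- The β-transformation `x ↦ βx - ⌊βx⌋`. -/
def Tbeta (β x : ℝ) : ℝ := Int.fract (β * x)

/-- The survivor set `K_β(t)`: points of `[0,1)` whose orbit never enters `[0,t)`. -/
def survivor (β t : ℝ) : Set ℝ :=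
  {x | x ∈ Set.Ico (0 : ℝ) 1 ∧ ∀ n : ℕ, t ≤ (Tbeta β)^[n] x}

/-- The set-valued bifurcation set `E_β`. -/
def Ebif (β : ℝ) : Set ℝ :=
  {t | t ∈ Set.Ico (0 : ℝ) 1 ∧ ∀ t' : ℝ, t < t' → survivor β t' ≠ survivor β t}

/-- `(c)_β = Σ_{i≥1} c_i β^{-i}` for an infinite digit sequence (indexed from `0`). -/
def valSeq (β : ℝ) (c : ℕ → ℕ) : ℝ := ∑' i : ℕ, (c i : ℝ) / β ^ (i + 1)

/-- `(w 0^∞)_β` for a finite word `w`. -/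
def valWord (β : ℝ) (w : List ℕ) : ℝ :=
  ∑ i ∈ Finset.range w.length, (w.getD i 0 : ℝ) / β ^ (i + 1)

/-- `w⁺`: increment the last letter of `w`. -/
def wplus (w : List ℕ) : List ℕ := w.dropLast ++ [w.getLast! + 1]

/-- `w⁻`: decrement the last letter of `w`. -/
def wminus (w : List ℕ) : List ℕ := w.dropLast ++ [w.getLast! - 1]

/-- `θ`: increment every digit of `w` by one. -/
def theta (w : List ℕ) : List ℕ := w.map (· + 1)

/-- `L(w)`: the lexicographically largest cyclic permutation of `w`. -/
def maxCyc (w : List ℕ) : List ℕ := ((List.range w.length).map w.rotate).foldl max []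

/-- `w^∞`: the periodic sequence with period block `w`. -/
def perSeq (w : List ℕ) : ℕ → ℕ := fun i => w.getD (i % w.length) 0

/-- The sequence given by the word `w` followed by the sequence `c`. -/
def wordSeq (w : List ℕ) (c : ℕ → ℕ) : ℕ → ℕ :=
  fun i => if i < w.length then w.getD i 0 else c (i - w.length)

/-- Strict lexicographic order `≺` on sequences. -/
def seqLt (x y : ℕ → ℕ) : Prop := ∃ n, (∀ i < n, x i = y i) ∧ x n < y n

/-- Lexicographic order `≼` on sequences. -/
def seqLe (x y : ℕ → ℕ) : Prop := x = y ∨ seqLt x y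

/-- The `n`-fold left shift `σⁿ` on sequences. -/
def shiftn (n : ℕ) (x : ℕ → ℕ) : ℕ → ℕ := fun i => x (i + n)

/-- One step of the Farey recursion: insert the concatenation `w_i w_{i+1}`
between consecutive entries. -/
def fareyInsert : List (List ℕ) → List (List ℕ)
  | [] => []
  | [w] => [w]
  | w :: v :: rest => w :: (w ++ v) :: fareyInsert (v :: rest)

/-- The ordered set `F_n` of Farey words of level `n`. -/
def fareyLevel : ℕ → List (List ℕ)
  | 0 => [[0], [1]]
  | n + 1 => fareyInsert (fareyLevel n)

/-- `F`: all Farey words of length at least two. -/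
def FareySet : Set (List ℕ) := {w | (∃ n, w ∈ fareyLevel n) ∧ w ≠ [0] ∧ w ≠ [1]}

/-- `F̂ = F ∪ {1}`. -/
def FareyHat : Set (List ℕ) := FareySet ∪ {[1]}

/-- The extended Farey set `F_e = {θ^k(w) : w ∈ F̂, k ≥ 0}`. -/
def FareyExt : Set (List ℕ) := {w | ∃ v ∈ FareyHat, ∃ k : ℕ, w = theta^[k] v}

/-- A nonempty word is Lyndon iff it is strictly smaller than each of its nontrivial
cyclic rotations (equivalently: aperiodic and lexicographically smallest among its
cyclic permutations). -/
def IsLyndon (w : List ℕ) : Prop := w ≠ [] ∧ ∀ i, 0 < i → i < w.length → w < w.rotate i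

/-- `L_e`: all Lyndon words over `ℕ ∪ {0}` except the single-letter word `0`. -/
def LyndonExt : Set (List ℕ) := {w | IsLyndon w ∧ w ≠ [0]}

/-- `L`: Lyndon words over `{0,1}` of length at least `2`. -/
def LyndonBin : Set (List ℕ) := {w | IsLyndon w ∧ 2 ≤ w.length ∧ ∀ d ∈ w, d ≤ 1}

/-- The block of `Φ_s` emitted for current digit `d` after previous digit `p`:
`L(s)` for `00`, `s⁻` for `10`, `L(s)⁺` for `01`, `s` for `11`. -/
def phiBlock (s : List ℕ) (p d : ℕ) : List ℕ :=
  if d = 0 then (if p = 0 then maxCyc s else wminus s)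
  else (if p = 0 then wplus (maxCyc s) else s)

def phiAux (s : List ℕ) : ℕ → List ℕ → List ℕ
  | _, [] => []
  | p, d :: rest => phiBlock s p d ++ phiAux s d rest

/-- The substitution `Φ_s` on finite words; `s • r = subst s r`.  An initial digit `0`
produces `s⁻`, an initial digit `1` produces `L(s)⁺`, and thereafter runs
`0^k` resp. `1^l` produce `L(s)^{k-1}` resp. `s^{l-1}`, in accordance with
`Φ_s(0^{k₁}1^{l₁}…) = s⁻ L(s)^{k₁-1} L(s)⁺ s^{l₁-1} …` and
`Φ_s(1^{k₁}0^{l₁}…) = L(s)⁺ s^{k₁-1} s⁻ L(s)^{l₁-1} …`. -/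
def subst (s r : List ℕ) : List ℕ :=
  match r with
  | [] => []
  | d :: rest => phiBlock s (1 - d) d ++ phiAux s d rest

/-- The substitution `Φ_s` on infinite sequences, as the limit of its values
on initial segments (each digit contributes a nonempty block, so the `i`-th letter
is determined by the first `i+1` digits). -/
def phiSeq (s : List ℕ) (c : ℕ → ℕ) : ℕ → ℕ :=
  fun i => (subst s (List.ofFn fun j : Fin (i + 1) => c j)).getD i 0

/-- `Λ_e(m) = {s₁ • s₂ • … • s_m : s₁ ∈ F_e, s₂,…,s_m ∈ F}`. -/
def LambdaE (m : ℕ) : Set (List ℕ) :=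
  {w | ∃ s₁ ∈ FareyExt, ∃ rs : List (List ℕ),
    rs.length = m - 1 ∧ (∀ r ∈ rs, r ∈ FareySet) ∧ w = rs.foldl subst s₁}

/-- `Λ_e = ∪_{m≥1} Λ_e(m)`. -/
def LambdaExt : Set (List ℕ) := ⋃ m ∈ Set.Ici 1, LambdaE m

/-- `β_ℓ^S`: the base `β > 1` with `(L(S)^∞)_β = 1` (it is unique since
`β ↦ (c)_β` is strictly decreasing). -/
def betaL (S : List ℕ) : ℝ :=
  Classical.epsilon fun β : ℝ => 1 < β ∧ valSeq β (perSeq (maxCyc S)) = 1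

/-- `β_*^S`: the base `β > 1` with `(L(S)⁺ S⁻ L(S)^∞)_β = 1`. -/
def betaStar (S : List ℕ) : ℝ :=
  Classical.epsilon fun β : ℝ =>
    1 < β ∧ valSeq β (wordSeq (wplus (maxCyc S) ++ wminus S) (perSeq (maxCyc S))) = 1

/-- `β_r^S`: the base `β > 1` with `(L(S)⁺ S^∞)_β = 1`. -/
def betaR (S : List ℕ) : ℝ :=
  Classical.epsilon fun β : ℝ => 1 < β ∧ valSeq β (wordSeq (wplus (maxCyc S)) (perSeq S)) = 1

/-- The Lyndon/Farey interval `J^S = [β_ℓ^S, β_r^S]`. -/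
def Jint (S : List ℕ) : Set ℝ := Set.Icc (betaL S) (betaR S)

/-- The basic interval `I^S = [β_ℓ^S, β_*^S]`. -/
def Iint (S : List ℕ) : Set ℝ := Set.Icc (betaL S) (betaStar S)

/-- The exceptional set `E = (1,∞) ∖ ∪_{s ∈ F_e} J^s`. -/
def Eexc : Set ℝ := Set.Ioi 1 \ ⋃ s ∈ FareyExt, Jint s

/-- The relative exceptional set `E^S = (J^S ∖ I^S) ∖ ∪_{r ∈ F} J^{S•r}`. -/
def EexcRel (S : List ℕ) : Set ℝ :=
  (Jint S \ Iint S) \ ⋃ r ∈ FareySet, Jint (subst S r)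

/-- The infinitely renormalizable set `E_∞ = ∩_{m≥1} ∪_{S ∈ Λ_e(m)} J^S`. -/
def Einf : Set ℝ := ⋂ m ∈ Set.Ici 1, ⋃ S ∈ LambdaE m, Jint S

/-- `E_L = E ∪ {β_ℓ^s : s ∈ F_e}`. -/
def EL : Set ℝ := Eexc ∪ {x | ∃ s ∈ FareyExt, x = betaL s}

/-- The critical value `τ(β) = min{t > 0 : dim_H K_β(t) = 0}`. -/
def tau (β : ℝ) : ℝ := sInf {t : ℝ | 0 < t ∧ dimH (survivor β t) = 0}

end

namespace BetaTransformation

/-- If distinct `g`-values at scale `a⁻ⁿ` force `f`-values to be separated at scale `b⁻ⁿ`, then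
positivity of the dimension of the `g`-image passes to the `f`-image. -/
theorem dimH_image_ne_zero_of_separation {ι : Type*} {S : Set ι} {f g : ι → ℝ} {a b c C : ℝ}
    (ha : 1 < a) (hb : 1 < b) (hc : 0 < c)
    (hsep : ∀ x ∈ S, ∀ y ∈ S, g x ≠ g y →
      ∃ n : ℕ, |g x - g y| ≤ C * (a ^ n)⁻¹ ∧ c * (b ^ n)⁻¹ ≤ |f x - f y|)
    (hg : dimH (g '' S) ≠ 0) : dimH (f '' S) ≠ 0 := by
  intro hf
  apply hg
  rcases S.eq_empty_or_nonempty with rfl | ⟨x₀, hx₀⟩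
  · simp
  have : Nonempty ι := ⟨x₀⟩
  have hγ : 0 < Real.logb b a := Real.logb_pos hb ha
  lift Real.logb b a to NNReal using hγ.le with γ hγeq
  have hbγ : b ^ (γ : ℝ) = a := by
    rw [hγeq]
    exact Real.rpow_logb (by linarith) (by linarith) (by linarith)
  have key : ∀ x ∈ S, ∀ y ∈ S, |g x - g y| ≤ |C| / c ^ (γ : ℝ) * |f x - f y| ^ (γ : ℝ) := by
    intro x hx y hy
    by_cases hxy : g x = g y
    · rw [hxy, sub_self, abs_zero]
      positivity
    · obtain ⟨n, h₁, h₂⟩ := hsep x hx y hy hxy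
      have hbn : 0 < b ^ n := by positivity
      have h₃ : c ^ (γ : ℝ) * (a ^ n)⁻¹ ≤ |f x - f y| ^ (γ : ℝ) := by
        calc c ^ (γ : ℝ) * (a ^ n)⁻¹ = (c * (b ^ n)⁻¹) ^ (γ : ℝ) := by
              rw [Real.mul_rpow hc.le (by positivity), Real.inv_rpow hbn.le, ← Real.rpow_natCast,
                ← Real.rpow_natCast, ← Real.rpow_mul (by linarith), mul_comm (n : ℝ),
                Real.rpow_mul (by linarith), hbγ]
          _ ≤ _ := Real.rpow_le_rpow (by positivity) h₂ γ.coe_nonneg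
      have hcγ : 0 < c ^ (γ : ℝ) := Real.rpow_pos_of_pos hc _
      have han : 0 < (a ^ n)⁻¹ := by positivity
      calc |g x - g y| ≤ |C| * (a ^ n)⁻¹ :=
            h₁.trans (mul_le_mul_of_nonneg_right (le_abs_self C) han.le)
        _ = |C| / c ^ (γ : ℝ) * (c ^ (γ : ℝ) * (a ^ n)⁻¹) := by field_simp
        _ ≤ _ := mul_le_mul_of_nonneg_left h₃ (by positivity)
  set D : NNReal := ⟨|C| / c ^ (γ : ℝ), by positivity⟩ with hD
  have hinv : ∀ x ∈ S, Function.invFunOn f S (f x) ∈ S ∧ f (Function.invFunOn f S (f x)) = f x :=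
    fun x hx => ⟨Function.invFunOn_mem ⟨x, hx, rfl⟩, Function.invFunOn_eq ⟨x, hx, rfl⟩⟩
  have hhol : HolderOnWith D γ (g ∘ Function.invFunOn f S) (f '' S) := by
    rintro _ ⟨x, hx, rfl⟩ _ ⟨y, hy, rfl⟩
    have h := key _ (hinv x hx).1 _ (hinv y hy).1
    rw [(hinv x hx).2, (hinv y hy).2] at h
    rw [edist_dist, edist_dist, Real.dist_eq, Real.dist_eq,
      ENNReal.ofReal_rpow_of_nonneg (abs_nonneg _) γ.coe_nonneg,
      ← ENNReal.ofReal_coe_nnreal, ← ENNReal.ofReal_mul D.coe_nonneg]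
    exact ENNReal.ofReal_le_ofReal h
  have himage : (g ∘ Function.invFunOn f S) '' (f '' S) = g '' S := by
    rw [← image_comp]
    refine image_congr fun x hx => ?_
    have h := key _ (hinv x hx).1 _ hx
    rw [(hinv x hx).2, sub_self, abs_zero, Real.zero_rpow (by exact_mod_cast hγ.ne'), mul_zero] at h
    exact sub_eq_zero.1 (abs_nonpos_iff.1 h)
  have h := hhol.dimH_image_le (by exact_mod_cast hγ)
  rw [himage, hf, ENNReal.zero_div] at h
  exact le_antisymm h zero_le

/-- Two increasing affine self-maps of an interval with separated images have an attractor,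
coded by binary sequences, of positive dimension. -/
theorem exists_coding_of_separated_affine {A r : Fin 2 → ℝ} {l u ρ c : ℝ} (hlu : l ≤ u)
    (hρ : 0 < ρ) (hρ₁ : ρ < 1) (hr : ∀ i, ρ ≤ r i) (hc : 0 < c)
    (hmaps : ∀ i, ∀ z ∈ Icc l u, A i + r i * z ∈ Icc l u)
    (hsep : ∀ z ∈ Icc l u, ∀ w ∈ Icc l u, c ≤ |A 0 + r 0 * z - (A 1 + r 1 * w)|) :
    ∃ f : (ℕ → Fin 2) → ℝ, (∀ b, f b ∈ Icc l u) ∧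
      (∀ b, f b = A (b 0) + r (b 0) * f (fun k => b (k + 1))) ∧ dimH (range f) ≠ 0 := by
  let F : ℕ → (ℕ → Fin 2) → ℝ :=
    fun N => Nat.rec (fun _ => u) (fun _ G b => A (b 0) + r (b 0) * G (fun k => b (k + 1))) N
  have hF : ∀ N b, F (N + 1) b = A (b 0) + r (b 0) * F N (fun k => b (k + 1)) := fun _ _ => rfl
  have hmem : ∀ N b, F N b ∈ Icc l u := by
    intro N
    induction N with
    | zero => exact fun b => ⟨hlu, le_rfl⟩
    | succ N ih => exact fun b => by rw [hF]; exact hmaps _ _ (ih _)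
  have hstep : ∀ N b, F (N + 1) b ≤ F N b := by
    intro N
    induction N with
    | zero => exact fun b => (hmem 1 b).2
    | succ N ih =>
      intro b
      rw [hF (N + 1), hF N]
      have h := mul_le_mul_of_nonneg_left (ih fun k => b (k + 1)) (hρ.le.trans (hr (b 0)))
      linarith
  have hlim : ∀ b, Tendsto (fun N => F N b) atTop (𝓝 (⨅ N, F N b)) := fun b =>
    tendsto_atTop_ciInf (antitone_nat_of_succ_le fun N => hstep N b)
      ⟨l, by rintro _ ⟨N, rfl⟩; exact (hmem N b).1⟩
  set f : (ℕ → Fin 2) → ℝ := fun b => ⨅ N, F N b with hf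
  have hfmem : ∀ b, f b ∈ Icc l u := fun b =>
    isClosed_Icc.mem_of_tendsto (hlim b) (Eventually.of_forall fun N => hmem N b)
  have hfrec : ∀ b, f b = A (b 0) + r (b 0) * f (fun k => b (k + 1)) := fun b =>
    tendsto_nhds_unique ((hlim b).comp (tendsto_add_atTop_nat 1))
      (((hlim fun k => b (k + 1)).const_mul _).const_add _)
  refine ⟨f, hfmem, hfrec, ?_⟩
  have hdiff : ∀ n : ℕ, ∀ b b' : ℕ → Fin 2, (∀ i < n, b i = b' i) → b n ≠ b' n →
      c * ρ ^ n ≤ |f b - f b'| := by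
    intro n
    induction n with
    | zero =>
      intro b b' _ hne
      rw [hfrec b, hfrec b', pow_zero, mul_one]
      have h01 : (b 0 = 0 ∧ b' 0 = 1) ∨ (b 0 = 1 ∧ b' 0 = 0) := by omega
      rcases h01 with ⟨h0, h1⟩ | ⟨h0, h1⟩
      · rw [h0, h1]
        exact hsep _ (hfmem _) _ (hfmem _)
      · rw [h0, h1, abs_sub_comm]
        exact hsep _ (hfmem _) _ (hfmem _)
    | succ n ih =>
      intro b b' heq hne
      have h := ih (fun k => b (k + 1)) (fun k => b' (k + 1))
        (fun i hi => heq (i + 1) (by omega)) hne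
      rw [hfrec b, hfrec b', heq 0 (by omega), add_sub_add_left_eq_sub, ← mul_sub, abs_mul,
        abs_of_pos (hρ.trans_le (hr _)), pow_succ', mul_left_comm]
      exact mul_le_mul (hr _) h (by positivity) (hρ.le.trans (hr _))
  rw [← image_univ]
  refine dimH_image_ne_zero_of_separation (g := Real.ofDigits (b := 2)) (a := 2) (b := ρ⁻¹)
    (C := 1) one_lt_two ((one_lt_inv₀ hρ).2 hρ₁) hc ?_ ?_
  · intro b _ b' _ hne
    have hbb' : b ≠ b' := fun h => hne (by rw [h])
    refine ⟨PiNat.firstDiff b b', ?_, ?_⟩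
    · simpa using Real.abs_ofDigits_sub_ofDigits_le (x := b) (y := b') (n := PiNat.firstDiff b b')
        fun i hi => PiNat.apply_eq_of_lt_firstDiff hi
    · rw [inv_pow, inv_inv]
      exact hdiff _ _ _ (fun i hi => PiNat.apply_eq_of_lt_firstDiff hi)
        (PiNat.apply_firstDiff_ne hbb')
  · intro h0
    have h1 := dimH_mono (Real.ofDigits_SurjOn (b := 2) one_lt_two)
    rw [h0, Real.dimH_of_nonempty_interior (by simp)] at h1
    simp at h1

theorem abs_sub_lt_one_of_mem_Ico {x y : ℝ} (hx : x ∈ Ico (0 : ℝ) 1) (hy : y ∈ Ico (0 : ℝ) 1) :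
    |x - y| < 1 := by
  rw [abs_lt]
  constructor <;> linarith [hx.1, hx.2, hy.1, hy.2]

theorem Tbeta_mem_Ico (β x : ℝ) : Tbeta β x ∈ Ico (0 : ℝ) 1 :=
  ⟨Int.fract_nonneg _, Int.fract_lt_one _⟩

theorem iterate_Tbeta_mem_Ico (β : ℝ) {x : ℝ} (hx : x ∈ Ico (0 : ℝ) 1) (n : ℕ) :
    (Tbeta β)^[n] x ∈ Ico (0 : ℝ) 1 := by
  cases n with
  | zero => exact hx
  | succ n => rw [Function.iterate_succ_apply']; exact Tbeta_mem_Ico _ _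

/-- The discounted orbit sum `Σ Tⁿx / β'^(n+1)`. -/
noncomputable def orbitSum (β β' x : ℝ) : ℝ := ∑' n : ℕ, (Tbeta β)^[n] x / β' ^ (n + 1)

/-- The value in base `β'` of the greedy digits of `x` in base `β`. -/
noncomputable def baseChange (β β' x : ℝ) : ℝ := x - (β' - β) * orbitSum β β' x

theorem hasSum_one_div_pow_succ {β' : ℝ} (hβ' : 1 < β') :
    HasSum (fun n : ℕ => 1 / β' ^ (n + 1)) (1 / (β' - 1)) := by
  have h := (hasSum_geometric_of_lt_one (inv_nonneg.2 (by linarith))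
    (inv_lt_one_of_one_lt₀ hβ')).mul_left β'⁻¹
  have h1 : β' - 1 ≠ 0 := by linarith
  have h2 : β' ≠ 0 := by linarith
  have hterm : (fun n : ℕ => 1 / β' ^ (n + 1)) = fun n : ℕ => β'⁻¹ * β'⁻¹ ^ n := by
    funext n
    rw [one_div, pow_succ', mul_inv, inv_pow]
  have hval : 1 / (β' - 1) = β'⁻¹ * (1 - β'⁻¹)⁻¹ := by
    rw [← mul_inv, mul_sub, mul_one, mul_inv_cancel₀ h2, one_div]
  rwa [hterm, hval]

theorem summable_orbitSum (β : ℝ) {β' x : ℝ} (hβ' : 1 < β') (hx : x ∈ Ico (0 : ℝ) 1) :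
    Summable fun n : ℕ => (Tbeta β)^[n] x / β' ^ (n + 1) := by
  have hpos : ∀ n : ℕ, 0 < β' ^ (n + 1) := fun n => by positivity
  refine Summable.of_nonneg_of_le
    (fun n => div_nonneg (iterate_Tbeta_mem_Ico β hx n).1 (hpos n).le)
    (fun n => ?_) (hasSum_one_div_pow_succ hβ').summable
  exact div_le_div_of_nonneg_right (iterate_Tbeta_mem_Ico β hx n).2.le (hpos n).le

theorem orbitSum_nonneg (β : ℝ) {β' x : ℝ} (hβ' : 1 < β') (hx : x ∈ Ico (0 : ℝ) 1) :
    0 ≤ orbitSum β β' x :=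
  tsum_nonneg fun n => div_nonneg (iterate_Tbeta_mem_Ico β hx n).1 (by positivity)

theorem orbitSum_le (β : ℝ) {β' x : ℝ} (hβ' : 1 < β') (hx : x ∈ Ico (0 : ℝ) 1) :
    orbitSum β β' x ≤ 1 / (β' - 1) :=
  hasSum_le (fun n => div_le_div_of_nonneg_right (iterate_Tbeta_mem_Ico β hx n).2.le
    (by positivity)) (summable_orbitSum β hβ' hx).hasSum (hasSum_one_div_pow_succ hβ')

theorem mul_orbitSum (β : ℝ) {β' x : ℝ} (hβ' : 1 < β') (hx : x ∈ Ico (0 : ℝ) 1) :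
    β' * orbitSum β β' x = x + orbitSum β β' (Tbeta β x) := by
  have hne : β' ≠ 0 := by linarith
  rw [orbitSum, (summable_orbitSum β hβ' hx).tsum_eq_zero_add, mul_add, ← tsum_mul_left]
  congr 1
  · simp only [Function.iterate_zero, id, zero_add, pow_one]
    field_simp
  · refine tsum_congr fun n => ?_
    rw [Function.iterate_succ_apply]
    field_simp
    ring

theorem mul_baseChange (β : ℝ) {β' x : ℝ} (hβ' : 1 < β') (hx : x ∈ Ico (0 : ℝ) 1) :
    β' * baseChange β β' x = ⌊β * x⌋ + baseChange β β' (Tbeta β x) := by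
  have h := mul_orbitSum β hβ' hx
  have hT : Tbeta β x = β * x - ⌊β * x⌋ := rfl
  simp only [baseChange]
  linear_combination -(β' - β) * h - hT

/-- An invariant set whose image under the change of base stays in `[t, ρ]` with `ρ < 1` transfers
positive dimension to the survivor set in the new base. -/
theorem dimH_survivor_ne_zero_of_baseChange {β β' t ρ : ℝ} {S : Set ℝ} (hβ : 1 < β) (hβ' : 1 < β')
    (hS : S ⊆ Ico 0 1) (hinv : ∀ x ∈ S, Tbeta β x ∈ S) (ht : 0 ≤ t) (hρ : ρ < 1)
    (hP : ∀ x ∈ S, baseChange β β' x ∈ Icc t ρ) (hdim : dimH S ≠ 0) :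
    dimH (survivor β' t) ≠ 0 := by
  have hconj : ∀ x ∈ S, Tbeta β' (baseChange β β' x) = baseChange β β' (Tbeta β x) := by
    intro x hx
    have hy := hP _ (hinv x hx)
    rw [Tbeta, mul_baseChange β hβ' (hS hx), Int.fract_intCast_add, Int.fract_eq_self]
    exact ⟨ht.trans hy.1, hy.2.trans_lt hρ⟩
  have hsub : baseChange β β' '' S ⊆ survivor β' t := by
    rintro _ ⟨x, hx, rfl⟩
    refine ⟨⟨ht.trans (hP x hx).1, (hP x hx).2.trans_lt hρ⟩, fun n => ?_⟩
    induction n generalizing x with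
    | zero => exact (hP x hx).1
    | succ n ih =>
      rw [Function.iterate_succ_apply, hconj x hx]
      exact ih _ (hinv x hx)
  have hsep : ∀ N : ℕ, ∀ x ∈ S, ∀ y ∈ S, (β ^ N)⁻¹ < |x - y| →
      ∃ n : ℕ, |x - y| ≤ 1 * (β ^ n)⁻¹ ∧
        (1 - ρ) / β' * (β' ^ n)⁻¹ ≤ |baseChange β β' x - baseChange β β' y| := by
    intro N
    induction N with
    | zero =>
      intro x hx y hy h
      rw [pow_zero, inv_one] at h
      have := abs_sub_lt_one_of_mem_Ico (hS hx) (hS hy)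
      linarith
    | succ N ih =>
      intro x hx y hy h
      have ex := mul_baseChange β hβ' (hS hx)
      have ey := mul_baseChange β hβ' (hS hy)
      have hβ0 : 0 < β := by linarith
      have hβ'0 : 0 < β' := by linarith
      by_cases hd : ⌊β * x⌋ = ⌊β * y⌋
      · have hT : Tbeta β x - Tbeta β y = β * (x - y) := by
          simp only [Tbeta, Int.fract, hd]
          ring
        have hPd : baseChange β β' (Tbeta β x) - baseChange β β' (Tbeta β y) =
            β' * (baseChange β β' x - baseChange β β' y) := by
          rw [hd] at ex
          linear_combination ey - ex
        obtain ⟨n, h₁, h₂⟩ := ih _ (hinv x hx) _ (hinv y hy) (by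
          rw [hT, abs_mul, abs_of_pos hβ0]
          rw [pow_succ, mul_inv, ← div_eq_mul_inv, div_lt_iff₀ hβ0] at h
          linarith)
        rw [hT, abs_mul, abs_of_pos hβ0] at h₁
        rw [hPd, abs_mul, abs_of_pos hβ'0] at h₂
        refine ⟨n + 1, ?_, ?_⟩
        · rw [pow_succ, mul_inv, ← mul_assoc, ← div_eq_mul_inv, le_div_iff₀ hβ0]
          linarith
        · rw [pow_succ β', mul_inv, ← mul_assoc, ← div_eq_mul_inv, div_le_iff₀ hβ'0]
          linarith
      · refine ⟨0, by simpa using (abs_sub_lt_one_of_mem_Ico (hS hx) (hS hy)).le, ?_⟩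
        rw [pow_zero, inv_one, mul_one, div_le_iff₀ hβ'0]
        have h1 : (1 : ℝ) ≤ |(⌊β * x⌋ : ℝ) - ⌊β * y⌋| := by
          exact_mod_cast Int.one_le_abs (sub_ne_zero.2 hd)
        have hx' := hP _ (hinv x hx)
        have hy' := hP _ (hinv y hy)
        have h2 : |baseChange β β' (Tbeta β x) - baseChange β β' (Tbeta β y)| ≤ ρ := by
          rw [abs_le]
          constructor <;> linarith [hx'.1, hx'.2, hy'.1, hy'.2]
        have h3 : |baseChange β β' x - baseChange β β' y| * β' =
            |((⌊β * x⌋ : ℝ) - ⌊β * y⌋) -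
              (baseChange β β' (Tbeta β y) - baseChange β β' (Tbeta β x))| := by
          rw [← abs_of_pos hβ'0, ← abs_mul, abs_of_pos hβ'0]
          congr 1
          linear_combination ex - ey
        rw [h3]
        rw [abs_sub_comm] at h2
        linarith [abs_sub_abs_le_abs_sub ((⌊β * x⌋ : ℝ) - ⌊β * y⌋)
          (baseChange β β' (Tbeta β y) - baseChange β β' (Tbeta β x))]
  have himage := dimH_image_ne_zero_of_separation (S := S) (f := baseChange β β') (g := id)
    (c := (1 - ρ) / β') (C := 1) hβ hβ' (div_pos (by linarith) (by linarith))
    (fun x hx y hy hxy => by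
      obtain ⟨N, hN⟩ := exists_pow_lt_of_lt_one (abs_pos.2 (sub_ne_zero.2 hxy))
        (inv_lt_one_of_one_lt₀ hβ)
      exact hsep N x hx y hy (by rwa [← inv_pow])) (by rwa [image_id])
  exact fun h0 => himage (le_antisymm (h0 ▸ dimH_mono hsub) zero_le)

/-- Points of `[0,1)` whose whole orbit stays in `[t, s]`. -/
def boundedSurvivor (β t s : ℝ) : Set ℝ :=
  {x | x ∈ Ico (0 : ℝ) 1 ∧ ∀ n : ℕ, (Tbeta β)^[n] x ∈ Icc t s}

theorem iterate_Tbeta_eq_add {β x w : ℝ} {n : ℕ}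
    (h : ∀ k ≤ n, (Tbeta β)^[k] x + β ^ k * (w - x) ∈ Ico (0 : ℝ) 1) :
    ∀ k ≤ n, (Tbeta β)^[k] w = (Tbeta β)^[k] x + β ^ k * (w - x) := by
  intro k
  induction k with
  | zero => simp
  | succ k ih =>
    intro hk
    have hk' := h (k + 1) hk
    rw [Function.iterate_succ_apply'] at hk'
    rw [Function.iterate_succ_apply', Function.iterate_succ_apply', ih (by omega)]
    rw [← Int.fract_eq_self.2 hk', Tbeta, Int.fract_eq_fract]
    refine ⟨⌊β * (Tbeta β)^[k] x⌋, ?_⟩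
    rw [Tbeta, Int.fract]
    ring

/-- If an orbit in the survivor set accumulates at `1`, then lowering the threshold slightly yields
a positive-dimensional set of orbits bounded away from `1`. -/
theorem exists_dimH_boundedSurvivor_ne_zero_of_sup_eq_one {β t t' z : ℝ} (hβ : 1 < β) (ht : 0 ≤ t)
    (htt' : t < t') (hz : z ∈ survivor β t') (hsup : ∀ s < 1, ∃ n : ℕ, s < (Tbeta β)^[n] z) :
    ∃ s < 1, dimH (boundedSurvivor β t s) ≠ 0 := by
  have hlt : ∀ n, (Tbeta β)^[n] z < 1 := fun n => (iterate_Tbeta_mem_Ico β hz.1 n).2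
  have hinf : ∀ N : ℕ, ∀ s < 1, ∃ n ≥ N, s < (Tbeta β)^[n] z := by
    intro N
    induction N with
    | zero => exact fun s hs => by simpa using hsup s hs
    | succ N ih =>
      intro s hs
      obtain ⟨n, hn, hn'⟩ := ih (max s ((Tbeta β)^[N] z)) (max_lt hs (hlt N))
      rw [max_lt_iff] at hn'
      refine ⟨n, Nat.succ_le_of_lt (lt_of_le_of_ne hn ?_), hn'.1⟩
      rintro rfl
      exact lt_irrefl _ hn'.2
  have hz1 := hlt 0
  have hzt := hz.2 0
  simp only [Function.iterate_zero, id] at hz1 hzt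
  set ε := t' - t with hε
  have hε0 : 0 < ε := by linarith
  have hε1 : ε ≤ 1 := by linarith
  obtain ⟨i, hi⟩ := hsup (1 - ε) (by linarith)
  obtain ⟨j, hij⟩ := hsup _ (hlt i)
  set x := (Tbeta β)^[i] z with hx
  set y := (Tbeta β)^[j] z with hy
  have hy1 : y < 1 := hlt j
  set d := min (x - (1 - ε)) ((y - x) / 2) with hd
  have hd0 : 0 < d := lt_min (by linarith) (by linarith)
  obtain ⟨N, hN⟩ := exists_pow_lt_of_lt_one hd0 (inv_lt_one_of_one_lt₀ hβ)
  have hsmall : ∀ p, N ≤ p → (β ^ p)⁻¹ ≤ d := by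
    intro p hp
    refine le_trans ?_ hN.le
    rw [inv_pow]
    gcongr
    exact hβ.le
  obtain ⟨p', hp', hp'y⟩ := hinf (N + 1 + i) y hy1
  obtain ⟨q', hq', hq'y⟩ := hinf (N + 1 + j) y hy1
  let J : Fin 2 → ℕ := ![i, j]
  let P : Fin 2 → ℕ := ![p' - i, q' - j]
  let X : Fin 2 → ℝ := fun a => (Tbeta β)^[J a] z
  have hshift : ∀ a k, (Tbeta β)^[k] (X a) = (Tbeta β)^[k + J a] z := fun a k =>
    (Function.iterate_add_apply _ _ _ _).symm
  have hP0 : ∀ a, N + 1 ≤ P a := by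
    simp only [Fin.forall_fin_two, P, Matrix.cons_val_zero, Matrix.cons_val_one]
    omega
  have hPd : ∀ a, (β ^ P a)⁻¹ ≤ d := fun a => hsmall _ (by have := hP0 a; omega)
  have hret : ∀ a, y < (Tbeta β)^[P a] (X a) := by
    intro a
    rw [hshift]
    revert a
    simp only [Fin.forall_fin_two, P, J, Matrix.cons_val_zero, Matrix.cons_val_one]
    rw [Nat.sub_add_cancel (by omega), Nat.sub_add_cancel (by omega)]
    exact ⟨hp'y, hq'y⟩
  have hX : ∀ a, x ≤ X a ∧ X a ≤ y := by
    simp only [Fin.forall_fin_two, X, J, Matrix.cons_val_zero, Matrix.cons_val_one]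
    exact ⟨⟨le_rfl, hij.le⟩, hij.le, le_rfl⟩
  have hXlt : ∀ a k, (Tbeta β)^[k] (X a) < 1 := fun a k => by rw [hshift]; exact hlt _
  have hXge : ∀ a k, t' ≤ (Tbeta β)^[k] (X a) := fun a k => by rw [hshift]; exact hz.2 _
  obtain ⟨s, hs, hs1⟩ :
      ∃ s, (∀ a, ∀ k ∈ Finset.range (P a + 1), (Tbeta β)^[k] (X a) ≤ s) ∧ s < 1 := by
    have h1 : ∀ᶠ s in 𝓝[<] (1 : ℝ),
        ∀ a, ∀ k ∈ Finset.range (P a + 1), (Tbeta β)^[k] (X a) ≤ s := by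
      rw [eventually_all]
      intro a
      rw [Filter.eventually_all_finset]
      intro k _
      filter_upwards [mem_nhdsWithin_of_mem_nhds (lt_mem_nhds (hXlt a k))] with s hs using hs.le
    exact (h1.and self_mem_nhdsWithin).exists
  have hr0 : ∀ a, 0 < (β ^ P a)⁻¹ := fun a => by positivity
  have hdrop : ∀ a, ∀ w ∈ Icc (1 - ε) y,
      -ε ≤ w - (Tbeta β)^[P a] (X a) ∧ w - (Tbeta β)^[P a] (X a) ≤ 0 := by
    intro a w hw
    constructor <;> linarith [hw.1, hw.2, hret a, hXlt a (P a)]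
  have himg : ∀ a, ∀ w ∈ Icc (1 - ε) y,
      X a - d ≤ X a - (β ^ P a)⁻¹ * (Tbeta β)^[P a] (X a) + (β ^ P a)⁻¹ * w ∧
      X a - (β ^ P a)⁻¹ * (Tbeta β)^[P a] (X a) + (β ^ P a)⁻¹ * w ≤ X a := by
    intro a w hw
    obtain ⟨h1, h2⟩ := hdrop a w hw
    have h3 := hPd a
    have h4 := hr0 a
    constructor <;> nlinarith
  have hdx : d ≤ x - (1 - ε) := min_le_left _ _
  have hdy : d ≤ (y - x) / 2 := min_le_right _ _
  obtain ⟨f, hfmem, hfrec, hfdim⟩ := exists_coding_of_separated_affine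
    (A := fun a => X a - (β ^ P a)⁻¹ * (Tbeta β)^[P a] (X a)) (r := fun a => (β ^ P a)⁻¹)
    (l := 1 - ε) (u := y) (ρ := (β ^ (max (P 0) (P 1)))⁻¹) (c := (y - x) / 2) (by linarith)
    (by positivity)
    (inv_lt_one_of_one_lt₀ (one_lt_pow₀ hβ (by have := hP0 0; omega)))
    (by
      intro a
      have : P a ≤ max (P 0) (P 1) := by
        revert a
        simp [Fin.forall_fin_two]
      exact inv_anti₀ (by positivity) (pow_le_pow_right₀ hβ.le this))
    (by linarith)
    (fun a w hw => ⟨by linarith [(himg a w hw).1, (hX a).1],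
      by linarith [(himg a w hw).2, (hX a).2]⟩)
    (by
      intro w hw w' hw'
      have h0 := (himg 0 w hw).2
      have h1 := (himg 1 w' hw').1
      have hX0 : X 0 = x := rfl
      have hX1 : X 1 = y := rfl
      refine le_trans ?_ (neg_le_abs _)
      linarith)
  refine ⟨s, hs1, fun h0 => hfdim (le_antisymm (h0 ▸ dimH_mono ?_) zero_le)⟩
  have horbit : ∀ k : ℕ, ∀ b, (Tbeta β)^[k] (f b) ∈ Icc t s := by
    intro k
    induction k using Nat.strong_induction_on with
    | _ k ih =>
      intro b
      set a := b 0 with ha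
      set w := f fun k => b (k + 1) with hw
      obtain ⟨hw1, hw2⟩ := hdrop a w (hfmem _)
      have hb : f b - X a = (β ^ P a)⁻¹ * (w - (Tbeta β)^[P a] (X a)) := by
        rw [hfrec b]
        ring
      have hbound : ∀ m ≤ P a, (Tbeta β)^[m] (X a) + β ^ m * (f b - X a) ∈ Icc t s := by
        intro m hm
        have hm1 : β ^ m * (β ^ P a)⁻¹ ≤ 1 := by
          rw [← div_eq_mul_inv]
          exact (div_le_one (by positivity)).2 (pow_le_pow_right₀ hβ.le hm)
        have hm0 : 0 < β ^ m * (β ^ P a)⁻¹ := by positivity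
        have h1 := hs a m (Finset.mem_range.2 (by omega))
        have h2 := hXge a m
        rw [hb, ← mul_assoc]
        constructor <;> nlinarith
      have hshadow := iterate_Tbeta_eq_add (n := P a) (β := β) (x := X a) (w := f b)
        fun m hm => ⟨ht.trans (hbound m hm).1, (hbound m hm).2.trans_lt hs1⟩
      rcases le_or_gt k (P a) with hk | hk
      · rw [hshadow k hk]
        exact hbound k hk
      · have hreturn : (Tbeta β)^[P a] (f b) = w := by
          rw [hshadow _ le_rfl, hb, mul_inv_cancel_left₀ (by positivity)]
          ring
        obtain ⟨m, rfl⟩ := Nat.exists_eq_add_of_lt hk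
        have hPa := hP0 a
        rw [show P a + m + 1 = (m + 1) + P a by omega, Function.iterate_add_apply, hreturn]
        exact ih (m + 1) (by omega) _
  rintro _ ⟨b, rfl⟩
  exact ⟨⟨ht.trans (horbit 0 b).1, (horbit 0 b).2.trans_lt hs1⟩, fun n => horbit n b⟩

theorem exists_dimH_boundedSurvivor_ne_zero {β t t' : ℝ} (hβ : 1 < β) (ht : 0 ≤ t)
    (htt' : t < t') (hdim : dimH (survivor β t') ≠ 0) :
    ∃ s < 1, dimH (boundedSurvivor β t s) ≠ 0 := by
  by_cases hsup : ∃ z ∈ survivor β t', ∀ s < 1, ∃ n : ℕ, s < (Tbeta β)^[n] z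
  · obtain ⟨z, hz, hz'⟩ := hsup
    exact exists_dimH_boundedSurvivor_ne_zero_of_sup_eq_one hβ ht htt' hz hz'
  · push Not at hsup
    by_contra! h
    have hsub : survivor β t' ⊆ ⋃ k : ℕ, boundedSurvivor β t (1 - 1 / ((k : ℝ) + 1)) := by
      intro z hz
      obtain ⟨s, hs, hzs⟩ := hsup z hz
      obtain ⟨k, hk⟩ := exists_nat_one_div_lt (sub_pos.2 hs)
      exact mem_iUnion.2 ⟨k, hz.1, fun n => ⟨htt'.le.trans (hz.2 n), by linarith [hzs n]⟩⟩
    refine hdim (le_antisymm ((dimH_mono hsub).trans ?_) zero_le)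
    rw [dimH_iUnion]
    exact iSup_le fun k => (h _ (sub_lt_self _ (by positivity))).le

theorem survivor_anti (β : ℝ) {t t' : ℝ} (h : t ≤ t') : survivor β t' ⊆ survivor β t :=
  fun _ hx => ⟨hx.1, fun n => h.trans (hx.2 n)⟩

theorem tau_nonneg (β : ℝ) : 0 ≤ tau β := Real.sInf_nonneg fun _ ht => ht.1.le

theorem dimH_survivor_ne_zero_of_lt_tau {β t : ℝ} (ht : 0 < t) (h : t < tau β) :
    dimH (survivor β t) ≠ 0 := fun h0 =>
  h.not_ge (csInf_le ⟨0, fun _ hs => hs.1.le⟩ ⟨ht, h0⟩)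

theorem le_tau_of_dimH_survivor_ne_zero {β t : ℝ} (h : dimH (survivor β t) ≠ 0) : t ≤ tau β := by
  refine le_csInf ⟨1, one_pos, ?_⟩ fun s hs => ?_
  · have : survivor β 1 = ∅ := eq_empty_of_forall_notMem fun x hx => (hx.2 0).not_gt hx.1.2
    rw [this, dimH_empty]
  · by_contra! hst
    exact h (le_antisymm (hs.2 ▸ dimH_mono (survivor_anti β hst.le)) zero_le)

theorem tau_sub_le_tau {β β' : ℝ} (hβ : 1 < β) (hββ' : β < β') :
    tau β - (β' - β) / (β' - 1) ≤ tau β' := by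
  have hβ' : 1 < β' := hβ.trans hββ'
  refine le_of_forall_lt fun a ha => ?_
  by_contra! hle
  obtain ⟨t, ht1, ht2⟩ := exists_between (show a + (β' - β) / (β' - 1) < tau β by linarith)
  have ha0 : 0 ≤ a := (tau_nonneg β').trans hle
  have hδ : 0 < (β' - β) / (β' - 1) := div_pos (by linarith) (by linarith)
  have hdim := dimH_survivor_ne_zero_of_lt_tau (by linarith) ht2
  have hinv : ∀ x ∈ survivor β t, Tbeta β x ∈ survivor β t := fun x hx =>
    ⟨Tbeta_mem_Ico _ _, fun n => by simpa [Function.iterate_succ_apply] using hx.2 (n + 1)⟩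
  have := le_tau_of_dimH_survivor_ne_zero (dimH_survivor_ne_zero_of_baseChange
    (t := t - (β' - β) / (β' - 1)) (ρ := β / β') hβ hβ' (fun x hx => hx.1) hinv (by linarith)
    ((div_lt_one (by linarith)).2 hββ') (fun x hx => ⟨?_, ?_⟩) hdim)
  · linarith
  · have h1 := mul_le_mul_of_nonneg_left (orbitSum_le β hβ' hx.1) (sub_nonneg.2 hββ'.le)
    have h2 := hx.2 0
    simp only [Function.iterate_zero, id] at h2
    rw [mul_one_div] at h1
    simp only [baseChange]
    linarith
  · have h1 := mul_orbitSum β hβ' hx.1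
    have h2 := mul_nonneg (sub_nonneg.2 hββ'.le) (orbitSum_nonneg β hβ' (Tbeta_mem_Ico β x))
    rw [le_div_iff₀ (by linarith), baseChange]
    have h3 : (x - (β' - β) * orbitSum β β' x) * β' =
        β * x - (β' - β) * orbitSum β β' (Tbeta β x) := by
      linear_combination -(β' - β) * h1
    rw [h3]
    nlinarith [hx.1.2]

theorem eventually_lt_tau {β₀ a : ℝ} (h : 1 < β₀) (ha : a < tau β₀) :
    ∀ᶠ β in 𝓝[<] β₀, a < tau β := by
  rcases lt_or_ge a 0 with ha0 | ha0
  · exact Eventually.of_forall fun β => ha0.trans_le (tau_nonneg β)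
  obtain ⟨t, hat, htτ⟩ := exists_between ha
  obtain ⟨t', htt', ht'τ⟩ := exists_between htτ
  obtain ⟨s, hs, hdim⟩ := exists_dimH_boundedSurvivor_ne_zero h (ha0.trans hat.le) htt'
    (dimH_survivor_ne_zero_of_lt_tau (by linarith) ht'τ)
  have hcont : Tendsto (fun β : ℝ => s + (β₀ - β) * (1 / (β - 1))) (𝓝[<] β₀)
      (𝓝 (s + (β₀ - β₀) * (1 / (β₀ - 1)))) := by
    have hne : β₀ - 1 ≠ 0 := by linarith
    have : ContinuousAt (fun β : ℝ => s + (β₀ - β) * (1 / (β - 1))) β₀ := by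
      fun_prop (disch := exact hne)
    exact this.tendsto.mono_left nhdsWithin_le_nhds
  rw [sub_self, zero_mul, add_zero] at hcont
  filter_upwards [self_mem_nhdsWithin, mem_nhdsWithin_of_mem_nhds (lt_mem_nhds h),
    hcont.eventually_lt_const hs] with β hβ hβ1 hρ
  have hβ0 : β < β₀ := hβ
  refine hat.trans_le (le_tau_of_dimH_survivor_ne_zero
    (dimH_survivor_ne_zero_of_baseChange h hβ1 (S := boundedSurvivor β₀ t s) (fun x hx => hx.1)
      (fun x hx => ⟨Tbeta_mem_Ico _ _, fun n => ?_⟩) (ha0.trans hat.le) hρ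
      (fun x hx => ⟨?_, ?_⟩) hdim))
  · have := hx.2 (n + 1)
    rwa [Function.iterate_succ_apply] at this
  · have h1 : t ≤ x := (hx.2 0).1
    have h2 := mul_nonneg (sub_nonneg.2 hβ0.le) (orbitSum_nonneg β₀ hβ1 hx.1)
    simp only [baseChange]
    linarith
  · have h1 : x ≤ s := (hx.2 0).2
    have h2 := mul_le_mul_of_nonneg_left (orbitSum_le β₀ hβ1 hx.1) (sub_nonneg.2 hβ0.le)
    simp only [baseChange]
    linarith

end BetaTransformation

open BetaTransformation

/-- `τ` has no downward jumps: for every `β₀ ∈ (1,∞)`,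
`lim_{β↘β₀} τ(β) ≥ τ(β₀)` and `lim_{β↗β₀} τ(β) = τ(β₀)`. -/
theorem tau_no_downward_jumps (β₀ : ℝ) (h : 1 < β₀) :
    (∃ l : ℝ, Filter.Tendsto tau (𝓝[>] β₀) (𝓝 l) ∧ tau β₀ ≤ l) ∧
    Filter.Tendsto tau (𝓝[<] β₀) (𝓝 (tau β₀)) := by
  have hpos : 0 < β₀ - 1 := by linarith
  constructor
  · have hmono : MonotoneOn (fun β => tau β + β / (β₀ - 1)) (Ioi β₀) := by
      intro β hβ β' hβ' hle
      rcases hle.eq_or_lt with rfl | hlt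
      · exact le_rfl
      have hβ : β₀ < β := hβ
      have h1 := tau_sub_le_tau (h.trans hβ) hlt
      have h2 : (β' - β) / (β' - 1) ≤ (β' - β) / (β₀ - 1) :=
        div_le_div_of_nonneg_left (by linarith) hpos (by linarith)
      rw [sub_div β' β (β₀ - 1)] at h2
      show tau β + β / (β₀ - 1) ≤ tau β' + β' / (β₀ - 1)
      linarith
    have hlim := hmono.tendsto_nhdsGT ⟨0, by
      rintro _ ⟨β, hβ, rfl⟩
      have hβ : β₀ < β := hβ
      exact add_nonneg (tau_nonneg β) (div_nonneg (by linarith) hpos.le)⟩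
    have hid : Tendsto (fun β : ℝ => β) (𝓝[>] β₀) (𝓝 β₀) := nhdsWithin_le_nhds
    have htau := hlim.sub (hid.div_const (β₀ - 1))
    simp only [add_sub_cancel_right] at htau
    refine ⟨_, htau, ?_⟩
    have hlow : Tendsto (fun β : ℝ => tau β₀ - (β - β₀) / (β₀ - 1)) (𝓝[>] β₀)
        (𝓝 (tau β₀ - (β₀ - β₀) / (β₀ - 1))) :=
      ((hid.sub_const β₀).div_const _).const_sub _
    rw [sub_self, zero_div, sub_zero] at hlow
    refine le_of_tendsto_of_tendsto hlow htau ?_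
    filter_upwards [self_mem_nhdsWithin] with β hβ
    have hβ : β₀ < β := hβ
    refine le_trans (sub_le_sub_left ?_ _) (tau_sub_le_tau h hβ)
    exact div_le_div_of_nonneg_left (by linarith) hpos (by linarith)
  · have hid : Tendsto (fun β : ℝ => β) (𝓝[<] β₀) (𝓝 β₀) := nhdsWithin_le_nhds
    have hup : Tendsto (fun β : ℝ => tau β₀ + (β₀ - β) / (β₀ - 1)) (𝓝[<] β₀)
        (𝓝 (tau β₀ + (β₀ - β₀) / (β₀ - 1))) :=
      ((hid.const_sub β₀).div_const _).const_add _
    rw [sub_self, zero_div, add_zero] at hup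
    refine tendsto_order.2 ⟨fun a ha => eventually_lt_tau h ha, fun a ha => ?_⟩
    filter_upwards [self_mem_nhdsWithin, mem_nhdsWithin_of_mem_nhds (lt_mem_nhds h),
      hup.eventually_lt_const ha] with β hβ hβ1 hlt
    linarith [tau_sub_le_tau hβ1 hβ]
end

section
/- There exists an open set O ⊆ (1,∞) whose complement (1,∞)∖O has Hausdorff dimension zero, such that the critical value function τ is real-analytic, strictly convex and strictly decreasing on each connected component of O. -/
open Set Filter MeasureTheory Topology

/-- The reversed word `a (k-1) … a 0`; words are stored with the newest letter first. -/
def rpre (a : ℕ → ℕ) : ℕ → List ℕ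
  | 0 => []
  | k + 1 => a k :: rpre a k

/-- Reversed words all of whose factors lie lexicographically between the corresponding
initial segments of `a` and `b`. -/
def Adm (a b : ℕ → ℕ) : List ℕ → Prop
  | [] => True
  | d :: w => Adm a b w ∧ (∀ k, rpre a k <+: w → a k ≤ d) ∧ (∀ k, rpre b k <+: w → d ≤ b k)

/-- The reversed word is an initial segment of `a` or of `b`. -/
def IsPre (a b : ℕ → ℕ) (u : List ℕ) : Prop := u = rpre a u.length ∨ u = rpre b u.length

@[simp] lemma rpre_length (a : ℕ → ℕ) (k : ℕ) : (rpre a k).length = k := by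
  induction k with
  | zero => rfl
  | succ k ih => simp [rpre, ih]

lemma rpre_inj_iff {a z : ℕ → ℕ} {k : ℕ} : rpre z k = rpre a k ↔ ∀ i < k, z i = a i := by
  induction k with
  | zero => simp [rpre]
  | succ k ih =>
    simp only [rpre, List.cons.injEq, ih]
    constructor
    · rintro ⟨h1, h2⟩ i hi
      rcases Nat.lt_succ_iff_lt_or_eq.1 hi with h | rfl
      · exact h2 i h
      · exact h1
    · intro h
      exact ⟨h k (by omega), fun i hi => h i (by omega)⟩

lemma rpre_add (z : ℕ → ℕ) (n k : ℕ) : rpre z (n + k) = rpre (shiftn n z) k ++ rpre z n := by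
  induction k with
  | zero => simp [rpre]
  | succ k ih =>
    rw [← Nat.add_assoc]
    simp [rpre, ih, shiftn, Nat.add_comm]

lemma rpre_prefix_iff {a z : ℕ → ℕ} {n k : ℕ} :
    rpre a k <+: rpre z (n + k) ↔ ∀ i < k, z (i + n) = a i := by
  rw [rpre_add]
  have : (∀ i < k, z (i + n) = a i) ↔ rpre (shiftn n z) k = rpre a k := by
    rw [rpre_inj_iff]; rfl
  rw [this]
  constructor
  · intro h
    have h1 : rpre (shiftn n z) k <+: rpre (shiftn n z) k ++ rpre z n := List.prefix_append _ _
    exact ((List.prefix_of_prefix_length_le h1 h (by simp)).eq_of_length (by simp))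
  · intro h
    rw [h]; exact List.prefix_append _ _

lemma eq_rpre_of_append {a : ℕ → ℕ} {v u : List ℕ} (h : v ++ u = rpre a (v ++ u).length) :
    u = rpre a u.length := by
  induction v with
  | nil => simpa using h
  | cons d v ih =>
    apply ih
    have : (d :: v ++ u).length = (v ++ u).length + 1 := by simp
    rw [this, rpre] at h
    simp only [List.cons_append, List.cons.injEq] at h
    exact h.2

lemma rpre_isPre_left (a b : ℕ → ℕ) (k : ℕ) : IsPre a b (rpre a k) := Or.inl (by simp)

lemma rpre_isPre_right (a b : ℕ → ℕ) (k : ℕ) : IsPre a b (rpre b k) := Or.inr (by simp)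

lemma IsPre.of_append {a b : ℕ → ℕ} {v u : List ℕ} (h : IsPre a b (v ++ u)) : IsPre a b u :=
  h.imp eq_rpre_of_append eq_rpre_of_append

lemma adm_of_append {a b : ℕ → ℕ} {v w : List ℕ} (h : Adm a b (v ++ w)) : Adm a b w := by
  induction v with
  | nil => simpa using h
  | cons d v ih => exact ih h.1

lemma adm_of_prefix {a b : ℕ → ℕ} {v w : List ℕ} (hv : v <+: w) (h : Adm a b w) :
    Adm a b v := by
  induction v generalizing w with
  | nil => trivial
  | cons d v ih =>
    cases w with
    | nil => simp at hv
    | cons e w =>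
      obtain ⟨rfl, hvw⟩ := List.cons_prefix_cons.1 hv
      exact ⟨ih hvw h.1, fun k hk => h.2.1 k (hk.trans hvw), fun k hk => h.2.2 k (hk.trans hvw)⟩

lemma adm_congr {a b a' b' : ℕ → ℕ} {w : List ℕ} (ha : ∀ i < w.length, a i = a' i)
    (hb : ∀ i < w.length, b i = b' i) (h : Adm a b w) : Adm a' b' w := by
  induction w with
  | nil => trivial
  | cons d w ih =>
    simp only [List.length_cons] at ha hb
    refine ⟨ih (fun i hi => ha i (by omega)) (fun i hi => hb i (by omega)) h.1, ?_, ?_⟩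
    · intro k hk
      have hl : k ≤ w.length := by simpa using hk.length_le
      rw [← ha k (by omega)]
      refine h.2.1 k ?_
      rwa [rpre_inj_iff.2 fun i hi => ha i (by omega)]
    · intro k hk
      have hl : k ≤ w.length := by simpa using hk.length_le
      rw [← hb k (by omega)]
      refine h.2.2 k ?_
      rwa [rpre_inj_iff.2 fun i hi => hb i (by omega)]

open Classical in
/-- The longest recent part of `w` which is an initial segment of `a` or of `b`. -/
noncomputable def st (a b : ℕ → ℕ) (w : List ℕ) : List ℕ :=
  w.take (Nat.findGreatest (fun k => IsPre a b (w.take k)) w.length)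

lemma st_prefix (a b : ℕ → ℕ) (w : List ℕ) : st a b w <+: w := List.take_prefix _ _

lemma st_isPre (a b : ℕ → ℕ) (w : List ℕ) : IsPre a b (st a b w) := by
  classical
  unfold st
  exact Nat.findGreatest_spec (P := fun k => IsPre a b (w.take k)) (Nat.zero_le _)
    (Or.inl (by simp [rpre]))

lemma prefix_st {a b : ℕ → ℕ} {u w : List ℕ} (h : u <+: w) (hu : IsPre a b u) :
    u <+: st a b w := by
  classical
  have h1 : u = w.take u.length := List.prefix_iff_eq_take.1 h
  have h2 : u.length ≤ Nat.findGreatest (fun k => IsPre a b (w.take k)) w.length := by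
    apply Nat.le_findGreatest h.length_le
    rwa [← h1]
  unfold st
  conv_lhs => rw [h1]
  exact List.take_prefix_take_left h2

lemma prefix_append_st_iff {a b : ℕ → ℕ} {u v w : List ℕ} (hu : IsPre a b u) :
    u <+: v ++ st a b w ↔ u <+: v ++ w := by
  constructor
  · intro h
    exact h.trans ((List.prefix_append_right_inj v).2 (st_prefix a b w))
  · intro h
    rcases List.prefix_or_prefix_of_prefix h (List.prefix_append v w) with h' | ⟨u', rfl⟩
    · exact h'.trans (List.prefix_append _ _)
    · exact (List.prefix_append_right_inj v).2
        (prefix_st ((List.prefix_append_right_inj v).1 h) hu.of_append)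

lemma st_append (a b : ℕ → ℕ) (v w : List ℕ) : st a b (v ++ st a b w) = st a b (v ++ w) := by
  have h1 : st a b (v ++ st a b w) <+: st a b (v ++ w) :=
    prefix_st ((prefix_append_st_iff (st_isPre a b _)).1 (st_prefix _ _ _)) (st_isPre a b _)
  have h2 : st a b (v ++ w) <+: st a b (v ++ st a b w) :=
    prefix_st ((prefix_append_st_iff (st_isPre a b _)).2 (st_prefix _ _ _)) (st_isPre a b _)
  exact h1.eq_of_length_le h2.length_le

lemma adm_append_st {a b : ℕ → ℕ} {v w : List ℕ} (h : Adm a b (v ++ w)) :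
    Adm a b (v ++ st a b w) :=
  adm_of_prefix ((List.prefix_append_right_inj v).2 (st_prefix a b w)) h

lemma adm_append_of_st {a b : ℕ → ℕ} {v w : List ℕ} (hw : Adm a b w)
    (h : Adm a b (v ++ st a b w)) : Adm a b (v ++ w) := by
  induction v with
  | nil => exact hw
  | cons d v ih =>
    refine ⟨ih h.1, fun k hk => h.2.1 k ?_, fun k hk => h.2.2 k ?_⟩
    · exact (prefix_append_st_iff (rpre_isPre_left a b k)).2 hk
    · exact (prefix_append_st_iff (rpre_isPre_right a b k)).2 hk

lemma lex_le_apply {x y : ℕ → ℕ} (h : toLex x ≤ toLex y) {k : ℕ} (hk : ∀ i < k, y i = x i) :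
    x k ≤ y k := by
  by_contra! hlt
  exact absurd h (not_le_of_gt (show toLex y < toLex x from ⟨k, hk, hlt⟩))

lemma lex_le_of_apply {x y : ℕ → ℕ} (h : ∀ k, (∀ i < k, y i = x i) → x k ≤ y k) :
    toLex x ≤ toLex y := by
  by_contra! hlt
  obtain ⟨k, hk, hlt⟩ := hlt
  exact absurd (h k hk) (not_le_of_gt hlt)

/-- Once an admissible word deviates from `c`, no nonempty recent part of it is an initial
segment of `c`. -/
def Deviates (a b c : ℕ → ℕ) : Prop :=
  ∀ k d, Adm a b (d :: rpre c k) → d ≠ c k → ∀ j, ¬ rpre c (j + 1) <+: d :: rpre c k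

lemma deviates_left {a b : ℕ → ℕ} (ha : ∀ n, toLex a ≤ toLex (shiftn n a)) :
    Deviates a b a := by
  intro k d hadm hd j hj
  obtain ⟨rfl, hj'⟩ := List.cons_prefix_cons.1 (show a j :: rpre a j <+: _ from hj)
  have hjk : j ≤ k := by simpa using hj'.length_le
  have h1 : a k ≤ a j := hadm.2.1 k (List.prefix_refl _)
  obtain ⟨n, rfl⟩ := Nat.exists_eq_add_of_le' hjk
  have h2 := lex_le_apply (ha n) (k := j) (rpre_prefix_iff.1 hj')
  simp only [shiftn, Nat.add_comm] at h1 h2 hd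
  omega

lemma deviates_right {a b : ℕ → ℕ} (hb : ∀ n, toLex (shiftn n b) ≤ toLex b) :
    Deviates a b b := by
  intro k d hadm hd j hj
  obtain ⟨rfl, hj'⟩ := List.cons_prefix_cons.1 (show b j :: rpre b j <+: _ from hj)
  have hjk : j ≤ k := by simpa using hj'.length_le
  have h1 : b j ≤ b k := hadm.2.2 k (List.prefix_refl _)
  obtain ⟨n, rfl⟩ := Nat.exists_eq_add_of_le' hjk
  have h2 := lex_le_apply (hb n) (k := j) (fun i hi => (rpre_prefix_iff.1 hj' i hi).symm)
  simp only [shiftn, Nat.add_comm] at h1 h2 hd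
  omega

/-- Every position of `v`, read after `u`, has a recent part of length more than `m` that is an
initial segment of `e` or of `f`. -/
def High (m : ℕ) (e f : ℕ → ℕ) (u v : List ℕ) : Prop :=
  ∀ v', v' <:+ v → v' ≠ [] → ∃ y, y <+: v' ++ u ∧ m < y.length ∧ IsPre e f y

lemma follows_or_deviates {e : ℕ → ℕ} {u : List ℕ} {k : ℕ} (hu : u = rpre e k) (v : List ℕ) :
    v ++ u = rpre e (k + v.length) ∨
      ∃ v₃ d v', v = v₃ ++ d :: v' ∧ v' ++ u = rpre e (k + v'.length) ∧ d ≠ e (k + v'.length) := by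
  induction v with
  | nil => left; simpa using hu
  | cons d v ih =>
    rcases ih with h | ⟨v₃, d', v', rfl, h⟩
    · by_cases hd : d = e (k + v.length)
      · left
        rw [List.length_cons, ← Nat.add_assoc, rpre, ← h, hd]
        rfl
      · right
        exact ⟨[], d, v, rfl, h, hd⟩
    · right
      exact ⟨d :: v₃, d', v', rfl, h⟩

lemma follows_of_high {a b e f : ℕ → ℕ} (hf : Deviates a b f) {m L : ℕ} {w : List ℕ}
    (hL : rpre f L <+: w) (hmax : ∀ l, rpre f l <+: w → l ≤ L)
    (hno : ∀ j, ¬ rpre e (j + 1) <+: w) {v : List ℕ} (hv : v.length ≤ m)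
    (hadm : Adm a b (v ++ w)) (hh : High m e f w v) :
    v ++ rpre f L = rpre f (L + v.length) := by
  induction v with
  | nil => simp
  | cons d v ih =>
    simp only [List.length_cons] at hv
    have ih' := ih (by omega) hadm.1 (fun v' hv' h0 => hh v' (hv'.trans (List.suffix_cons d v)) h0)
    have hpre : d :: rpre f (L + v.length) <+: d :: v ++ w := by
      rw [← ih']
      exact (List.prefix_append_right_inj (d :: v)).2 hL
    by_cases hd : d = f (L + v.length)
    · rw [List.length_cons, ← Nat.add_assoc, rpre, ← ih', hd]
      rfl
    · exfalso
      have hdev := hf _ _ (adm_of_prefix hpre hadm) hd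
      obtain ⟨y, hy, hlen, hp⟩ := hh (d :: v) List.suffix_rfl (by simp)
      rcases hp with hp | hp
      · rcases List.prefix_or_prefix_of_prefix hy (List.prefix_append (d :: v) w) with h | ⟨y', rfl⟩
        · have := h.length_le
          simp only [List.length_cons] at this
          omega
        · have h1 := (List.prefix_append_right_inj (d :: v)).1 hy
          have h2 := eq_rpre_of_append hp
          simp only [List.length_append, List.length_cons] at hlen
          obtain ⟨j, hj⟩ : ∃ j, y'.length = j + 1 := ⟨y'.length - 1, by omega⟩
          rw [h2, hj] at h1
          exact hno j h1
      · rcases List.prefix_or_prefix_of_prefix hy hpre with h | h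
        · obtain ⟨j, hj⟩ : ∃ j, y.length = j + 1 := ⟨y.length - 1, by omega⟩
          rw [hp, hj] at h
          exact hdev j h
        · rw [← ih'] at h
          obtain ⟨y', rfl⟩ := h
          have h1 : rpre f L ++ y' <+: w := by
            refine (List.prefix_append_right_inj (d :: v)).1 ?_
            simpa using hy
          have h2 : rpre f L ++ y' = rpre f (rpre f L ++ y').length := by
            apply eq_rpre_of_append (v := d :: v)
            simpa using hp
          rw [h2] at h1
          have h3 := hmax _ h1
          simp only [List.length_append, rpre_length] at h3
          have h4 : y' = [] := List.length_eq_zero_iff.1 (by omega)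
          subst h4
          simp only [List.append_nil] at hp
          rw [ih'] at hp
          simp only [List.length_cons, rpre_length, rpre, List.cons.injEq] at hp
          exact hd hp.1

open Classical in
lemma exists_longest_rpre (f : ℕ → ℕ) (w : List ℕ) :
    ∃ L, rpre f L <+: w ∧ ∀ l, rpre f l <+: w → l ≤ L := by
  refine ⟨Nat.findGreatest (fun l => rpre f l <+: w) w.length, ?_, fun l hl => ?_⟩
  · exact Nat.findGreatest_spec (P := fun l => rpre f l <+: w) (Nat.zero_le _) (by simp [rpre])
  · exact Nat.le_findGreatest (by simpa using hl.length_le) hl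

lemma high_eq_of_deviate {a b e f : ℕ → ℕ} (he : Deviates a b e) (hf : Deviates a b f) {m n : ℕ}
    {u v₃ v' v₃' v'' : List ℕ} {d d' : ℕ} (hv : v' ++ u = rpre e n) (hv2 : v'' ++ u = rpre e n)
    (hd : d ≠ e n) (hd' : d' ≠ e n)
    (hl : v₃.length ≤ m) (hll : v₃.length = v₃'.length)
    (hadm : Adm a b (v₃ ++ d :: v' ++ u)) (hadm' : Adm a b (v₃' ++ d' :: v'' ++ u))
    (hh : High m e f u (v₃ ++ d :: v')) (hh' : High m e f u (v₃' ++ d' :: v'')) :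
    v₃ ++ d :: v' = v₃' ++ d' :: v'' := by
  have key : ∀ {v₃ v' : List ℕ} {d : ℕ}, v' ++ u = rpre e n → d ≠ e n →
      Adm a b (v₃ ++ d :: v' ++ u) → High m e f u (v₃ ++ d :: v') →
      Adm a b (d :: rpre e n) ∧ (∀ j, ¬ rpre e (j + 1) <+: d :: rpre e n) ∧
      ∃ l, d = f l ∧ rpre f l <+: rpre e n := by
    intro v₃ v' d hv hd hadm hh
    have h1 : Adm a b (d :: rpre e n) := by
      rw [← hv]
      apply adm_of_append (v := v₃)
      simpa using hadm
    have h2 := he _ _ h1 hd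
    refine ⟨h1, h2, ?_⟩
    obtain ⟨y, hy, hlen, hp⟩ := hh (d :: v') (List.suffix_append _ _) (by simp)
    rw [List.cons_append, hv] at hy
    obtain ⟨j, hj⟩ : ∃ j, y.length = j + 1 := ⟨y.length - 1, by omega⟩
    rcases hp with hp | hp
    · rw [hp, hj] at hy
      exact absurd hy (h2 j)
    · rw [hp, hj] at hy
      obtain ⟨h3, h4⟩ := List.cons_prefix_cons.1 (show f j :: rpre f j <+: _ from hy)
      exact ⟨j, h3.symm, h4⟩
  obtain ⟨a1, n1, l, hdl, hl1⟩ := key hv hd hadm hh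
  obtain ⟨a2, n2, l', hdl', hl2⟩ := key hv2 hd' hadm' hh'
  have aux : ∀ {d d' l l' : ℕ}, Adm a b (d :: rpre e n) → d = f l → d' = f l' →
      rpre f l <+: rpre e n → rpre f l' <+: rpre e n → l ≤ l' → d = d' := by
    intro d d' l l' a1 hdl hdl' hl1 hl2 hll'
    by_contra hne
    refine hf l' d (adm_of_prefix (List.cons_prefix_cons.2 ⟨rfl, hl2⟩) a1) (by rwa [← hdl']) l ?_
    rw [rpre, ← hdl]
    exact List.cons_prefix_cons.2 ⟨rfl, List.prefix_of_prefix_length_le hl1 hl2 (by simpa)⟩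
  have hdd : d = d' := by
    rcases le_total l l' with h | h
    · exact aux a1 hdl hdl' hl1 hl2 h
    · exact (aux a2 hdl' hdl hl2 hl1 h).symm
  subst hdd
  have hv12 : v' = v'' := List.append_cancel_right (hv.trans hv2.symm)
  subst hv12
  obtain ⟨L, hL, hmax⟩ := exists_longest_rpre f (d :: rpre e n)
  have fin : ∀ {v₃ : List ℕ}, v₃.length ≤ m → Adm a b (v₃ ++ d :: v' ++ u) →
      High m e f u (v₃ ++ d :: v') → v₃ ++ rpre f L = rpre f (L + v₃.length) := by
    intro v₃ hl hadm hh
    refine follows_of_high hf (m := m) hL hmax n1 hl (by rw [← hv]; simpa using hadm) ?_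
    intro v0 hv0 hne
    obtain ⟨y, hy, h⟩ := hh (v0 ++ d :: v') ((List.suffix_append_inj_of_length_eq rfl).2 ⟨hv0, rfl⟩)
      (by simp)
    refine ⟨y, ?_, h⟩
    rw [← hv]
    simpa using hy
  have e1 := fin hl hadm hh
  have e2 := fin (hll ▸ hl) hadm' hh'
  rw [hll, ← e2] at e1
  rw [List.append_cancel_right e1]

lemma high_encard_le {a b e f : ℕ → ℕ} (he : Deviates a b e) (hf : Deviates a b f) {m k : ℕ} :
    {v : List ℕ | v.length = m ∧ Adm a b (v ++ rpre e k) ∧ High m e f (rpre e k) v}.encard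
      ≤ m + 1 := by
  set S := {v : List ℕ | v.length = m ∧ Adm a b (v ++ rpre e k) ∧ High m e f (rpre e k) v}
  have hex : ∀ v : List ℕ, ∃ i, v ∈ S →
      (i = m ∧ v ++ rpre e k = rpre e (k + m)) ∨
      (i < m ∧ ∃ v₃ d v', v = v₃ ++ d :: v' ∧ v'.length = i ∧ v' ++ rpre e k = rpre e (k + i) ∧
        d ≠ e (k + i)) := by
    intro v
    rcases follows_or_deviates (rfl : rpre e k = rpre e k) v with h | ⟨v₃, d, v', rfl, h1, h2⟩
    · refine ⟨m, fun hv => Or.inl ⟨rfl, ?_⟩⟩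
      rw [h, hv.1]
    · refine ⟨v'.length, fun hv => Or.inr ⟨?_, v₃, d, v', rfl, rfl, h1, h2⟩⟩
      have := hv.1
      simp only [List.length_append, List.length_cons] at this
      omega
  choose idx hidx using hex
  have hinj : Set.InjOn idx S := by
    intro v hv w hw hvw
    have e1 := hidx v hv
    have e2 := hidx w hw
    rw [← hvw] at e2
    rcases e1 with ⟨e1, h1⟩ | ⟨e1, v₃, d, v', rfl, hl, h1, h2⟩
    · rcases e2 with ⟨_, h2⟩ | ⟨e2, _⟩
      · exact List.append_cancel_right (h1.trans h2.symm)
      · omega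
    · rcases e2 with ⟨e2, _⟩ | ⟨_, w₃, d', w', rfl, hl', h1', h2'⟩
      · omega
      · have l1 := hv.1
        have l2 := hw.1
        simp only [List.length_append, List.length_cons] at l1 l2
        exact high_eq_of_deviate he hf h1 h1' h2 h2' (by omega) (by omega) hv.2.1 hw.2.1
          hv.2.2 hw.2.2
  have hmaps : Set.MapsTo idx S (Set.Iio (m + 1)) := by
    intro v hv
    rcases hidx v hv with ⟨h, _⟩ | ⟨h, _⟩
    · simp [h]
    · simp only [Set.mem_Iio]; omega
  calc S.encard ≤ (Set.Iio (m + 1) : Set ℕ).encard := Set.encard_le_encard_of_injOn hmaps hinj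
    _ = m + 1 := by
      rw [Set.encard_eq_coe_toFinset_card]
      simp

/-- Two distinct loops of equal length at the same state. -/
def HasHorseshoe (a b : ℕ → ℕ) : Prop :=
  ∃ u p q : List ℕ, p ≠ q ∧ p.length = q.length ∧ Adm a b (p ++ u) ∧ Adm a b (q ++ u) ∧
    st a b (p ++ u) = u ∧ st a b (q ++ u) = u

/-- Admissible continuations of `u` of length `n` whose states avoid `V`. -/
def AdmPath (a b : ℕ → ℕ) (V : Finset (List ℕ)) (u : List ℕ) (n : ℕ) : Set (List ℕ) :=
  {v | v.length = n ∧ Adm a b (v ++ u) ∧ ∀ v', v' <:+ v → v' ≠ [] → st a b (v' ++ u) ∉ V}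

lemma Adm.le_of_mem {a b : ℕ → ℕ} {w : List ℕ} (h : Adm a b w) : ∀ d ∈ w, d ≤ b 0 := by
  induction w with
  | nil => simp
  | cons e w ih =>
    intro d hd
    rcases List.mem_cons.1 hd with rfl | hd
    · exact h.2.2 0 (by simp [rpre])
    · exact ih h.1 d hd

lemma finite_words (M n : ℕ) : {v : List ℕ | v.length = n ∧ ∀ d ∈ v, d ≤ M}.Finite := by
  induction n with
  | zero =>
    refine (Set.finite_singleton []).subset fun v hv => ?_
    simpa using List.length_eq_zero_iff.1 hv.1
  | succ n ih =>
    refine ((Set.finite_Iic M).image2 List.cons ih).subset ?_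
    rintro v ⟨hv, hd⟩
    match v, hv with
    | e :: v, hv =>
      exact ⟨e, hd e (by simp), v, ⟨by simpa using hv, fun d h => hd d (by simp [h])⟩, rfl⟩

lemma ncard_words_le (M n : ℕ) :
    {v : List ℕ | v.length = n ∧ ∀ d ∈ v, d ≤ M}.ncard ≤ (M + 1) ^ n := by
  induction n with
  | zero =>
    have : {v : List ℕ | v.length = 0 ∧ ∀ d ∈ v, d ≤ M} ⊆ {[]} := fun v hv => by
      simpa using List.length_eq_zero_iff.1 hv.1
    simpa using Set.ncard_le_ncard this
  | succ n ih =>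
    have hsub : {v : List ℕ | v.length = n + 1 ∧ ∀ d ∈ v, d ≤ M} ⊆
        (fun p : ℕ × List ℕ => p.1 :: p.2) ''
          (Set.Iic M ×ˢ {v : List ℕ | v.length = n ∧ ∀ d ∈ v, d ≤ M}) := by
      rintro v ⟨hv, hd⟩
      match v, hv with
      | e :: v, hv =>
        exact ⟨(e, v), ⟨hd e (by simp), by simpa using hv, fun d h => hd d (by simp [h])⟩, rfl⟩
    have hfin := (Set.finite_Iic M).prod (finite_words M n)
    calc _ ≤ _ := Set.ncard_le_ncard hsub (hfin.image _)
      _ ≤ _ := Set.ncard_image_le hfin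
      _ = (M + 1) * {v : List ℕ | v.length = n ∧ ∀ d ∈ v, d ≤ M}.ncard := by
        rw [Set.ncard_prod]; congr 1
        rw [Set.ncard_eq_toFinset_card']; simp
      _ ≤ _ := by rw [pow_succ']; exact Nat.mul_le_mul_left _ ih

lemma path_subset_words (a b : ℕ → ℕ) (V : Finset (List ℕ)) (u : List ℕ) (n : ℕ) :
    AdmPath a b V u n ⊆ {v : List ℕ | v.length = n ∧ ∀ d ∈ v, d ≤ b 0} :=
  fun _ hv => ⟨hv.1, fun d hd => hv.2.1.le_of_mem d (by simp [hd])⟩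

lemma path_finite (a b : ℕ → ℕ) (V : Finset (List ℕ)) (u : List ℕ) (n : ℕ) :
    (AdmPath a b V u n).Finite := (finite_words (b 0) n).subset (path_subset_words a b V u n)

lemma ncard_le_mul_of_subset_iUnion {α ι : Type*} {A : Set α} {P : Set ι} {F : ι → Set α} {B : ℝ}
    (hP : P.Finite) (hA : A ⊆ ⋃ i ∈ P, F i) (hF : ∀ i ∈ P, (F i).Finite)
    (hB : ∀ i ∈ P, ((F i).ncard : ℝ) ≤ B) : (A.ncard : ℝ) ≤ P.ncard * B := by
  classical
  have hfin : (⋃ i ∈ P, F i).Finite := hP.biUnion hF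
  have h1 : A.ncard ≤ ∑ i ∈ hP.toFinset, (F i).ncard := by
    refine (Set.ncard_le_ncard hA hfin).trans ?_
    have : (⋃ i ∈ P, F i) = ⋃ i ∈ hP.toFinset, F i := by simp
    rw [this]
    exact Finset.set_ncard_biUnion_le _ _
  calc (A.ncard : ℝ) ≤ ∑ i ∈ hP.toFinset, ((F i).ncard : ℝ) := by exact_mod_cast h1
    _ ≤ ∑ i ∈ hP.toFinset, B := Finset.sum_le_sum fun i hi => hB i (by simpa using hi)
    _ = P.ncard * B := by
      rw [Finset.sum_const, nsmul_eq_mul, Set.ncard_eq_toFinset_card P hP]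

lemma path_add_subset (a b : ℕ → ℕ) (V : Finset (List ℕ)) (u : List ℕ) (n k : ℕ) :
    AdmPath a b V u (n + k) ⊆
      ⋃ v ∈ AdmPath a b V u k, (fun w => w ++ v) '' AdmPath a b V (st a b (v ++ u)) n := by
  rintro v ⟨hl, hadm, hst⟩
  obtain ⟨w, v, rfl, hw, hv⟩ : ∃ w v', v = w ++ v' ∧ w.length = n ∧ v'.length = k :=
    ⟨v.take n, v.drop n, by simp, by simp [hl], by simp [hl]⟩
  simp only [Set.mem_iUnion]
  refine ⟨v, ⟨hv, ?_, ?_⟩, w, ⟨hw, ?_, ?_⟩, rfl⟩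
  · rw [List.append_assoc] at hadm
    exact adm_of_append hadm
  · exact fun v' hv' => hst v' (hv'.trans (List.suffix_append _ _))
  · rw [List.append_assoc] at hadm
    exact adm_append_st hadm
  · intro v' hv' h0
    rw [st_append, ← List.append_assoc]
    exact hst _ ((List.suffix_append_inj_of_length_eq rfl).2 ⟨hv', rfl⟩) (by simp [h0])

/-- The initial segments of `a` and `b` of length at most `m`. -/
noncomputable def lowStates (a b : ℕ → ℕ) (m : ℕ) : Finset (List ℕ) :=
  (Finset.range (m + 1)).image (rpre a) ∪ (Finset.range (m + 1)).image (rpre b)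

lemma length_lt_of_notMem_lowStates {a b : ℕ → ℕ} {m : ℕ} {y : List ℕ} (hy : IsPre a b y)
    (h : y ∉ lowStates a b m) : m < y.length := by
  by_contra! hle
  apply h
  simp only [lowStates, Finset.mem_union, Finset.mem_image, Finset.mem_range]
  rcases hy with hy | hy
  · exact Or.inl ⟨y.length, by omega, hy.symm⟩
  · exact Or.inr ⟨y.length, by omega, hy.symm⟩

lemma path_lowStates_ncard_le {a b : ℕ → ℕ} (ha : Deviates a b a) (hb : Deviates a b b)
    (u : List ℕ) (m : ℕ) : (AdmPath a b (lowStates a b m) u m).ncard ≤ m + 1 := by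
  have hsub : ∀ v ∈ AdmPath a b (lowStates a b m) u m, v.length = m ∧ Adm a b (v ++ st a b u) ∧
      High m a b (st a b u) v := by
    intro v hv
    refine ⟨hv.1, adm_append_st hv.2.1, fun v' hv' h0 => ⟨st a b (v' ++ u), ?_, ?_, ?_⟩⟩
    · rw [← st_append]
      exact st_prefix _ _ _
    · exact length_lt_of_notMem_lowStates (st_isPre _ _ _) (hv.2.2 v' hv' h0)
    · exact st_isPre _ _ _
  have hle : (AdmPath a b (lowStates a b m) u m).encard ≤ m + 1 := by
    rcases st_isPre a b u with h | h
    · rw [h] at hsub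
      exact (Set.encard_le_encard hsub).trans (high_encard_le ha hb)
    · rw [h] at hsub
      refine (Set.encard_le_encard fun v hv => ?_).trans
        (high_encard_le hb ha (m := m) (k := (st a b u).length))
      obtain ⟨h1, h2, h3⟩ := hsub v hv
      refine ⟨h1, h2, fun v' hv' h0 => ?_⟩
      obtain ⟨y, hy, hm, hp⟩ := h3 v' hv' h0
      exact ⟨y, hy, hm, hp.symm⟩
  rw [← (path_finite a b _ u m).cast_ncard_eq] at hle
  exact_mod_cast hle

lemma path_lowStates_growth {a b : ℕ → ℕ} (ha : Deviates a b a) (hb : Deviates a b b) {m : ℕ}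
    (hm : 0 < m) {l : ℝ} (hl : 1 < l) (hml : (m : ℝ) + 1 ≤ l ^ m) (u : List ℕ) (n : ℕ) :
    ((AdmPath a b (lowStates a b m) u n).ncard : ℝ) ≤ ((b 0 : ℝ) + 1) ^ m * l ^ n := by
  induction n using Nat.strong_induction_on generalizing u with
  | _ n ih =>
    rcases lt_or_ge n m with h | h
    · have h1 : (AdmPath a b (lowStates a b m) u n).ncard ≤ (b 0 + 1) ^ n :=
        (Set.ncard_le_ncard (path_subset_words _ _ _ _ _) (finite_words _ _)).trans
          (ncard_words_le _ _)
      calc ((AdmPath a b (lowStates a b m) u n).ncard : ℝ) ≤ ((b 0 : ℝ) + 1) ^ n := by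
            exact_mod_cast h1
        _ ≤ ((b 0 : ℝ) + 1) ^ m := by
            apply pow_le_pow_right₀ _ h.le
            have : (0 : ℝ) ≤ b 0 := Nat.cast_nonneg _
            linarith
        _ ≤ _ := le_mul_of_one_le_right (by positivity) (one_le_pow₀ hl.le)
    · obtain ⟨k, rfl⟩ := Nat.exists_eq_add_of_le' h
      have h1 := ncard_le_mul_of_subset_iUnion (B := ((b 0 : ℝ) + 1) ^ m * l ^ k)
        (path_finite a b (lowStates a b m) u m) (path_add_subset a b (lowStates a b m) u k m)
        (fun i _ => (path_finite _ _ _ _ _).image _)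
        (fun i _ => le_trans (by exact_mod_cast Set.ncard_image_le (path_finite _ _ _ _ _))
          (ih k (by omega) _))
      refine h1.trans ?_
      have h2 : ((AdmPath a b (lowStates a b m) u m).ncard : ℝ) ≤ l ^ m := by
        refine le_trans ?_ hml
        exact_mod_cast path_lowStates_ncard_le ha hb u m
      calc _ ≤ l ^ m * (((b 0 : ℝ) + 1) ^ m * l ^ k) := by gcongr
        _ = _ := by ring

lemma exists_first_suffix {p : List ℕ → Prop} {v : List ℕ} (h : ∃ w, w <:+ v ∧ w ≠ [] ∧ p w) :
    ∃ d w, d :: w <:+ v ∧ p (d :: w) ∧ ∀ w', w' <:+ w → w' ≠ [] → ¬ p w' := by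
  induction v with
  | nil =>
    obtain ⟨w, hw, h0, _⟩ := h
    exact absurd (List.suffix_nil.1 hw) h0
  | cons e v ih =>
    by_cases h' : ∃ w, w <:+ v ∧ w ≠ [] ∧ p w
    · obtain ⟨d, w, hw, hp⟩ := ih h'
      exact ⟨d, w, hw.trans (List.suffix_cons _ _), hp⟩
    · obtain ⟨w, hw, h0, hp⟩ := h
      rcases List.suffix_cons_iff.1 hw with rfl | hw
      · exact ⟨e, v, List.suffix_rfl, hp, fun w' hw' h0' hp' => h' ⟨w', hw', h0', hp'⟩⟩
      · exact absurd ⟨w, hw, h0, hp⟩ h'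

lemma exists_last_suffix {p : List ℕ → Prop} {v : List ℕ} (h : ∃ w, w <:+ v ∧ w ≠ [] ∧ p w) :
    ∃ v' w, v = v' ++ w ∧ w ≠ [] ∧ p w ∧ ∀ w', w' <:+ v' → w' ≠ [] → ¬ p (w' ++ w) := by
  induction v with
  | nil =>
    obtain ⟨w, hw, h0, _⟩ := h
    exact absurd (List.suffix_nil.1 hw) h0
  | cons e v ih =>
    by_cases hp : p (e :: v)
    · refine ⟨[], e :: v, rfl, by simp, hp, fun w' hw' h0 => ?_⟩
      exact absurd (List.suffix_nil.1 hw') h0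
    · obtain ⟨w, hw, h0, hpw⟩ := h
      rcases List.suffix_cons_iff.1 hw with rfl | hw
      · exact absurd hpw hp
      · obtain ⟨v', w, rfl, h0, hpw, hlast⟩ := ih ⟨w, hw, h0, hpw⟩
        refine ⟨e :: v', w, rfl, h0, hpw, fun w' hw' h0' => ?_⟩
        rcases List.suffix_cons_iff.1 hw' with rfl | hw'
        · exact hp
        · exact hlast w' hw' h0'

/-- Continuations of `u` that first reach `x` after `i + 1` steps, are last at `x` a further `j`
steps later, and otherwise avoid `V`. -/
def PathThrough (a b : ℕ → ℕ) (V : Finset (List ℕ)) (x u : List ℕ) (n i j : ℕ) : Set (List ℕ) :=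
  {v | ∃ d ≤ b 0, ∃ v₁ ∈ AdmPath a b V u i, ∃ v₂, v₂.length = j ∧ Adm a b (v₂ ++ x) ∧
    st a b (v₂ ++ x) = x ∧ ∃ v₃ ∈ AdmPath a b V x (n - (i + 1 + j)), v = v₃ ++ v₂ ++ d :: v₁}

lemma path_subset_through (a b : ℕ → ℕ) (V : Finset (List ℕ)) (x u : List ℕ) (n : ℕ) :
    AdmPath a b V u n ⊆ AdmPath a b (insert x V) u n ∪
      ⋃ ij ∈ {ij : ℕ × ℕ | ij.1 + 1 + ij.2 ≤ n}, PathThrough a b (insert x V) x u n ij.1 ij.2 := by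
  rintro v ⟨hl, hadm, hst⟩
  by_cases hx : ∃ w, w <:+ v ∧ w ≠ [] ∧ st a b (w ++ u) = x
  · right
    obtain ⟨d, v₁, hv₁, hp₁, hfirst⟩ := exists_first_suffix hx
    obtain ⟨v₃, w, rfl, hw0, hpw, hlast⟩ := exists_last_suffix hx
    obtain ⟨v₂, rfl⟩ : d :: v₁ <:+ w := by
      rcases List.suffix_or_suffix_of_suffix hv₁ (List.suffix_append v₃ w) with h | h
      · exact h
      · rcases List.suffix_cons_iff.1 h with rfl | h
        · exact List.suffix_rfl
        · exact absurd hpw (hfirst w h hw0)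
    have hadm1 : Adm a b (d :: v₁ ++ u) := by
      apply adm_of_append (v := v₃ ++ v₂)
      simpa using hadm
    have hadm2 : Adm a b (v₂ ++ (d :: v₁ ++ u)) := by
      apply adm_of_append (v := v₃)
      simpa using hadm
    simp only [List.length_append, List.length_cons] at hl
    simp only [Set.mem_iUnion]
    refine ⟨(v₁.length, v₂.length), by simp only [Set.mem_ofPred_eq]; omega, d,
      hadm1.le_of_mem d (by simp), v₁, ⟨rfl, hadm1.1, ?_⟩, v₂, rfl, ?_, ?_, v₃, ⟨?_, ?_, ?_⟩,
      by simp⟩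
    · intro v' hv' h0
      rw [Finset.mem_insert, not_or]
      exact ⟨hfirst v' hv' h0, hst v' (hv'.trans (((List.suffix_cons d v₁).trans hv₁))) h0⟩
    · rw [← hp₁]
      exact adm_append_st hadm2
    · rw [← hp₁, st_append, hp₁, ← hpw, List.append_assoc]
    · omega
    · rw [← hpw]
      apply adm_append_st
      simpa using hadm
    · intro v' hv' h0
      rw [← hpw, st_append, Finset.mem_insert, not_or, hpw, ← List.append_assoc]
      exact ⟨hlast v' hv' h0,
        hst _ ((List.suffix_append_inj_of_length_eq rfl).2 ⟨hv', rfl⟩) (by simp [h0])⟩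
  · left
    refine ⟨hl, hadm, fun v' hv' h0 => ?_⟩
    rw [Finset.mem_insert, not_or]
    exact ⟨fun h => hx ⟨v', hv', h0, h⟩, hst v' hv' h0⟩

lemma pathThrough_bound {a b : ℕ → ℕ} (hH : ¬ HasHorseshoe a b) {V : Finset (List ℕ)}
    {K l : ℝ} (hK : 0 ≤ K) (hl : 1 ≤ l)
    (hV : ∀ u n, ((AdmPath a b V u n).ncard : ℝ) ≤ K * l ^ n) (x u : List ℕ) {n i j : ℕ}
    (hij : i + 1 + j ≤ n) :
    (PathThrough a b V x u n i j).Finite ∧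
      ((PathThrough a b V x u n i j).ncard : ℝ) ≤ ((b 0 : ℝ) + 1) * K ^ 2 * l ^ n := by
  by_cases hv₂ : ∃ v₂ : List ℕ, v₂.length = j ∧ Adm a b (v₂ ++ x) ∧ st a b (v₂ ++ x) = x
  · obtain ⟨v₂, h1, h2, h3⟩ := hv₂
    have hsub : PathThrough a b V x u n i j ⊆
        (fun p : ℕ × List ℕ × List ℕ => p.2.2 ++ v₂ ++ p.1 :: p.2.1) ''
          (Set.Iic (b 0) ×ˢ (AdmPath a b V u i ×ˢ AdmPath a b V x (n - (i + 1 + j)))) := by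
      rintro v ⟨d, hd, v₁, hv₁, v₂', h1', h2', h3', v₃, hv₃, rfl⟩
      have : v₂' = v₂ := by
        by_contra hne
        exact hH ⟨x, v₂', v₂, hne, by omega, h2', h2, h3', h3⟩
      subst this
      exact ⟨(d, v₁, v₃), ⟨hd, hv₁, hv₃⟩, rfl⟩
    have hfin := (Set.finite_Iic (b 0)).prod ((path_finite a b V u i).prod
      (path_finite a b V x (n - (i + 1 + j))))
    refine ⟨(hfin.image _).subset hsub, ?_⟩
    have hc : (PathThrough a b V x u n i j).ncard ≤
        (b 0 + 1) * ((AdmPath a b V u i).ncard * (AdmPath a b V x (n - (i + 1 + j))).ncard) := by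
      refine (Set.ncard_le_ncard hsub (hfin.image _)).trans ((Set.ncard_image_le hfin).trans ?_)
      rw [Set.ncard_prod, Set.ncard_prod]
      apply le_of_eq
      congr 1
      rw [Set.ncard_eq_toFinset_card']
      simp
    calc ((PathThrough a b V x u n i j).ncard : ℝ)
        ≤ (b 0 + 1) * ((AdmPath a b V u i).ncard * (AdmPath a b V x (n - (i + 1 + j))).ncard) := by
          exact_mod_cast hc
      _ ≤ (b 0 + 1) * ((K * l ^ i) * (K * l ^ (n - (i + 1 + j)))) := by
          gcongr
          · exact hV _ _
          · exact hV _ _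
      _ = (b 0 + 1) * K ^ 2 * l ^ (i + (n - (i + 1 + j))) := by rw [pow_add]; ring
      _ ≤ (b 0 + 1) * K ^ 2 * l ^ n := by
          gcongr
          omega
  · have : PathThrough a b V x u n i j = ∅ := by
      ext v
      simp only [Set.mem_empty_iff_false, iff_false]
      rintro ⟨d, hd, v₁, hv₁, v₂', h1', h2', h3', -⟩
      exact hv₂ ⟨v₂', h1', h2', h3'⟩
    rw [this]
    refine ⟨Set.finite_empty, ?_⟩
    simp only [Set.ncard_empty, Nat.cast_zero]
    positivity

lemma exists_sq_mul_pow_le {l l' : ℝ} (hl : 1 < l) (hll : l < l') :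
    ∃ C : ℝ, 0 ≤ C ∧ ∀ n : ℕ, ((n : ℝ) + 1) ^ 2 * l ^ n ≤ C * l' ^ n := by
  have h0 : 0 < l := by linarith
  have hl' : 0 < l' := by linarith
  have hr : |l / l'| < 1 := by
    rw [abs_of_nonneg (by positivity), div_lt_one (by linarith)]
    exact hll
  have ht := (tendsto_pow_const_mul_const_pow_of_abs_lt_one 2 hr)
  have ht' := ht.comp (tendsto_add_atTop_nat 1)
  obtain ⟨C, hC⟩ := ht'.bddAbove_range
  have hC' : ∀ n : ℕ, ((n : ℝ) + 1) ^ 2 * (l / l') ^ (n + 1) ≤ C := by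
    intro n
    have := hC ⟨n, rfl⟩
    simpa using this
  have hC0 : 0 ≤ C := le_trans (by positivity) (hC' 0)
  refine ⟨C * (l' / l), by positivity, fun n => ?_⟩
  have h := hC' n
  rw [div_pow, mul_div_assoc', div_le_iff₀ (by positivity)] at h
  rw [← mul_le_mul_iff_left₀ h0]
  calc ((n : ℝ) + 1) ^ 2 * l ^ n * l = ((n : ℝ) + 1) ^ 2 * l ^ (n + 1) := by ring
    _ ≤ C * l' ^ (n + 1) := h
    _ = C * (l' / l) * l' ^ n * l := by field_simp; ring

lemma path_growth_of_insert {a b : ℕ → ℕ} (hH : ¬ HasHorseshoe a b) {V : Finset (List ℕ)}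
    {x : List ℕ} {l₀ : ℝ} (hl₀ : 1 ≤ l₀)
    (h : ∀ l > l₀, ∃ K : ℝ, 0 ≤ K ∧ ∀ u n, ((AdmPath a b (insert x V) u n).ncard : ℝ) ≤ K * l ^ n) :
    ∀ l > l₀, ∃ K : ℝ, 0 ≤ K ∧ ∀ u n, ((AdmPath a b V u n).ncard : ℝ) ≤ K * l ^ n := by
  intro l' hl'
  obtain ⟨l, hl, hll⟩ := exists_between hl'
  have hl1 : 1 < l := by linarith
  obtain ⟨K, hK, hV⟩ := h l hl
  obtain ⟨C, hC, hCn⟩ := exists_sq_mul_pow_le hl1 hll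
  refine ⟨K + C * (((b 0 : ℝ) + 1) * K ^ 2), by positivity, fun u n => ?_⟩
  set S := {ij : ℕ × ℕ | ij.1 + 1 + ij.2 ≤ n}
  have hSsub : S ⊆ (Set.Iic n ×ˢ Set.Iic n : Set (ℕ × ℕ)) := by
    rintro ⟨i, j⟩ hij
    simp only [S, Set.mem_ofPred_eq] at hij
    simp only [Set.mem_prod, Set.mem_Iic]
    omega
  have hfin2 : (Set.Iic n ×ˢ Set.Iic n : Set (ℕ × ℕ)).Finite :=
    (Set.finite_Iic n).prod (Set.finite_Iic n)
  have hSfin : S.Finite := hfin2.subset hSsub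
  have hScard : (S.ncard : ℝ) ≤ ((n : ℝ) + 1) ^ 2 := by
    have h1 : S.ncard ≤ (n + 1) * (n + 1) := by
      refine (Set.ncard_le_ncard hSsub hfin2).trans (le_of_eq ?_)
      rw [Set.ncard_prod, Set.ncard_eq_toFinset_card']
      simp
    rw [sq]
    exact_mod_cast h1
  have hb := fun (ij : ℕ × ℕ) (hij : ij ∈ S) =>
    pathThrough_bound hH hK hl1.le hV x u (n := n) (i := ij.1) (j := ij.2) hij
  have h2 := ncard_le_mul_of_subset_iUnion (A := ⋃ ij ∈ S, PathThrough a b (insert x V) x u n ij.1 ij.2)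
    hSfin subset_rfl (fun ij hij => (hb ij hij).1) (fun ij hij => (hb ij hij).2)
  have hUfin : (⋃ ij ∈ S, PathThrough a b (insert x V) x u n ij.1 ij.2).Finite :=
    hSfin.biUnion fun ij hij => (hb ij hij).1
  have h3 : (AdmPath a b V u n).ncard ≤ (AdmPath a b (insert x V) u n).ncard +
      (⋃ ij ∈ S, PathThrough a b (insert x V) x u n ij.1 ij.2).ncard :=
    (Set.ncard_le_ncard (path_subset_through a b V x u n)
      ((path_finite _ _ _ _ _).union hUfin)).trans (Set.ncard_union_le _ _)
  calc ((AdmPath a b V u n).ncard : ℝ) ≤ (AdmPath a b (insert x V) u n).ncard +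
      (⋃ ij ∈ S, PathThrough a b (insert x V) x u n ij.1 ij.2).ncard := by exact_mod_cast h3
    _ ≤ K * l ^ n + ((n : ℝ) + 1) ^ 2 * (((b 0 : ℝ) + 1) * K ^ 2 * l ^ n) := by
        gcongr
        · exact hV u n
        · exact h2.trans (by gcongr)
    _ = K * l ^ n + (((b 0 : ℝ) + 1) * K ^ 2) * (((n : ℝ) + 1) ^ 2 * l ^ n) := by ring
    _ ≤ K * l' ^ n + (((b 0 : ℝ) + 1) * K ^ 2) * (C * l' ^ n) := by
        have := hCn n
        gcongr K * ?_ + _ * ?_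
        exact pow_le_pow_left₀ (by linarith) hll.le n
    _ = _ := by ring

lemma exists_succ_le_pow {l : ℝ} (hl : 1 < l) (C : ℝ) : ∃ m : ℕ, 0 < m ∧ C * ((m : ℝ) + 1) ≤ l ^ m := by
  have h := (isLittleO_pow_const_const_pow_of_one_lt (R := ℝ) 1 hl)
  have hC : (0 : ℝ) < 1 / (2 * (|C| + 1)) := by positivity
  obtain ⟨m, hm, hm1⟩ := ((h.bound hC).and (eventually_ge_atTop 1)).exists
  refine ⟨m, hm1, ?_⟩
  simp only [pow_one, Real.norm_eq_abs, Nat.abs_cast] at hm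
  have h0 : 0 < l ^ m := pow_pos (by linarith) m
  rw [abs_of_pos h0, one_div, inv_mul_eq_div, le_div_iff₀ (by positivity)] at hm
  have hm1' : (1 : ℝ) ≤ m := by exact_mod_cast hm1
  have : C ≤ |C| := le_abs_self C
  nlinarith [abs_nonneg C]

/-- Admissible words of length `n`. -/
def admWords (a b : ℕ → ℕ) (n : ℕ) : Set (List ℕ) := {v | v.length = n ∧ Adm a b v}

lemma admWords_finite (a b : ℕ → ℕ) (n : ℕ) : (admWords a b n).Finite :=
  (finite_words (b 0) n).subset fun _ hv => ⟨hv.1, hv.2.le_of_mem⟩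

/-- The number of admissible words grows subexponentially. -/
def ZeroGrowth (a b : ℕ → ℕ) : Prop :=
  ∀ l : ℝ, 1 < l → ∃ n, 0 < n ∧ ((admWords a b n).ncard : ℝ) ≤ l ^ n

theorem zeroGrowth_of_not_hasHorseshoe {a b : ℕ → ℕ} (ha : ∀ n, toLex a ≤ toLex (shiftn n a))
    (hb : ∀ n, toLex (shiftn n b) ≤ toLex b) (hH : ¬ HasHorseshoe a b) : ZeroGrowth a b := by
  classical
  intro l hl
  obtain ⟨l₂, hl₂, hl₂'⟩ := exists_between hl
  obtain ⟨l₁, hl₁, hl₁'⟩ := exists_between hl₂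
  obtain ⟨m, hm, hml⟩ := exists_succ_le_pow hl₁ 1
  rw [one_mul] at hml
  have base : ∀ l > l₁, ∃ K : ℝ, 0 ≤ K ∧
      ∀ u n, ((AdmPath a b (lowStates a b m) u n).ncard : ℝ) ≤ K * l ^ n := by
    intro l hl
    refine ⟨((b 0 : ℝ) + 1) ^ m, by positivity, fun u n => ?_⟩
    refine (path_lowStates_growth (deviates_left ha) (deviates_right hb) hm hl₁ hml u n).trans ?_
    gcongr
  have step : ∀ V : Finset (List ℕ), (∀ l > l₁, ∃ K : ℝ, 0 ≤ K ∧
      ∀ u n, ((AdmPath a b V u n).ncard : ℝ) ≤ K * l ^ n) → ∀ l > l₁, ∃ K : ℝ, 0 ≤ K ∧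
      ∀ u n, ((AdmPath a b ∅ u n).ncard : ℝ) ≤ K * l ^ n := by
    intro V
    induction V using Finset.induction_on with
    | empty => exact id
    | insert x V _ ih => exact fun h => ih (path_growth_of_insert hH hl₁.le h)
  obtain ⟨K, hK, hbd⟩ := step _ base l₂ hl₁'
  have hq : 1 < l / l₂ := (one_lt_div (by linarith)).2 hl₂'
  obtain ⟨n, hn, hnl⟩ := exists_succ_le_pow hq K
  refine ⟨n, hn, ?_⟩
  have hpath : admWords a b n = AdmPath a b ∅ [] n := by
    ext v
    simp [admWords, AdmPath]
  have hK' : K ≤ (l / l₂) ^ n := by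
    refine le_trans ?_ hnl
    have : (0 : ℝ) ≤ n := Nat.cast_nonneg n
    nlinarith
  rw [hpath]
  have hpos : (0 : ℝ) < l₂ ^ n := by
    have : 0 < l₂ := by linarith
    positivity
  calc _ ≤ K * l₂ ^ n := hbd [] n
    _ ≤ (l / l₂) ^ n * l₂ ^ n := by gcongr
    _ = l ^ n := by rw [div_pow, div_mul_cancel₀ _ hpos.ne']

/-- `y` is the orbit of remainders belonging to the expansion `c` in base `β`. -/
def IsExp (β : ℝ) (c : ℕ → ℕ) (y : ℕ → ℝ) : Prop := ∀ n, y (n + 1) = β * y n - c n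

/-- The quasi-greedy β-transformation on `(0,1]`. -/
noncomputable def Qbeta (β x : ℝ) : ℝ := β * x - ((⌈β * x⌉₊ - 1 : ℕ) : ℝ)

/-- Quasi-greedy digits. -/
noncomputable def qdig (β x : ℝ) (n : ℕ) : ℕ := ⌈β * (Qbeta β)^[n] x⌉₊ - 1

/-- Greedy digits. -/
noncomputable def gdig (β x : ℝ) (n : ℕ) : ℕ := ⌊β * (Tbeta β)^[n] x⌋₊

lemma lex_not_le {x y : ℕ → ℕ} : ¬ toLex x ≤ toLex y ↔ toLex y < toLex x := not_le

lemma shiftn_shiftn (m n : ℕ) (z : ℕ → ℕ) : shiftn m (shiftn n z) = shiftn (m + n) z := by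
  funext i
  simp [shiftn, Nat.add_assoc]

@[simp] lemma shiftn_zero (z : ℕ → ℕ) : shiftn 0 z = z := rfl

lemma shiftn_qdig (β x : ℝ) (n : ℕ) : shiftn n (qdig β x) = qdig β ((Qbeta β)^[n] x) := by
  funext i
  simp [shiftn, qdig, Function.iterate_add_apply]

lemma shiftn_gdig (β x : ℝ) (n : ℕ) : shiftn n (gdig β x) = gdig β ((Tbeta β)^[n] x) := by
  funext i
  simp [shiftn, gdig, Function.iterate_add_apply]

lemma IsExp.shift {β : ℝ} {c : ℕ → ℕ} {y : ℕ → ℝ} (h : IsExp β c y) (n : ℕ) :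
    IsExp β (shiftn n c) (fun i => y (i + n)) := by
  intro i
  have := h (i + n)
  simp only [shiftn]
  rw [← this]
  congr 1
  omega

lemma isExp_qdig (β x : ℝ) : IsExp β (qdig β x) (fun n => (Qbeta β)^[n] x) := by
  intro n
  simp only [Function.iterate_succ_apply']
  rfl

lemma Tbeta_mem (β x : ℝ) : Tbeta β x ∈ Ico (0 : ℝ) 1 := ⟨Int.fract_nonneg _, Int.fract_lt_one _⟩

lemma iterate_Tbeta_mem (β : ℝ) {x : ℝ} (hx : x ∈ Ico (0 : ℝ) 1) (n : ℕ) :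
    (Tbeta β)^[n] x ∈ Ico (0 : ℝ) 1 := by
  cases n with
  | zero => exact hx
  | succ n =>
    rw [Function.iterate_succ_apply']
    exact Tbeta_mem _ _

lemma Qbeta_mem {β x : ℝ} (hβ : 0 < β) (hx : 0 < x) : Qbeta β x ∈ Ioc (0 : ℝ) 1 := by
  have h0 : 0 < β * x := by positivity
  have h1 : 1 ≤ ⌈β * x⌉₊ := Nat.one_le_ceil_iff.2 h0
  have h2 := Nat.ceil_lt_add_one h0.le
  have h3 := Nat.le_ceil (β * x)
  unfold Qbeta
  push_cast [h1]
  constructor <;> linarith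

lemma iterate_Qbeta_mem {β : ℝ} (hβ : 0 < β) {x : ℝ} (hx : x ∈ Ioc (0 : ℝ) 1) (n : ℕ) :
    (Qbeta β)^[n] x ∈ Ioc (0 : ℝ) 1 := by
  induction n with
  | zero => exact hx
  | succ n ih =>
    rw [Function.iterate_succ_apply']
    exact Qbeta_mem hβ ih.1

lemma isExp_gdig {β : ℝ} (hβ : 0 < β) {x : ℝ} (hx : x ∈ Ico (0 : ℝ) 1) :
    IsExp β (gdig β x) (fun n => (Tbeta β)^[n] x) := by
  intro n
  have h0 : 0 ≤ β * (Tbeta β)^[n] x := mul_nonneg hβ.le (iterate_Tbeta_mem β hx n).1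
  simp only [Function.iterate_succ_apply', gdig]
  rw [natCast_floor_eq_intCast_floor h0]
  rfl

lemma IsExp.diff_eq {β : ℝ} {c c' : ℕ → ℕ} {y y' : ℕ → ℝ} (h : IsExp β c y) (h' : IsExp β c' y')
    {k : ℕ} (hk : ∀ i < k, c i = c' i) : y' k - y k = β ^ k * (y' 0 - y 0) := by
  induction k with
  | zero => simp
  | succ k ih =>
    rw [h k, h' k, hk k (by omega), pow_succ']
    linear_combination β * ih fun i hi => hk i (by omega)

lemma IsExp.gap {β : ℝ} {c c' : ℕ → ℕ} {y y' : ℕ → ℝ} (h : IsExp β c y) (h' : IsExp β c' y')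
    {k : ℕ} (hk : ∀ i < k, c i = c' i) (hlt : c k < c' k) :
    1 + (y' (k + 1) - y (k + 1)) ≤ β ^ (k + 1) * (y' 0 - y 0) := by
  have h1 : (c k : ℝ) + 1 ≤ c' k := by exact_mod_cast hlt
  rw [h k, h' k, pow_succ']
  linear_combination h1 + β * h.diff_eq h' hk

lemma eq_zero_of_pow_mul_le {β x C : ℝ} (hβ : 1 < β) (h : ∀ n : ℕ, β ^ n * |x| ≤ C) : x = 0 := by
  by_contra hx
  have hx' : 0 < |x| := abs_pos.2 hx
  obtain ⟨n, hn⟩ := pow_unbounded_of_one_lt (C / |x|) hβ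
  rw [div_lt_iff₀ hx'] at hn
  linarith [h n]

lemma IsExp.eq_of_bounded {β : ℝ} (hβ : 1 < β) {c : ℕ → ℕ} {y y' : ℕ → ℝ} (h : IsExp β c y)
    (h' : IsExp β c y') {C : ℝ} (hC : ∀ n, |y' n - y n| ≤ C) : y' 0 = y 0 := by
  have : y' 0 - y 0 = 0 := by
    refine eq_zero_of_pow_mul_le hβ (C := C) fun n => ?_
    have := hC n
    rw [h.diff_eq h' fun i _ => rfl, abs_mul, abs_of_pos (by positivity)] at this
    exact this
  linarith

lemma lt_of_gdig_lt_qdig {β : ℝ} (hβ : 1 < β) {x t : ℝ} (hx : x ∈ Ico (0 : ℝ) 1)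
    (ht : t ∈ Ioc (0 : ℝ) 1) (h : toLex (gdig β x) < toLex (qdig β t)) : x < t := by
  obtain ⟨k, hk, hlt⟩ := h
  have h0 : 0 < β := by linarith
  have h1 := (isExp_gdig h0 hx).gap (isExp_qdig β t) hk hlt
  have h2 := (iterate_Qbeta_mem h0 ht (k + 1)).1
  have h3 := (iterate_Tbeta_mem β hx (k + 1)).2
  have h4 : 0 < β ^ (k + 1) * (t - x) := by
    simp only [Function.iterate_zero, id] at h1
    linarith
  linarith [(pos_iff_pos_of_mul_pos h4).1 (by positivity)]

lemma gdig_gap {β : ℝ} (hβ : 1 < β) {x t : ℝ} (hx : x ∈ Ico (0 : ℝ) 1)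
    (ht : t ∈ Ioc (0 : ℝ) 1) {k : ℕ} (hk : ∀ i < k, qdig β t i = gdig β x i)
    (hlt : qdig β t k < gdig β x k) : (Tbeta β)^[k + 1] x ≤ β ^ (k + 1) * (x - t) := by
  have h0 : 0 < β := by linarith
  have h1 := (isExp_qdig β t).gap (isExp_gdig h0 hx) hk hlt
  have h2 := (iterate_Qbeta_mem h0 ht (k + 1)).2
  simp only [Function.iterate_zero, id] at h1
  linarith

lemma eq_of_gdig_eq_qdig {β : ℝ} (hβ : 1 < β) {x t : ℝ} (hx : x ∈ Ico (0 : ℝ) 1)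
    (ht : t ∈ Ioc (0 : ℝ) 1) (h : gdig β x = qdig β t) : x = t := by
  have h0 : 0 < β := by linarith
  have h1 := isExp_gdig h0 hx
  rw [h] at h1
  refine (isExp_qdig β t).eq_of_bounded hβ h1 (C := 1) fun n => ?_
  have h2 := iterate_Qbeta_mem h0 ht n
  have h3 := iterate_Tbeta_mem β hx n
  rw [abs_le]
  constructor <;> linarith [h2.1, h2.2, h3.1, h3.2]

lemma le_iff_qdig_le_gdig {β : ℝ} (hβ : 1 < β) {x t : ℝ} (hx : x ∈ Ico (0 : ℝ) 1)
    (ht : t ∈ Ioc (0 : ℝ) 1) : t ≤ x ↔ toLex (qdig β t) ≤ toLex (gdig β x) := by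
  constructor
  · intro h
    by_contra! hlt
    exact absurd (lt_of_gdig_lt_qdig hβ hx ht hlt) (not_lt.2 h)
  · intro h
    rcases h.eq_or_lt with h | ⟨k, hk, hlt⟩
    · exact (eq_of_gdig_eq_qdig hβ hx ht (toLex.injective h).symm).ge
    · have h1 := gdig_gap hβ hx ht hk hlt
      have h2 := (iterate_Tbeta_mem β hx (k + 1)).1
      have h3 : 0 ≤ β ^ (k + 1) * (x - t) := h2.trans h1
      have : 0 ≤ x - t := nonneg_of_mul_nonneg_right h3 (by positivity)
      linarith

lemma lt_of_qdig_lt {β : ℝ} (hβ : 1 < β) {s t : ℝ} (hs : s ∈ Ioc (0 : ℝ) 1)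
    (ht : t ∈ Ioc (0 : ℝ) 1) (h : toLex (qdig β s) < toLex (qdig β t)) : s < t := by
  obtain ⟨k, hk, hlt⟩ := h
  have h0 : 0 < β := by linarith
  have h1 := (isExp_qdig β s).gap (isExp_qdig β t) hk hlt
  have h2 := (iterate_Qbeta_mem h0 ht (k + 1)).1
  have h3 := (iterate_Qbeta_mem h0 hs (k + 1)).2
  have h4 : 0 < β ^ (k + 1) * (t - s) := by
    simp only [Function.iterate_zero, id] at h1
    linarith
  linarith [(pos_iff_pos_of_mul_pos h4).1 (by positivity)]

lemma eq_of_qdig_eq {β : ℝ} (hβ : 1 < β) {s t : ℝ} (hs : s ∈ Ioc (0 : ℝ) 1)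
    (ht : t ∈ Ioc (0 : ℝ) 1) (h : qdig β s = qdig β t) : s = t := by
  have h0 : 0 < β := by linarith
  have h1 := isExp_qdig β s
  rw [h] at h1
  refine (isExp_qdig β t).eq_of_bounded hβ h1 (C := 1) fun n => ?_
  have h2 := iterate_Qbeta_mem h0 ht n
  have h3 := iterate_Qbeta_mem h0 hs n
  rw [abs_le]
  constructor <;> linarith [h2.1, h2.2, h3.1, h3.2]

lemma qdig_lt_iff {β : ℝ} (hβ : 1 < β) {s t : ℝ} (hs : s ∈ Ioc (0 : ℝ) 1)
    (ht : t ∈ Ioc (0 : ℝ) 1) : toLex (qdig β s) < toLex (qdig β t) ↔ s < t := by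
  refine ⟨lt_of_qdig_lt hβ hs ht, fun h => ?_⟩
  refine lex_not_le.1 fun hle => ?_
  rcases hle.eq_or_lt with h' | h'
  · exact h.ne' (eq_of_qdig_eq hβ ht hs (toLex.injective h'))
  · exact h.not_gt (lt_of_qdig_lt hβ ht hs h')

lemma qdig_le_iff {β : ℝ} (hβ : 1 < β) {s t : ℝ} (hs : s ∈ Ioc (0 : ℝ) 1)
    (ht : t ∈ Ioc (0 : ℝ) 1) : toLex (qdig β s) ≤ toLex (qdig β t) ↔ s ≤ t := by
  rw [← not_lt (a := t), ← qdig_lt_iff hβ ht hs, ← lex_not_le, not_not]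

lemma one_mem_Ioc : (1 : ℝ) ∈ Ioc (0 : ℝ) 1 := ⟨one_pos, le_rfl⟩

lemma shiftn_qdig_le {β : ℝ} (hβ : 1 < β) {t : ℝ} (ht : t ∈ Ioc (0 : ℝ) 1) (n : ℕ) :
    toLex (shiftn n (qdig β t)) ≤ toLex (qdig β 1) := by
  have := iterate_Qbeta_mem (by linarith : 0 < β) ht n
  rw [shiftn_qdig, qdig_le_iff hβ this one_mem_Ioc]
  exact this.2

lemma shiftn_gdig_lt {β : ℝ} (hβ : 1 < β) {x : ℝ} (hx : x ∈ Ico (0 : ℝ) 1) (n : ℕ) :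
    toLex (shiftn n (gdig β x)) < toLex (qdig β 1) := by
  have := iterate_Tbeta_mem β hx n
  rw [shiftn_gdig, ← lex_not_le, ← le_iff_qdig_le_gdig hβ this one_mem_Ioc, not_le]
  exact this.2

lemma le_iterate_iff {β : ℝ} (hβ : 1 < β) {x t : ℝ} (hx : x ∈ Ico (0 : ℝ) 1)
    (ht : t ∈ Ioc (0 : ℝ) 1) (n : ℕ) :
    t ≤ (Tbeta β)^[n] x ↔ toLex (qdig β t) ≤ toLex (shiftn n (gdig β x)) := by
  rw [shiftn_gdig, le_iff_qdig_le_gdig hβ (iterate_Tbeta_mem β hx n) ht]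

lemma exists_qdig_agree {β : ℝ} (hβ : 1 < β) {t : ℝ} (ht : t ∈ Ioc (0 : ℝ) 1) (L : ℕ) :
    ∃ δ > 0, ∀ s, t - δ < s → s ≤ t → ∀ i < L, qdig β s i = qdig β t i := by
  have h0 : 0 < β := by linarith
  induction L with
  | zero => exact ⟨1, one_pos, fun s _ _ i hi => absurd hi (by omega)⟩
  | succ L ih =>
    obtain ⟨δ, hδ, h⟩ := ih
    have hQ := iterate_Qbeta_mem h0 ht (L + 1)
    refine ⟨min δ ((Qbeta β)^[L + 1] t / β ^ (L + 1)), lt_min hδ (div_pos hQ.1 (by positivity)),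
      fun s hs hst i hi => ?_⟩
    have h1 := h s (by linarith [min_le_left δ ((Qbeta β)^[L + 1] t / β ^ (L + 1))]) hst
    rcases Nat.lt_succ_iff_lt_or_eq.1 hi with hi | rfl
    · exact h1 i hi
    have h2 : t - s < (Qbeta β)^[i + 1] t / β ^ (i + 1) := by
      linarith [min_le_right δ ((Qbeta β)^[i + 1] t / β ^ (i + 1))]
    rw [lt_div_iff₀ (by positivity), pow_succ'] at h2
    have h3 := (isExp_qdig β s).diff_eq (isExp_qdig β t) h1
    have h4 := isExp_qdig β t i
    simp only [Function.iterate_zero, id] at h3 h4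
    have h5 : ⌈β * (Qbeta β)^[i] s⌉₊ = qdig β t i + 1 := by
      have h6 : 0 ≤ β * (β ^ i * (t - s)) :=
        mul_nonneg h0.le (mul_nonneg (by positivity) (by linarith))
      rw [Nat.ceil_eq_iff (by omega)]
      push_cast
      constructor
      · linear_combination h2 + h4 + β * h3
      · linear_combination h6 + hQ.2 - h4 - β * h3
    rw [qdig, h5]
    rfl

lemma qdig_le_ceil {β : ℝ} (hβ : 1 < β) {t : ℝ} (ht : t ∈ Ioc (0 : ℝ) 1) (n : ℕ) :
    qdig β t n ≤ ⌈β⌉₊ := by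
  have h0 : 0 < β := by linarith
  have h1 := (iterate_Qbeta_mem h0 ht n).2
  exact (Nat.sub_le _ _).trans (Nat.ceil_le_ceil (by nlinarith))

lemma qdig_agree_sub_le {β β' : ℝ} (hβ : 1 < β) (hββ' : β < β') {n : ℕ}
    (h : ∀ i < n + 1, qdig β 1 i = qdig β' 1 i) : β' - β ≤ 1 / β ^ n := by
  have h0 : 0 < β := by linarith
  have h0' : 0 < β' := by linarith
  have key : ∀ i ≤ n, β ^ i * (β' - β) ≤ (Qbeta β')^[i + 1] 1 - (Qbeta β)^[i + 1] 1 := by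
    intro i hi
    have e1 := fun i => isExp_qdig β 1 i
    have e2 := fun i => isExp_qdig β' 1 i
    simp only at e1 e2
    induction i with
    | zero =>
      rw [e1, e2, h 0 (by omega)]
      simp
    | succ i ih =>
      rw [e1, e2, h (i + 1) (by omega)]
      have h1 := ih (by omega)
      have h2 := (iterate_Qbeta_mem h0' one_mem_Ioc (i + 1)).1
      rw [pow_succ']
      linear_combination β * h1 + (β' - β) * h2
  have h1 := key n le_rfl
  have h2 := (iterate_Qbeta_mem h0' one_mem_Ioc (n + 1)).2
  have h3 := (iterate_Qbeta_mem h0 one_mem_Ioc (n + 1)).1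
  rw [le_div_iff₀ (by positivity)]
  linarith

lemma summable_geom {β : ℝ} (hβ : 1 < β) : Summable fun i : ℕ => 1 / β ^ (i + 1) := by
  have := (summable_geometric_of_lt_one (by positivity : 0 ≤ β⁻¹) (inv_lt_one_of_one_lt₀ hβ))
  have h2 := (summable_nat_add_iff 1).2 this
  simpa [inv_pow, one_div] using h2

lemma summable_valSeq {β : ℝ} (hβ : 1 < β) {z : ℕ → ℕ} {M : ℕ} (hz : ∀ i, z i ≤ M) :
    Summable fun i : ℕ => (z i : ℝ) / β ^ (i + 1) := by
  have h0 : 0 < β := by linarith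
  refine Summable.of_nonneg_of_le (fun i => by positivity) (fun i => ?_)
    ((summable_geom hβ).mul_left (M : ℝ))
  rw [mul_one_div]
  have : (z i : ℝ) ≤ M := by exact_mod_cast hz i
  gcongr

lemma valSeq_nonneg {β : ℝ} (hβ : 1 < β) (z : ℕ → ℕ) : 0 ≤ valSeq β z := by
  have h0 : 0 < β := by linarith
  exact tsum_nonneg fun i => by positivity

lemma valSeq_le {β : ℝ} (hβ : 1 < β) {z : ℕ → ℕ} {M : ℕ} (hz : ∀ i, z i ≤ M) :
    valSeq β z ≤ ∑' i : ℕ, M * (1 / β ^ (i + 1)) := by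
  have h0 : 0 < β := by linarith
  refine (summable_valSeq hβ hz).tsum_le_tsum (fun i => ?_) ((summable_geom hβ).mul_left (M : ℝ))
  rw [mul_one_div]
  have : (z i : ℝ) ≤ M := by exact_mod_cast hz i
  gcongr

lemma isExp_valSeq {β : ℝ} (hβ : 1 < β) {z : ℕ → ℕ} {M : ℕ} (hz : ∀ i, z i ≤ M) :
    IsExp β z (fun n => valSeq β (shiftn n z)) := by
  have h0 : 0 < β := by linarith
  intro n
  have h1 := (summable_valSeq hβ (z := shiftn n z) (M := M) fun i => hz _).tsum_eq_zero_add
  have h2 : β * ∑' i : ℕ, (shiftn n z (i + 1) : ℝ) / β ^ (i + 1 + 1) = valSeq β (shiftn (n + 1) z) := by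
    rw [← tsum_mul_left, valSeq]
    congr 1
    funext i
    rw [pow_succ]
    have : shiftn n z (i + 1) = shiftn (n + 1) z i := by
      simp only [shiftn]; congr 1; omega
    rw [this]
    field_simp
  simp only [valSeq] at h1 h2 ⊢
  rw [← h2, h1]
  simp only [zero_add, pow_one, mul_add]
  have : shiftn n z 0 = z n := by simp [shiftn]
  rw [this]
  field_simp
  ring

lemma IsExp.eq_valSeq {β : ℝ} (hβ : 1 < β) {z : ℕ → ℕ} {M : ℕ} (hz : ∀ i, z i ≤ M) {y : ℕ → ℝ}
    (h : IsExp β z y) {C : ℝ} (hC : ∀ n, |y n| ≤ C) : y 0 = valSeq β z := by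
  refine (isExp_valSeq hβ hz).eq_of_bounded hβ h
    (C := C + ∑' i : ℕ, M * (1 / β ^ (i + 1))) fun n => ?_
  have h1 := valSeq_nonneg hβ (shiftn n z)
  have h2 := valSeq_le hβ (z := shiftn n z) (M := M) fun i => hz _
  have h3 := hC n
  refine (abs_sub _ _).trans ?_
  rw [abs_of_nonneg h1]
  linarith

lemma valSeq_qdig {β : ℝ} (hβ : 1 < β) {t : ℝ} (ht : t ∈ Ioc (0 : ℝ) 1) :
    valSeq β (qdig β t) = t := by
  refine ((isExp_qdig β t).eq_valSeq hβ (qdig_le_ceil hβ ht) (C := 1) fun n => ?_).symm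
  have := iterate_Qbeta_mem (by linarith : 0 < β) ht n
  rw [abs_le]
  constructor <;> linarith [this.1, this.2]

lemma le_of_shiftn_le {z b : ℕ → ℕ} (h : ∀ n, toLex (shiftn n z) ≤ toLex b) (n : ℕ) :
    z n ≤ b 0 := by
  have := lex_le_apply (h n) (k := 0) (by simp)
  simpa [shiftn] using this

lemma valSeq_sub_one_le {β : ℝ} (hβ : 1 < β) {z : ℕ → ℕ}
    (h : ∀ n, toLex (shiftn n z) ≤ toLex (qdig β 1)) {n k : ℕ}
    (hk : ∀ i < k, shiftn n z i = qdig β 1 i) (hlt : shiftn n z k < qdig β 1 k) :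
    β ^ (k + 1) * (valSeq β (shiftn n z) - 1) < valSeq β (shiftn (n + (k + 1)) z) - 1 := by
  have h1 := ((isExp_valSeq hβ (le_of_shiftn_le h)).shift n).gap (isExp_qdig β 1) hk hlt
  have h2 := (iterate_Qbeta_mem (by linarith : 0 < β) one_mem_Ioc (k + 1)).1
  simp only [Function.iterate_zero, id, zero_add] at h1
  rw [Nat.add_comm (k + 1) n] at h1
  linarith

lemma valSeq_le_one {β : ℝ} (hβ : 1 < β) {z : ℕ → ℕ}
    (h : ∀ n, toLex (shiftn n z) ≤ toLex (qdig β 1)) (n : ℕ) : valSeq β (shiftn n z) ≤ 1 := by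
  have h0 : 0 < β := by linarith
  set V := ∑' i : ℕ, (qdig β 1 0 : ℝ) * (1 / β ^ (i + 1)) with hV
  have hV0 : 0 ≤ V := tsum_nonneg fun i => by positivity
  have key : ∀ j n : ℕ, valSeq β (shiftn n z) - 1 ≤ V / β ^ j := by
    intro j
    induction j with
    | zero =>
      intro n
      have := valSeq_le hβ (z := shiftn n z) (M := qdig β 1 0) fun i => le_of_shiftn_le h _
      rw [pow_zero, div_one]
      linarith
    | succ j ih =>
      intro n
      rcases (h n).eq_or_lt with heq | ⟨k, hk, hlt⟩
      · rw [toLex.injective heq, valSeq_qdig hβ one_mem_Ioc, sub_self]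
        positivity
      · have h1 := valSeq_sub_one_le hβ h hk hlt
        have h2 := ih (n + (k + 1))
        rw [le_div_iff₀ (by positivity)] at h2 ⊢
        by_cases hneg : valSeq β (shiftn n z) - 1 ≤ 0
        · exact le_trans (mul_nonpos_of_nonpos_of_nonneg hneg (by positivity)) hV0
        · push Not at hneg
          have h3 : β ≤ β ^ (k + 1) := le_self_pow₀ hβ.le (by omega)
          calc (valSeq β (shiftn n z) - 1) * β ^ (j + 1)
              = (β * (valSeq β (shiftn n z) - 1)) * β ^ j := by ring
            _ ≤ (β ^ (k + 1) * (valSeq β (shiftn n z) - 1)) * β ^ j := by gcongr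
            _ ≤ (valSeq β (shiftn (n + (k + 1)) z) - 1) * β ^ j := by gcongr
            _ ≤ V := h2
  by_contra! hgt
  have hx : 0 < valSeq β (shiftn n z) - 1 := by linarith
  have := eq_zero_of_pow_mul_le hβ (x := valSeq β (shiftn n z) - 1) (C := V) fun j => by
    have := key j n
    rw [le_div_iff₀ (by positivity)] at this
    rw [abs_of_pos hx]
    linarith
  linarith

lemma valSeq_lt_one {β : ℝ} (hβ : 1 < β) {z : ℕ → ℕ}
    (h : ∀ n, toLex (shiftn n z) < toLex (qdig β 1)) (n : ℕ) : valSeq β (shiftn n z) < 1 := by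
  have h0 : 0 < β := by linarith
  have hle := fun n => (h n).le
  obtain ⟨k, hk, hlt⟩ := h n
  have h1 := valSeq_sub_one_le hβ hle hk hlt
  have h2 := valSeq_le_one hβ hle (n + (k + 1))
  have h3 : 0 < β ^ (k + 1) := by positivity
  by_contra! hge
  have : 0 ≤ β ^ (k + 1) * (valSeq β (shiftn n z) - 1) := mul_nonneg h3.le (by linarith)
  linarith

/-- A sequence all of whose shifts are below the quasi-greedy expansion of `1` is greedy. -/
lemma greedy_of_lt {β : ℝ} (hβ : 1 < β) {z : ℕ → ℕ}
    (h : ∀ n, toLex (shiftn n z) < toLex (qdig β 1)) :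
    valSeq β z ∈ Ico (0 : ℝ) 1 ∧ gdig β (valSeq β z) = z := by
  have h0 : 0 < β := by linarith
  have hb := le_of_shiftn_le fun n => (h n).le
  have hmem : ∀ n, valSeq β (shiftn n z) ∈ Ico (0 : ℝ) 1 := fun n =>
    ⟨valSeq_nonneg hβ _, valSeq_lt_one hβ h n⟩
  have hE := isExp_valSeq hβ hb
  have hfl : ∀ n, β * valSeq β (shiftn n z) = z n + valSeq β (shiftn (n + 1) z) := by
    intro n
    have := hE n
    simp only at this
    linarith
  have hT : ∀ n, (Tbeta β)^[n] (valSeq β z) = valSeq β (shiftn n z) := by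
    intro n
    induction n with
    | zero => rfl
    | succ n ih =>
      rw [Function.iterate_succ_apply', ih, Tbeta, hfl, Int.fract_natCast_add,
        Int.fract_eq_self.2 (hmem (n + 1))]
  refine ⟨hmem 0, funext fun n => ?_⟩
  rw [gdig, hT, hfl, add_comm, Nat.floor_add_natCast (hmem (n + 1)).1,
    Nat.floor_eq_zero.2 (hmem (n + 1)).2, zero_add]

lemma valSeq_strictAnti {z : ℕ → ℕ} {M : ℕ} (hz : ∀ i, z i ≤ M) {i : ℕ} (hi : z i ≠ 0) :
    StrictAntiOn (fun β => valSeq β z) (Ioi 1) := by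
  intro β hβ β' hβ' hlt
  have hβ : 1 < β := hβ
  have h0 : 0 < β := by linarith
  have hi' : 0 < (z i : ℝ) := by exact_mod_cast Nat.pos_of_ne_zero hi
  refine Summable.tsum_lt_tsum (i := i) (fun j => ?_) ?_ (summable_valSeq hβ' hz)
    (summable_valSeq hβ hz)
  · have : β ^ (j + 1) ≤ β' ^ (j + 1) := pow_le_pow_left₀ h0.le hlt.le _
    simp only
    gcongr
  · have : β ^ (i + 1) < β' ^ (i + 1) := pow_lt_pow_left₀ hlt h0.le (by omega)
    gcongr

lemma qdig_ne_zero {β : ℝ} (hβ : 1 < β) {t : ℝ} (ht : t ∈ Ioc (0 : ℝ) 1) :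
    ∃ i, qdig β t i ≠ 0 := by
  by_contra! h
  have := valSeq_qdig hβ ht
  simp only [valSeq, h, Nat.cast_zero, zero_div, tsum_zero] at this
  linarith [ht.1]

lemma qdig_one_strictMono {β β' : ℝ} (hβ : 1 < β) (hlt : β < β') :
    toLex (qdig β 1) < toLex (qdig β' 1) := by
  refine lex_not_le.1 fun hle => ?_
  have hβ' : 1 < β' := by linarith
  have h1 := valSeq_le_one hβ (z := qdig β' 1)
    (fun n => (shiftn_qdig_le hβ' one_mem_Ioc n).trans hle) 0
  obtain ⟨i, hi⟩ := qdig_ne_zero hβ' one_mem_Ioc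
  have h2 := valSeq_strictAnti (qdig_le_ceil hβ' one_mem_Ioc) hi hβ hβ' hlt
  simp only [shiftn_zero, valSeq_qdig hβ' one_mem_Ioc] at h1 h2
  linarith

lemma valSeq_strictConvexOn {z : ℕ → ℕ} {M : ℕ} (hz : ∀ i, z i ≤ M) {i : ℕ} (hi : z i ≠ 0) :
    StrictConvexOn ℝ (Ioi 1) (fun β => valSeq β z) := by
  refine ⟨convex_Ioi 1, fun x hx y hy hxy a b ha hb hab => ?_⟩
  have hx0 : x ∈ Ioi (0 : ℝ) := zero_lt_one.trans (mem_Ioi.1 hx)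
  have hy0 : y ∈ Ioi (0 : ℝ) := zero_lt_one.trans (mem_Ioi.1 hy)
  have hm : a • x + b • y ∈ Ioi (1 : ℝ) := convex_Ioi (1 : ℝ) hx hy ha.le hb.le hab
  have hi' : 0 < (z i : ℝ) := by exact_mod_cast Nat.pos_of_ne_zero hi
  have key : ∀ j : ℕ, 1 / (a • x + b • y) ^ (j + 1) < a * (1 / x ^ (j + 1)) + b * (1 / y ^ (j + 1)) := by
    intro j
    have := (strictConvexOn_zpow (m := -((j + 1 : ℕ) : ℤ)) (by omega) (by omega)).2 hx0 hy0 hxy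
      ha hb hab
    simpa only [zpow_neg, zpow_natCast, one_div, smul_eq_mul] using this
  have e : a • valSeq x z + b • valSeq y z =
      ∑' j : ℕ, (a * ((z j : ℝ) / x ^ (j + 1)) + b * ((z j : ℝ) / y ^ (j + 1))) := by
    rw [Summable.tsum_add ((summable_valSeq hx hz).mul_left a) ((summable_valSeq hy hz).mul_left b),
      tsum_mul_left, tsum_mul_left]
    rfl
  simp only
  rw [e]
  refine Summable.tsum_lt_tsum (i := i) (fun j => ?_) ?_ (summable_valSeq hm hz)
    (((summable_valSeq hx hz).mul_left a).add ((summable_valSeq hy hz).mul_left b))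
  · have := mul_le_mul_of_nonneg_left (key j).le (Nat.cast_nonneg (z j))
    calc _ = (z j : ℝ) * (1 / (a • x + b • y) ^ (j + 1)) := by ring
      _ ≤ _ := this
      _ = _ := by ring
  · have := mul_lt_mul_of_pos_left (key i) hi'
    calc _ = (z i : ℝ) * (1 / (a • x + b • y) ^ (i + 1)) := by ring
      _ < _ := this
      _ = _ := by ring

lemma valSeq_analyticOnNhd {z : ℕ → ℕ} {M : ℕ} (hz : ∀ i, z i ≤ M) :
    AnalyticOnNhd ℝ (fun β => valSeq β z) (Ioi 1) := by
  set p : FormalMultilinearSeries ℝ ℝ ℝ := FormalMultilinearSeries.ofScalars ℝ fun n => (z n : ℝ)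
  have hr : ((1 : NNReal) : ENNReal) ≤ p.radius := by
    refine p.le_radius_of_bound M fun n => ?_
    simp only [p, FormalMultilinearSeries.ofScalars_norm, NNReal.coe_one, one_pow, mul_one,
      Real.norm_natCast]
    exact_mod_cast hz n
  have hp := (p.hasFPowerSeriesOnBall (lt_of_lt_of_le (by simp) hr)).analyticOnNhd
  have hsum : ∀ β, 1 < β → valSeq β z = β⁻¹ * p.sum β⁻¹ := by
    intro β hβ
    rw [FormalMultilinearSeries.sum, ← tsum_mul_left, valSeq]
    congr 1
    funext n
    simp only [p, FormalMultilinearSeries.ofScalars_apply_eq, smul_eq_mul, inv_pow, pow_succ]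
    rw [div_eq_mul_inv, mul_inv]
    ring
  intro β hβ
  have hβ' : (1 : ℝ) < β := hβ
  have hinv : AnalyticAt ℝ (fun x : ℝ => x⁻¹) β := analyticAt_inv (by linarith)
  have hmem : β⁻¹ ∈ Metric.eball (0 : ℝ) p.radius := by
    refine Metric.eball_subset_eball hr ?_
    rw [Metric.eball_coe]
    simp only [NNReal.coe_one, mem_ball_zero_iff, norm_inv, Real.norm_eq_abs]
    rw [abs_of_pos (by linarith)]
    exact inv_lt_one_of_one_lt₀ hβ'
  have h1 : AnalyticAt ℝ (fun x : ℝ => x⁻¹ * p.sum x⁻¹) β :=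
    hinv.mul ((hp _ hmem).comp_of_eq hinv rfl)
  refine h1.congr ?_
  filter_upwards [Ioi_mem_nhds hβ'] with x hx
  exact (hsum x hx).symm

lemma dimH_eq_zero_of_forall {A : Set ℝ} (h : ∀ s : ℝ, 0 < s → dimH A ≤ ENNReal.ofReal s) :
    dimH A = 0 := by
  by_contra hne
  obtain ⟨s, hs0, hs⟩ := ENNReal.lt_iff_exists_nnreal_btwn.1 (pos_iff_ne_zero.2 hne)
  have h1 := h s (by exact_mod_cast hs0)
  rw [ENNReal.ofReal_coe_nnreal] at h1
  exact absurd hs (not_lt.2 h1)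

/-- A set whose points are coded by blocks from a small finite set has small dimension. -/
lemma dimH_le_of_blocks {A : Set ℝ} {W : Set (List ℕ)} (hW : W.Finite) (blk : ℝ → ℕ → List ℕ)
    (hblk : ∀ x ∈ A, ∀ j, blk x j ∈ W) {C ρ s : ℝ} (hC : 0 ≤ C) (hρ : 0 < ρ) (hρ1 : ρ < 1)
    (hs : 0 < s) (h : ∀ x ∈ A, ∀ y ∈ A, ∀ k, 0 < k → (∀ j < k, blk x j = blk y j) →
      |x - y| ≤ C * ρ ^ k) (hcard : (W.ncard : ℝ) * ρ ^ s ≤ 1) :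
    dimH A ≤ ENNReal.ofReal s := by
  classical
  have : Fintype W := hW.fintype
  let cyl : ∀ k : ℕ, (Fin k → W) → Set ℝ := fun k w => {x ∈ A | ∀ j : Fin k, blk x j = w j}
  have hdiam : ∀ k, 0 < k → ∀ w, Metric.ediam (cyl k w) ≤ ENNReal.ofReal (C * ρ ^ k) := by
    intro k hk w
    refine Metric.ediam_le fun x hx y hy => ?_
    rw [edist_dist, Real.dist_eq]
    refine ENNReal.ofReal_le_ofReal (h x hx.1 y hy.1 k hk fun j hj => ?_)
    exact (hx.2 ⟨j, hj⟩).trans (hy.2 ⟨j, hj⟩).symm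
  have hlim : Tendsto (fun k : ℕ => ENNReal.ofReal (C * ρ ^ k)) atTop (𝓝 0) := by
    rw [← ENNReal.ofReal_zero]
    refine ENNReal.tendsto_ofReal ?_
    simpa using (tendsto_pow_atTop_nhds_zero_of_lt_one hρ.le hρ1).const_mul C
  have hm := Measure.hausdorffMeasure_le_liminf_sum (ι := fun k : ℕ => Fin k → W) s A
    (l := atTop) (fun k : ℕ => ENNReal.ofReal (C * ρ ^ k)) hlim cyl
    ((eventually_gt_atTop 0).mono fun k hk w => hdiam k hk w)
    (Eventually.of_forall fun k x hx => by
      simp only [mem_iUnion]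
      exact ⟨fun j => ⟨blk x j, hblk x hx j⟩, hx, fun j => rfl⟩)
  have hsum : ∀ᶠ k in atTop, ∑ w, Metric.ediam (cyl k w) ^ s ≤ ENNReal.ofReal (C ^ s) := by
    filter_upwards [eventually_gt_atTop 0] with k hk
    calc ∑ w, Metric.ediam (cyl k w) ^ s
        ≤ ∑ w : Fin k → W, ENNReal.ofReal (C * ρ ^ k) ^ s :=
          Finset.sum_le_sum fun w _ => ENNReal.rpow_le_rpow (hdiam k hk w) hs.le
      _ = ENNReal.ofReal ((W.ncard : ℝ) ^ k * (C * ρ ^ k) ^ s) := by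
          rw [Finset.sum_const, nsmul_eq_mul, ENNReal.ofReal_rpow_of_nonneg (by positivity) hs.le,
            ENNReal.ofReal_mul (by positivity)]
          congr 1
          rw [Finset.card_univ, Fintype.card_fun, Fintype.card_fin, ← Nat.cast_pow,
            ENNReal.ofReal_natCast, Set.ncard_eq_toFinset_card', Set.toFinset_card]
      _ ≤ ENNReal.ofReal (C ^ s) := by
          refine ENNReal.ofReal_le_ofReal ?_
          rw [Real.mul_rpow hC (by positivity), ← Real.rpow_natCast, ← Real.rpow_natCast,
            ← Real.rpow_mul hρ.le, mul_comm (k : ℝ) s, Real.rpow_mul hρ.le, Real.rpow_natCast,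
            Real.rpow_natCast]
          calc _ = C ^ s * ((W.ncard : ℝ) * ρ ^ s) ^ k := by rw [mul_pow]; ring
            _ ≤ C ^ s * 1 := by
              gcongr
              exact pow_le_one₀ (by positivity) hcard
            _ = C ^ s := mul_one _
  have hfin : Measure.hausdorffMeasure s A ≤ ENNReal.ofReal (C ^ s) := by
    refine hm.trans ?_
    refine (liminf_le_liminf hsum).trans ?_
    simp
  have := dimH_le_of_hausdorffMeasure_ne_top (s := A) (d := s.toNNReal)
    (by rw [Real.coe_toNNReal s hs.le]; exact (hfin.trans_lt ENNReal.ofReal_lt_top).ne)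
  exact this

lemma adm_rpre {a b z : ℕ → ℕ} (ha : ∀ n, toLex a ≤ toLex (shiftn n z))
    (hb : ∀ n, toLex (shiftn n z) ≤ toLex b) (m : ℕ) : Adm a b (rpre z m) := by
  induction m with
  | zero => trivial
  | succ m ih =>
    refine ⟨ih, fun k hk => ?_, fun k hk => ?_⟩
    · have hkm : k ≤ m := by simpa using hk.length_le
      obtain ⟨n, rfl⟩ := Nat.exists_eq_add_of_le' hkm
      have := lex_le_apply (ha n) (k := k) fun i hi => rpre_prefix_iff.1 hk i hi
      simpa [shiftn, Nat.add_comm] using this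
    · have hkm : k ≤ m := by simpa using hk.length_le
      obtain ⟨n, rfl⟩ := Nat.exists_eq_add_of_le' hkm
      have := lex_le_apply (hb n) (k := k) fun i hi => (rpre_prefix_iff.1 hk i hi).symm
      simpa [shiftn, Nat.add_comm] using this

lemma eq_of_blocks_eq {z z' : ℕ → ℕ} {n k : ℕ}
    (h : ∀ j < k, rpre (shiftn (j * n) z) n = rpre (shiftn (j * n) z') n) :
    ∀ i < k * n, z i = z' i := by
  intro i hi
  have hn : 0 < n := by
    rcases Nat.eq_zero_or_pos n with rfl | hn
    · simp at hi
    · exact hn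
  have h1 := rpre_inj_iff.1 (h (i / n) ((Nat.div_lt_iff_lt_mul hn).2 hi)) (i % n)
    (Nat.mod_lt i hn)
  simpa only [shiftn, Nat.mod_add_div'] using h1

lemma block_mem_admWords {a b z : ℕ → ℕ} (ha : ∀ n, toLex a ≤ toLex (shiftn n z))
    (hb : ∀ n, toLex (shiftn n z) ≤ toLex b) (m n : ℕ) :
    rpre (shiftn m z) n ∈ admWords a b n := by
  refine ⟨rpre_length _ _, adm_rpre (fun k => ?_) (fun k => ?_) n⟩
  · rw [shiftn_shiftn]; exact ha _
  · rw [shiftn_shiftn]; exact hb _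

lemma ZeroGrowth.dimH_eq_zero {a b : ℕ → ℕ} (hz : ZeroGrowth a b) {β : ℝ} (hβ : 1 < β) {A : Set ℝ}
    (hA : ∀ x ∈ A, x ∈ Ico (0 : ℝ) 1 ∧ (∀ n, toLex a ≤ toLex (shiftn n (gdig β x))) ∧
      ∀ n, toLex (shiftn n (gdig β x)) ≤ toLex b) : dimH A = 0 := by
  have h0 : 0 < β := by linarith
  refine dimH_eq_zero_of_forall fun s hs => ?_
  obtain ⟨n, hn, hcard⟩ := hz (β ^ s) (Real.one_lt_rpow hβ hs)
  have hβn : 1 < β ^ n := one_lt_pow₀ hβ (by omega)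
  refine dimH_le_of_blocks (admWords_finite a b n) (fun x j => rpre (shiftn (j * n) (gdig β x)) n)
    (fun x hx j => block_mem_admWords (hA x hx).2.1 (hA x hx).2.2 _ _) (C := 1)
    (ρ := (β ^ n)⁻¹) zero_le_one (by positivity) (inv_lt_one_of_one_lt₀ hβn) hs ?_ ?_
  · intro x hx y hy k _ hxy
    have h1 := (isExp_gdig h0 (hA y hy).1).diff_eq (isExp_gdig h0 (hA x hx).1)
      (k := k * n) fun i hi => (eq_of_blocks_eq hxy i hi).symm
    have h2 := iterate_Tbeta_mem β (hA x hx).1 (k * n)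
    have h3 := iterate_Tbeta_mem β (hA y hy).1 (k * n)
    simp only [Function.iterate_zero, id] at h1
    have h4 : β ^ (k * n) * |x - y| ≤ 1 := by
      rw [← abs_of_pos (by positivity : 0 < β ^ (k * n)), ← abs_mul, ← h1, abs_le]
      constructor <;> linarith [h2.1, h2.2, h3.1, h3.2]
    rw [one_mul, inv_pow, ← pow_mul, mul_comm n k, ← one_div, le_div_iff₀ (by positivity)]
    linarith
  · calc _ ≤ (β ^ s) ^ n * ((β ^ n)⁻¹) ^ s := by gcongr
      _ = 1 := by
        rw [Real.inv_rpow (by positivity), ← Real.rpow_natCast, ← Real.rpow_natCast,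
          ← Real.rpow_mul h0.le, ← Real.rpow_mul h0.le, mul_comm (n : ℝ) s]
        exact mul_inv_cancel₀ (by positivity)

lemma gdig_separated {β : ℝ} (hβ : 1 < β) {t : ℝ} {x x' : ℝ} (hx : x ∈ survivor β t)
    (hx' : x' ∈ survivor β t) {N k : ℕ} (hkN : k < N) (hne : gdig β x k ≠ gdig β x' k) :
    t ≤ β ^ N * |x - x'| := by
  classical
  have h0 : 0 < β := by linarith
  have hex : ∃ k, gdig β x k ≠ gdig β x' k := ⟨k, hne⟩
  obtain ⟨m, hm, hmk, hmin⟩ : ∃ m, gdig β x m ≠ gdig β x' m ∧ m ≤ k ∧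
      ∀ i < m, gdig β x i = gdig β x' i :=
    ⟨Nat.find hex, Nat.find_spec hex, Nat.find_min' hex hne,
      fun i hi => not_not.1 (Nat.find_min hex hi)⟩
  have hpow : β ^ (m + 1) ≤ β ^ N := pow_le_pow_right₀ hβ.le (by omega)
  have key : ∀ {x x' : ℝ}, x ∈ survivor β t → x' ∈ survivor β t →
      (∀ i < m, gdig β x i = gdig β x' i) → gdig β x m < gdig β x' m →
      t ≤ β ^ N * |x' - x| := by
    intro x x' hx hx' hmin hlt
    have h1 := (isExp_gdig h0 hx.1).gap (isExp_gdig h0 hx'.1) hmin hlt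
    have h2 := (iterate_Tbeta_mem β hx.1 (m + 1)).2
    have h3 := hx'.2 (m + 1)
    simp only [Function.iterate_zero, id] at h1
    calc t ≤ β ^ (m + 1) * (x' - x) := by linarith
      _ ≤ β ^ (m + 1) * |x' - x| := by gcongr; exact le_abs_self _
      _ ≤ _ := by gcongr
  rcases Nat.lt_or_gt_of_ne hm with hlt | hlt
  · rw [abs_sub_comm]
    exact key hx hx' hmin hlt
  · exact key hx' hx (fun i hi => (hmin i hi).symm) hlt

/-- A family of surviving points freely indexed by binary sequences forces positive dimension. -/
lemma dimH_survivor_ne_zero {β : ℝ} (hβ : 1 < β) {t : ℝ} (ht : 0 < t) {P : ℕ} (hP : 0 < P)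
    (x : (ℕ → Fin 2) → ℝ) (hx : ∀ c, x c ∈ survivor β t)
    (hdet : ∀ c c' n, (∀ i < (n + 1) * P, gdig β (x c) i = gdig β (x c') i) → c n = c' n) :
    dimH (survivor β t) ≠ 0 := by
  have h0 : 0 < β := by linarith
  have hinj : Function.Injective x := fun c c' h => funext fun n => hdet c c' n fun i _ => by rw [h]
  set f : ℝ → ℝ := Real.ofDigits ∘ Function.invFun x with hf
  have hfx : ∀ c, f (x c) = Real.ofDigits c := fun c => by
    simp only [hf, Function.comp_apply, Function.leftInverse_invFun hinj c]
  have hlog : 0 < Real.log β := Real.log_pos hβ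
  set r : NNReal := (Real.log 2 / (P * Real.log β)).toNNReal with hr
  have hrpos : 0 < Real.log 2 / (P * Real.log β) := by
    have := Real.log_pos one_lt_two
    positivity
  have hrc : (r : ℝ) = Real.log 2 / (P * Real.log β) := Real.coe_toNNReal _ hrpos.le
  have hr0 : 0 < (r : ℝ) := by rw [hrc]; exact hrpos
  have hβr : (β ^ P) ^ (r : ℝ) = 2 := by
    rw [← Real.rpow_natCast, ← Real.rpow_mul h0.le, hrc, Real.rpow_def_of_pos h0]
    have : Real.log β * (P * (Real.log 2 / (P * Real.log β))) = Real.log 2 := by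
      field_simp
    rw [this, Real.exp_log two_pos]
  have hH : HolderOnWith (2 * (t⁻¹ ^ (r : ℝ))).toNNReal r f (range x) := by
    rintro _ ⟨c, rfl⟩ _ ⟨c', rfl⟩
    rw [hfx, hfx]
    by_cases hcc : c = c'
    · subst hcc; simp
    classical
    have hex : ∃ n, c n ≠ c' n := Function.ne_iff.1 hcc
    set n := Nat.find hex
    have hn : c n ≠ c' n := Nat.find_spec hex
    have h1 : |Real.ofDigits c - Real.ofDigits c'| ≤ (((2 : ℕ) : ℝ) ^ n)⁻¹ :=
      Real.abs_ofDigits_sub_ofDigits_le fun i hi => not_not.1 (Nat.find_min hex hi)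
    have h2 : ∃ i < (n + 1) * P, gdig β (x c) i ≠ gdig β (x c') i := by
      by_contra! hall
      exact hn (hdet c c' n hall)
    obtain ⟨i, hi, hne⟩ := h2
    have h3 := gdig_separated hβ (hx c) (hx c') hi hne
    have h4 : t ^ (r : ℝ) ≤ 2 ^ (n + 1) * |x c - x c'| ^ (r : ℝ) := by
      calc t ^ (r : ℝ) ≤ (β ^ ((n + 1) * P) * |x c - x c'|) ^ (r : ℝ) := by gcongr
        _ = 2 ^ (n + 1) * |x c - x c'| ^ (r : ℝ) := by
          rw [Real.mul_rpow (by positivity) (abs_nonneg _)]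
          congr 1
          rw [mul_comm, pow_mul, ← Real.rpow_natCast (β ^ P), ← Real.rpow_mul (by positivity),
            mul_comm, Real.rpow_mul (by positivity), hβr, Real.rpow_natCast]
    rw [edist_dist, edist_dist, Real.dist_eq, Real.dist_eq,
      ENNReal.ofReal_rpow_of_nonneg (abs_nonneg _) hr0.le]
    change _ ≤ ENNReal.ofReal _ * _
    rw [← ENNReal.ofReal_mul (by positivity)]
    refine ENNReal.ofReal_le_ofReal (h1.trans ?_)
    rw [Real.inv_rpow ht.le, mul_assoc, inv_mul_eq_div, mul_div_assoc', le_div_iff₀ (by positivity),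
      inv_mul_le_iff₀ (by positivity)]
    push_cast
    calc _ ≤ _ := h4
      _ = _ := by ring
  intro hzero
  have hsub : Ico (0 : ℝ) 1 ⊆ f '' range x := fun y hy =>
    ⟨x (Real.digits y 2), ⟨_, rfl⟩, by rw [hfx]; exact Real.ofDigits_digits one_lt_two hy⟩
  have h1 : dimH (Ico (0 : ℝ) 1) = 1 := by
    rw [Real.dimH_of_nonempty_interior]
    · simp
    · simp
  have h2 : dimH (range x) = 0 := by
    refine le_antisymm ?_ zero_le
    rw [← hzero]
    exact dimH_mono (range_subset_iff.2 hx)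
  have h3 := (dimH_mono hsub).trans (hH.dimH_image_le (by exact_mod_cast hr0))
  rw [h1, h2] at h3
  simp at h3

lemma rpre_eq_of_getD {l : List ℕ} {w : ℕ → ℕ} (h : ∀ i < l.length, w i = l.reverse.getD i 0) :
    rpre w l.length = l := by
  induction l with
  | nil => rfl
  | cons d l ih =>
    rw [List.length_cons, rpre, ih fun i hi => ?_]
    · rw [h l.length (by simp)]
      simp
    · rw [h i (by simp; omega), List.reverse_cons, List.getD_append _ _ _ _ (by simpa using hi)]

lemma exists_concat {P : ℕ} (hP : 0 < P) (B : Fin 2 → List ℕ) (hB : ∀ e, (B e).length = P) :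
    ∃ z : (ℕ → Fin 2) → ℕ → ℕ, ∀ c n, rpre (shiftn (n * P) (z c)) P = B (c n) := by
  refine ⟨fun c i => (B (c (i / P))).reverse.getD (i % P) 0, fun c n => ?_⟩
  have := rpre_eq_of_getD (l := B (c n))
    (w := shiftn (n * P) fun i => (B (c (i / P))).reverse.getD (i % P) 0) fun i hi => by
      rw [hB] at hi
      simp only [shiftn]
      rw [Nat.add_mul_div_right _ _ hP, Nat.add_mul_mod_self_right, Nat.div_eq_of_lt hi,
        Nat.mod_eq_of_lt hi, zero_add]
  rwa [hB] at this

lemma HasHorseshoe.exists_family {a b : ℕ → ℕ} (hH : HasHorseshoe a b) :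
    ∃ (P M : ℕ) (z : (ℕ → Fin 2) → ℕ → ℕ), 0 < P ∧
      (∀ c n, ∃ k ≤ M, (∀ i < k, a i = shiftn n (z c) i) ∧ a k < shiftn n (z c) k) ∧
      (∀ c n, toLex (shiftn n (z c)) < toLex b) ∧
      ∀ c c' n, (∀ i < (n + 1) * P, z c i = z c' i) → c n = c' n := by
  obtain ⟨u, p, q, hpq, hlen, hp, hq, hsp, hsq⟩ := hH
  have hP : 0 < p.length := by
    rcases Nat.eq_zero_or_pos p.length with h | h
    · exact absurd ((List.length_eq_zero_iff.1 h).trans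
        (List.length_eq_zero_iff.1 (hlen ▸ h)).symm) hpq
    · exact h
  set P := p.length
  set B : Fin 2 → List ℕ := ![p, q] with hBdef
  have hBinj : Function.Injective B := by
    intro e e' h
    fin_cases e <;> fin_cases e'
    · rfl
    · exact absurd h hpq
    · exact absurd h.symm hpq
    · rfl
  have hBlen : ∀ e, (B e).length = P := by
    intro e; fin_cases e
    · rfl
    · exact hlen.symm
  have hBadm : ∀ e, Adm a b (B e ++ u) := by
    intro e; fin_cases e
    · exact hp
    · exact hq
  have hBst : ∀ e, st a b (B e ++ u) = u := by
    intro e; fin_cases e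
    · exact hsp
    · exact hsq
  have hu : Adm a b u := adm_of_append hp
  have hstu : st a b u = u := by
    conv_lhs => rw [← hsp, ← List.nil_append (st a b (p ++ u)), st_append, List.nil_append, hsp]
  obtain ⟨z, hz⟩ := exists_concat hP B hBlen
  have hmul : ∀ c n, Adm a b (rpre (z c) (n * P) ++ u) ∧ st a b (rpre (z c) (n * P) ++ u) = u := by
    intro c n
    induction n with
    | zero => simpa [rpre] using ⟨hu, hstu⟩
    | succ n ih =>
      rw [Nat.succ_mul, rpre_add, hz, List.append_assoc]
      refine ⟨adm_append_of_st ih.1 ?_, ?_⟩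
      · rw [ih.2]; exact hBadm _
      · rw [← st_append, ih.2]; exact hBst _
  have hadm : ∀ c m, Adm a b (rpre (z c) m ++ u) := by
    intro c m
    obtain ⟨k, hk⟩ := Nat.exists_eq_add_of_le (Nat.le_mul_of_pos_right m hP)
    have := (hmul c m).1
    rw [hk, rpre_add, List.append_assoc] at this
    exact adm_of_append this
  have hlenst : ∀ c m y, y <+: rpre (z c) m ++ u → IsPre a b y → y.length ≤ P + u.length := by
    intro c m y hy hpre
    have h1 := (prefix_st hy hpre).length_le
    have hm : m = m / P * P + m % P := (Nat.div_add_mod' m P).symm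
    rw [hm, rpre_add, List.append_assoc, ← st_append, (hmul c (m / P)).2] at h1
    refine h1.trans ((st_prefix _ _ _).length_le.trans ?_)
    simp only [List.length_append, rpre_length]
    have := Nat.mod_lt m hP
    omega
  have hpre : ∀ c n k (e : ℕ → ℕ), (∀ i < k, shiftn n (z c) i = e i) →
      rpre e k <+: rpre (z c) (n + k) ++ u := fun c n k e h =>
    (rpre_prefix_iff.2 h).trans (List.prefix_append _ _)
  have hle : ∀ c n, toLex a ≤ toLex (shiftn n (z c)) := fun c n =>
    lex_le_of_apply fun k hk => by
      have := (hadm c (n + k + 1)).2.1 k (hpre c n k a hk)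
      simpa [shiftn, Nat.add_comm] using this
  have hge : ∀ c n, toLex (shiftn n (z c)) ≤ toLex b := fun c n =>
    lex_le_of_apply fun k hk => by
      have := (hadm c (n + k + 1)).2.2 k (hpre c n k b fun i hi => (hk i hi).symm)
      simpa [shiftn, Nat.add_comm] using this
  refine ⟨P, P + u.length, z, hP, fun c n => ?_, fun c n => ?_, fun c c' n h => ?_⟩
  · rcases (hle c n).eq_or_lt with heq | ⟨k, hk, hlt⟩
    · have h1 := hlenst c _ _ (hpre c n (P + u.length + 1) a fun i _ => by
        rw [← toLex.injective heq]) (rpre_isPre_left a b _)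
      simp at h1
    · refine ⟨k, ?_, hk, hlt⟩
      simpa using hlenst c _ _ (hpre c n k a fun i hi => (hk i hi).symm) (rpre_isPre_left a b _)
  · rcases (hge c n).eq_or_lt with heq | hlt
    · have h1 := hlenst c _ _ (hpre c n (P + u.length + 1) b fun i _ => by
        rw [toLex.injective heq]) (rpre_isPre_right a b _)
      simp at h1
    · exact hlt
  · apply hBinj
    rw [← hz, ← hz, rpre_inj_iff]
    intro i hi
    exact h _ (by rw [Nat.succ_mul]; omega)

lemma HasHorseshoe.exists_dimH_ne_zero {β : ℝ} (hβ : 1 < β) {t : ℝ} (ht : t ∈ Ioc (0 : ℝ) 1)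
    (hH : HasHorseshoe (qdig β t) (qdig β 1)) : ∃ t' > t, dimH (survivor β t') ≠ 0 := by
  have h0 : 0 < β := by linarith
  have ht0 := ht.1
  obtain ⟨P, M, z, hP, hlow, hup, hdet⟩ := hH.exists_family
  have hgr := fun c => greedy_of_lt hβ (hup c)
  refine ⟨t + t / β ^ (M + 1), by linarith [div_pos ht0 (pow_pos h0 (M + 1))],
    dimH_survivor_ne_zero hβ (by positivity) hP (fun c => valSeq β (z c)) (fun c => ?_)
    (fun c c' n h => hdet c c' n (by simpa only [(hgr _).2] using h))⟩
  have hge : ∀ n, t ≤ (Tbeta β)^[n] (valSeq β (z c)) := fun n => by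
    rw [le_iterate_iff hβ (hgr c).1 ht, (hgr c).2]
    obtain ⟨k, _, hk, hlt⟩ := hlow c n
    exact (show toLex (qdig β t) < toLex (shiftn n (z c)) from ⟨k, hk, hlt⟩).le
  refine ⟨(hgr c).1, fun n => ?_⟩
  obtain ⟨k, hkM, hk, hlt⟩ := hlow c n
  rw [← (hgr c).2, shiftn_gdig] at hk hlt
  have h1 := gdig_gap hβ (iterate_Tbeta_mem β (hgr c).1 n) ht hk hlt
  rw [← Function.iterate_add_apply] at h1
  have h2 := hge (k + 1 + n)
  have h3 := hge n
  have h4 : β ^ (k + 1) ≤ β ^ (M + 1) := pow_le_pow_right₀ hβ.le (by omega)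
  have h5 : t / β ^ (M + 1) ≤ (Tbeta β)^[n] (valSeq β (z c)) - t := by
    rw [div_le_iff₀ (by positivity)]
    calc t ≤ β ^ (k + 1) * ((Tbeta β)^[n] (valSeq β (z c)) - t) := h2.trans h1
      _ ≤ β ^ (M + 1) * ((Tbeta β)^[n] (valSeq β (z c)) - t) := by
        apply mul_le_mul_of_nonneg_right h4; linarith
      _ = _ := mul_comm _ _
  linarith

lemma survivor_antitone (β : ℝ) : Antitone (survivor β) :=
  fun _ _ h _ hx => ⟨hx.1, fun n => h.trans (hx.2 n)⟩

lemma bddBelow_tau (β : ℝ) : BddBelow {t : ℝ | 0 < t ∧ dimH (survivor β t) = 0} :=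
  ⟨0, fun _ ht => ht.1.le⟩

lemma one_mem_tau (β : ℝ) : (1 : ℝ) ∈ {t : ℝ | 0 < t ∧ dimH (survivor β t) = 0} := by
  refine ⟨one_pos, ?_⟩
  have : survivor β 1 = ∅ := by
    ext x
    simp only [mem_empty_iff_false, iff_false]
    exact fun hx => absurd (hx.2 0) (not_le.2 hx.1.2)
  rw [this, dimH_empty]

lemma tau_le_one (β : ℝ) : tau β ≤ 1 := csInf_le (bddBelow_tau β) (one_mem_tau β)

lemma le_tau {β t : ℝ} (h : dimH (survivor β t) ≠ 0) : t ≤ tau β := by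
  refine le_csInf ⟨1, one_mem_tau β⟩ fun s hs => ?_
  by_contra! hlt
  exact h (le_antisymm ((dimH_mono (survivor_antitone β hlt.le)).trans hs.2.le) zero_le)

lemma dimH_survivor_of_tau_lt {β t : ℝ} (h : tau β < t) : dimH (survivor β t) = 0 := by
  by_contra hne
  exact absurd (le_tau hne) (not_le.2 h)

lemma dimH_survivor_of_lt_tau {β t : ℝ} (h0 : 0 < t) (h : t < tau β) :
    dimH (survivor β t) ≠ 0 := fun h' => notMem_of_lt_csInf h (bddBelow_tau β) ⟨h0, h'⟩

/-- Binary sequences whose ones sit at multiples of `K`, with a one at each multiple of `2K`. -/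
def sparseSeq (K : ℕ) (c : ℕ → Fin 2) (i : ℕ) : ℕ :=
  if i % (2 * K) = 0 ∨ i % (2 * K) = K ∧ c (i / (2 * K)) = 1 then 1 else 0

lemma dvd_of_sparseSeq_ne_zero {K : ℕ} {c : ℕ → Fin 2} {i : ℕ} (h : sparseSeq K c i ≠ 0) :
    K ∣ i := by
  unfold sparseSeq at h
  have h1 : K ∣ i % (2 * K) := by
    split_ifs at h with h'
    · rcases h' with h' | h'
      · rw [h']; exact dvd_zero K
      · rw [h'.1]
    · exact absurd rfl h
  rw [← Nat.mod_add_div i (2 * K)]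
  exact dvd_add h1 (Dvd.intro_left 2 rfl |>.mul_right _)

lemma exists_sparseSeq_eq_one {K : ℕ} (hK : 0 < K) (c : ℕ → Fin 2) (n : ℕ) :
    ∃ i < 2 * K, sparseSeq K c (i + n) = 1 := by
  refine ⟨(2 * K - n % (2 * K)) % (2 * K), Nat.mod_lt _ (by omega), ?_⟩
  have : ((2 * K - n % (2 * K)) % (2 * K) + n) % (2 * K) = 0 := by
    rw [Nat.mod_add_mod]
    have h1 := Nat.mod_lt n (show 0 < 2 * K by omega)
    conv_lhs => rw [← Nat.mod_add_div n (2 * K)]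
    rw [Nat.mod_add_mod]
    have h2 : 2 * K - n % (2 * K) + (n % (2 * K) + 2 * K * (n / (2 * K))) =
        2 * K + 2 * K * (n / (2 * K)) := by omega
    simp [Nat.add_mod, h2]
  simp [sparseSeq, this]

lemma sparseSeq_det {K : ℕ} (hK : 0 < K) {c c' : ℕ → Fin 2} {n : ℕ}
    (h : ∀ i < (n + 1) * (2 * K), sparseSeq K c i = sparseSeq K c' i) : c n = c' n := by
  have h1 : ∀ c : ℕ → Fin 2, sparseSeq K c (K + n * (2 * K)) = if c n = 1 then 1 else 0 := by
    intro c
    rw [sparseSeq, Nat.add_mul_mod_self_right, Nat.add_mul_div_right _ _ (by omega),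
      Nat.mod_eq_of_lt (by omega), Nat.div_eq_of_lt (by omega), zero_add]
    simp [hK.ne']
  have h2 := h (K + n * (2 * K)) (by rw [Nat.add_mul, one_mul]; omega)
  rw [h1, h1] at h2
  split_ifs at h2 with h3 h4 h4 <;> omega

lemma sparseSeq_lt {β : ℝ} (hβ : 1 < β) {k : ℕ} (hk1 : 0 < k) (hk : qdig β 1 k ≠ 0)
    (c : ℕ → Fin 2) (n : ℕ) : toLex (shiftn n (sparseSeq (k + 1) c)) < toLex (qdig β 1) := by
  refine lex_not_le.1 fun hle => ?_
  have h0 : qdig β 1 0 ≠ 0 := by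
    have h1 : 1 < ⌈β⌉₊ := Nat.lt_ceil.2 (by simpa using hβ)
    simp only [qdig, Function.iterate_zero, id, mul_one]
    omega
  have hz1 : ∀ i, sparseSeq (k + 1) c i ≤ 1 := fun i => by unfold sparseSeq; split_ifs <;> simp
  have h1 : qdig β 1 0 ≤ sparseSeq (k + 1) c n := by
    have := lex_le_apply hle (k := 0) (by simp)
    simpa [shiftn] using this
  have h2 := hz1 n
  have hdvd : k + 1 ∣ n := dvd_of_sparseSeq_ne_zero (c := c) (by omega)
  have hzero : ∀ i, 0 < i → i ≤ k → sparseSeq (k + 1) c (i + n) = 0 := by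
    intro i hi hik
    by_contra hne
    have := (Nat.dvd_add_left hdvd).1 (dvd_of_sparseSeq_ne_zero hne)
    exact absurd (Nat.le_of_dvd hi this) (by omega)
  have key : ∀ i ≤ k, qdig β 1 i = shiftn n (sparseSeq (k + 1) c) i := by
    intro i
    induction i using Nat.strong_induction_on with
    | _ i ih =>
      intro hik
      rcases Nat.eq_zero_or_pos i with rfl | hi
      · simp only [shiftn, zero_add]; omega
      · have h3 := lex_le_apply hle (k := i) fun j hj => (ih j hj (by omega)).symm
        simp only [shiftn, hzero i hi hik] at h3 ⊢
        omega
  have := key k le_rfl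
  simp only [shiftn, hzero k hk1 le_rfl] at this
  exact hk this

lemma iterate_Tbeta_le {β : ℝ} (hβ : 1 < β) {x : ℝ} (hx : x ∈ Ico (0 : ℝ) 1) (n : ℕ) :
    (Tbeta β)^[n] x ≤ β ^ n * x := by
  induction n with
  | zero => simp
  | succ n ih =>
    have h1 := isExp_gdig (by linarith : 0 < β) hx n
    simp only at h1
    rw [h1, pow_succ', mul_assoc]
    have : β * (Tbeta β)^[n] x ≤ β * (β ^ n * x) := by gcongr
    have h2 : (0 : ℝ) ≤ gdig β x n := Nat.cast_nonneg _
    linarith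

lemma inv_pow_le_of_gdig_ne_zero {β : ℝ} (hβ : 1 < β) {x : ℝ} (hx : x ∈ Ico (0 : ℝ) 1) {i N : ℕ}
    (hi : i < N) (h : gdig β x i ≠ 0) : 1 / β ^ N ≤ x := by
  have h0 : 0 < β := by linarith
  have h1 : 1 ≤ β * (Tbeta β)^[i] x := Nat.floor_pos.1 (Nat.pos_of_ne_zero h)
  rw [div_le_iff₀ (by positivity)]
  calc (1 : ℝ) ≤ β * (β ^ i * x) := h1.trans (by gcongr; exact iterate_Tbeta_le hβ hx i)
    _ = x * β ^ (i + 1) := by ring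
    _ ≤ x * β ^ N := by
      have : β ^ (i + 1) ≤ β ^ N := pow_le_pow_right₀ hβ.le (by omega)
      exact mul_le_mul_of_nonneg_left this hx.1

lemma tau_pos {β : ℝ} (hβ : 1 < β) : 0 < tau β := by
  have h0 : 0 < β := by linarith
  obtain ⟨i, hi⟩ := qdig_ne_zero hβ (iterate_Qbeta_mem h0 one_mem_Ioc 1)
  rw [← shiftn_qdig] at hi
  obtain ⟨K, hK⟩ : ∃ K, K = i + 1 + 1 := ⟨_, rfl⟩
  have hK0 : 0 < K := by omega
  have hgr : ∀ c, valSeq β (sparseSeq K c) ∈ Ico (0 : ℝ) 1 ∧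
      gdig β (valSeq β (sparseSeq K c)) = sparseSeq K c := fun c =>
    greedy_of_lt hβ (hK ▸ sparseSeq_lt hβ (Nat.succ_pos i) hi c)
  have hpos : 0 < 1 / β ^ (2 * K) := by positivity
  refine hpos.trans_le (le_tau (dimH_survivor_ne_zero hβ hpos (P := 2 * K) (by omega)
    (fun c => valSeq β (sparseSeq K c)) (fun c => ⟨(hgr c).1, fun n => ?_⟩)
    (fun c c' n h => sparseSeq_det hK0 (by simpa only [(hgr _).2] using h))))
  obtain ⟨j, hj, hone⟩ := exists_sparseSeq_eq_one hK0 c n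
  refine inv_pow_le_of_gdig_ne_zero hβ (iterate_Tbeta_mem β (hgr c).1 n) hj ?_
  rw [← shiftn_gdig, (hgr c).2, shiftn, hone]
  exact one_ne_zero

lemma tau_mem {β : ℝ} (hβ : 1 < β) : tau β ∈ Ioc (0 : ℝ) 1 := ⟨tau_pos hβ, tau_le_one β⟩

lemma exists_lt_tau_agree {β : ℝ} (hβ : 1 < β) (L : ℕ) :
    ∃ t, 0 < t ∧ t < tau β ∧ ∀ i < L, qdig β t i = qdig β (tau β) i := by
  obtain ⟨δ, hδ, h⟩ := exists_qdig_agree hβ (tau_mem hβ) L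
  obtain ⟨t, ht1, ht2⟩ := exists_between (max_lt (tau_pos hβ) (by linarith : tau β - δ < tau β))
  exact ⟨t, (le_max_left _ _).trans_lt ht1, ht2, h t ((le_max_right _ _).trans_lt ht1) ht2.le⟩

lemma qdig_tau_le_shiftn {β : ℝ} (hβ : 1 < β) (n : ℕ) :
    toLex (qdig β (tau β)) ≤ toLex (shiftn n (qdig β (tau β))) := by
  have h0 : 0 < β := by linarith
  by_contra hle
  obtain ⟨k, hk, hlt⟩ := lex_not_le.1 hle
  obtain ⟨t, ht0, htt, hag⟩ := exists_lt_tau_agree hβ (n + k + 1)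
  have htm : t ∈ Ioc (0 : ℝ) 1 := ⟨ht0, htt.le.trans (tau_le_one β)⟩
  have hsub : survivor β t ⊆ survivor β (tau β + t / β ^ (n + k + 1)) := by
    refine fun x hx => ⟨hx.1, fun m => ?_⟩
    have hmem := iterate_Tbeta_mem β hx.1 m
    have hge := (le_iterate_iff hβ hx.1 htm m).1 (hx.2 m)
    have hex : ∃ j, ¬ (j < n + k + 1 → qdig β t j = gdig β ((Tbeta β)^[m] x) j) := by
      by_contra! hall
      have hge2 := (le_iterate_iff hβ hx.1 htm (n + m)).1 (hx.2 (n + m))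
      rw [← shiftn_shiftn, shiftn_gdig β x m] at hge2
      have hdig : ∀ i ≤ k, shiftn n (gdig β ((Tbeta β)^[m] x)) i =
          shiftn n (qdig β (tau β)) i := fun i hi => by
        simp only [shiftn]
        rw [← hall (i + n) (by omega), hag (i + n) (by omega)]
      have h1 := lex_le_apply hge2 (k := k) fun i hi => by
        rw [hdig i hi.le, hag i (by omega)]
        exact hk i hi
      rw [hdig k le_rfl, hag k (by omega)] at h1
      exact absurd hlt (not_lt.2 h1)
    classical
    obtain ⟨j, hj, hmin⟩ : ∃ j, ¬ (j < n + k + 1 → qdig β t j = gdig β ((Tbeta β)^[m] x) j) ∧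
        ∀ i < j, (i < n + k + 1 → qdig β t i = gdig β ((Tbeta β)^[m] x) i) :=
      ⟨Nat.find hex, Nat.find_spec hex, fun i hi => not_not.1 (Nat.find_min hex hi)⟩
    obtain ⟨hjL, hjne⟩ := Classical.not_imp.1 hj
    have hmin' : ∀ i < j, qdig β t i = gdig β ((Tbeta β)^[m] x) i := fun i hi =>
      hmin i hi (by omega)
    rw [shiftn_gdig] at hge
    have hjlt := lt_of_le_of_ne (lex_le_apply hge (k := j) fun i hi => (hmin' i hi).symm) hjne
    have h1 := gdig_gap hβ hmem (tau_mem hβ) (k := j)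
      (fun i hi => by rw [← hag i (by omega), hmin' i hi]) (by rwa [← hag j hjL])
    rw [← Function.iterate_add_apply] at h1
    have h2 := (hx.2 _).trans h1
    have h3 : 0 ≤ (Tbeta β)^[m] x - tau β :=
      nonneg_of_mul_nonneg_right (ht0.le.trans h2) (by positivity)
    have h4 : β ^ (j + 1) ≤ β ^ (n + k + 1) := pow_le_pow_right₀ hβ.le (by omega)
    have h5 : t / β ^ (n + k + 1) ≤ (Tbeta β)^[m] x - tau β := by
      rw [div_le_iff₀ (by positivity), mul_comm]
      exact h2.trans (mul_le_mul_of_nonneg_right h4 h3)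
    linarith
  have hlt' : tau β < tau β + t / β ^ (n + k + 1) := by
    have : 0 < t / β ^ (n + k + 1) := by positivity
    linarith
  exact dimH_survivor_of_lt_tau ht0 htt
    (le_antisymm ((dimH_mono hsub).trans (dimH_survivor_of_tau_lt hlt').le) zero_le)

lemma zeroGrowth_tau {β : ℝ} (hβ : 1 < β) : ZeroGrowth (qdig β (tau β)) (qdig β 1) := by
  refine zeroGrowth_of_not_hasHorseshoe (qdig_tau_le_shiftn hβ) (shiftn_qdig_le hβ one_mem_Ioc)
    fun hH => ?_
  obtain ⟨t', ht', hne⟩ := hH.exists_dimH_ne_zero hβ (tau_mem hβ)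
  exact hne (dimH_survivor_of_tau_lt ht')

lemma ZeroGrowth.not_of_lt_tau {a b : ℕ → ℕ} {β t : ℝ} (hβ : 1 < β) (ht0 : 0 < t) (ht : t < tau β)
    (ha : toLex a ≤ toLex (qdig β t))
    (hb : ∀ x ∈ survivor β t, ∀ n, toLex (shiftn n (gdig β x)) ≤ toLex b) : ¬ ZeroGrowth a b := by
  intro hz
  refine dimH_survivor_of_lt_tau ht0 ht (hz.dimH_eq_zero hβ fun x hx => ⟨hx.1, fun n => ?_, hb x hx⟩)
  exact ha.trans ((le_iterate_iff hβ hx.1 ⟨ht0, ht.le.trans (tau_le_one β)⟩ n).1 (hx.2 n))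

lemma exists_lt_tau_of_lt {a : ℕ → ℕ} {β : ℝ} (hβ : 1 < β)
    (h : toLex a < toLex (qdig β (tau β))) (L : ℕ) :
    ∃ t, 0 < t ∧ t < tau β ∧ toLex a < toLex (qdig β t) ∧
      ∀ i < L, qdig β t i = qdig β (tau β) i := by
  obtain ⟨k, hk, hlt⟩ := h
  obtain ⟨t, ht0, ht, hag⟩ := exists_lt_tau_agree hβ (max (k + 1) L)
  refine ⟨t, ht0, ht, ⟨k, fun i hi => (hk i hi).trans (hag i ?_).symm, ?_⟩, fun i hi => hag i ?_⟩
  · exact lt_max_of_lt_left (by omega)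
  · exact lt_of_lt_of_eq hlt (hag k (lt_max_of_lt_left (by omega))).symm
  · exact lt_max_of_lt_right hi

lemma qdig_tau_monotoneOn : MonotoneOn (fun β => toLex (qdig β (tau β))) (Ioi 1) := by
  intro β₁ h₁ β₂ h₂ hle
  rcases hle.eq_or_lt with rfl | hlt
  · exact le_rfl
  by_contra hnle
  obtain ⟨t, ht0, ht, hat, -⟩ := exists_lt_tau_of_lt h₁ (lex_not_le.1 hnle) 0
  refine ZeroGrowth.not_of_lt_tau h₁ ht0 ht hat.le (fun x hx n => ?_) (zeroGrowth_tau h₂)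
  exact (shiftn_gdig_lt h₁ hx.1 n).le.trans (qdig_one_strictMono h₁ hlt).le

lemma lex_agree_of_le_of_le {x y z : ℕ → ℕ} {L : ℕ} (hxy : toLex x ≤ toLex y)
    (hyz : toLex y ≤ toLex z) (h : ∀ i < L, x i = z i) : ∀ i < L, y i = x i := by
  intro i
  induction i using Nat.strong_induction_on with
  | _ i ih =>
    intro hi
    have h1 := lex_le_apply hxy (k := i) fun j hj => ih j hj (hj.trans hi)
    have h2 := lex_le_apply hyz (k := i) fun j hj => by
      rw [ih j hj (hj.trans hi), h j (hj.trans hi)]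
    have h3 := h i hi
    omega

/-- A monotone sequence-valued function has locally constant prefixes off a countable set. -/
lemma exists_countable_eventually_agree {F : ℝ → ℕ → ℕ} {S : Set ℝ}
    (hS : IsOpen S) (hF : MonotoneOn (fun β => toLex (F β)) S) :
    ∃ N : Set ℝ, N.Countable ∧ ∀ β ∈ S, β ∉ N → ∀ L : ℕ,
      ∀ᶠ β' in 𝓝 β, ∀ i < L, F β' i = F β i := by
  set A : List ℕ → Set ℝ := fun w => {β | β ∈ S ∧ rpre (F β) w.length = w} with hA
  refine ⟨⋃ w, ({β | IsLeast (A w) β} ∪ {β | IsGreatest (A w) β}), ?_, ?_⟩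
  · refine countable_iUnion fun w => Countable.union ?_ ?_
    · exact Set.Subsingleton.countable fun x hx y hy => hx.unique hy
    · exact Set.Subsingleton.countable fun x hx y hy => hx.unique hy
  · intro β hβ hN L
    have hN' : ∀ w, ¬ IsLeast (A w) β ∧ ¬ IsGreatest (A w) β := by
      simpa only [mem_iUnion, mem_union, mem_ofPred_eq, not_exists, not_or] using hN
    have hmem : ∀ β', β' ∈ A (rpre (F β) L) ↔ β' ∈ S ∧ ∀ i < L, F β' i = F β i := by
      intro β'
      simp only [hA, mem_ofPred_eq, rpre_length, rpre_inj_iff]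
    have hβA : β ∈ A (rpre (F β) L) := (hmem β).2 ⟨hβ, fun _ _ => rfl⟩
    obtain ⟨h1, h2⟩ := hN' (rpre (F β) L)
    obtain ⟨x, hxA, hx⟩ : ∃ x ∈ A (rpre (F β) L), x < β := by
      by_contra! hall
      exact h1 ⟨hβA, hall⟩
    obtain ⟨y, hyA, hy⟩ : ∃ y ∈ A (rpre (F β) L), β < y := by
      by_contra! hall
      exact h2 ⟨hβA, hall⟩
    rw [hmem] at hxA hyA
    filter_upwards [Ioo_mem_nhds hx hy, hS.mem_nhds hβ] with β' hxy hβ' i hi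
    rw [← hxA.2 i hi]
    exact lex_agree_of_le_of_le (hF hxA.1 hβ' hxy.1.le) (hF hβ' hyA.1 hxy.2.le)
      (fun i hi => by rw [hxA.2 i hi, hyA.2 i hi]) i hi

lemma qdig_tau_eq_of_agree {a b : ℕ → ℕ} {β₁ β₂ : ℝ} (h₁ : 1 < β₁) (hlt : β₁ < β₂) {n k : ℕ}
    (hb₁ : ∀ i < n + k + 1, qdig β₁ 1 i = b i) (hb₂ : ∀ i < n + k + 1, qdig β₂ 1 i = b i)
    (ha₂ : ∀ i < k + 1, qdig β₂ (tau β₂) i = a i) (hk : ∀ i < k, b (i + n) = a i)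
    (hkn : b (k + n) < a k) : qdig β₁ (tau β₁) = qdig β₂ (tau β₂) := by
  have h₂ : 1 < β₂ := h₁.trans hlt
  by_contra hne
  have hle := qdig_tau_monotoneOn h₁ h₂ hlt.le
  have hlt' : toLex (qdig β₁ (tau β₁)) < toLex (qdig β₂ (tau β₂)) :=
    lex_not_le.1 fun h => hne (toLex.injective (le_antisymm hle h))
  obtain ⟨t, ht0, ht, hat, hag⟩ := exists_lt_tau_of_lt h₂ hlt' (k + 1)
  refine ZeroGrowth.not_of_lt_tau h₂ ht0 ht hat.le (fun x hx m => ?_) (zeroGrowth_tau h₁)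
  by_contra hnle
  have hz := lex_agree_of_le_of_le (lex_not_le.1 hnle).le (shiftn_gdig_lt h₂ hx.1 m).le
    (L := n + k + 1) fun i hi => by rw [hb₁ i hi, hb₂ i hi]
  have hge := (le_iterate_iff h₂ hx.1 ⟨ht0, ht.le.trans (tau_le_one β₂)⟩ (n + m)).1 (hx.2 (n + m))
  rw [← shiftn_shiftn] at hge
  have hdig : ∀ i ≤ k, shiftn n (shiftn m (gdig β₂ x)) i = b (i + n) := fun i hi => by
    rw [← hb₁ (i + n) (by omega), ← hz (i + n) (by omega)]
    rfl
  have h := lex_le_apply hge (k := k) fun i hi => by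
    rw [hdig i hi.le, hag i (by omega), ha₂ i (by omega), hk i hi]
  rw [hdig k le_rfl, hag k (by omega), ha₂ k (by omega)] at h
  omega

lemma eventually_qdig_tau_eq {β : ℝ} (hβ : 1 < β)
    (hα : ∀ L : ℕ, ∀ᶠ β' in 𝓝 β, ∀ i < L, qdig β' 1 i = qdig β 1 i)
    (ha : ∀ L : ℕ, ∀ᶠ β' in 𝓝 β, ∀ i < L, qdig β' (tau β') i = qdig β (tau β) i) {n : ℕ}
    (hn : toLex (shiftn n (qdig β 1)) < toLex (qdig β (tau β))) :
    ∀ᶠ β' in 𝓝 β, qdig β' (tau β') = qdig β (tau β) := by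
  obtain ⟨k, hk, hkn⟩ := hn
  filter_upwards [hα (n + k + 1), ha (k + 1), Ioi_mem_nhds hβ] with β' h1 h2 h3
  rcases lt_trichotomy β' β with hlt | rfl | hlt
  · exact qdig_tau_eq_of_agree h3 hlt h1 (fun _ _ => rfl) (fun _ _ => rfl) hk hkn
  · rfl
  · exact (qdig_tau_eq_of_agree hβ hlt (fun _ _ => rfl) h1 h2 hk hkn).symm

lemma abs_sub_le_of_qdig_agree {c β β' : ℝ} (hc : 1 < c) (hβ : c < β) (hβ' : c < β') {m : ℕ}
    (hm : 0 < m) (h : ∀ i < m, qdig β 1 i = qdig β' 1 i) : |β - β'| ≤ c * (c ^ m)⁻¹ := by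
  have key : ∀ {β β' : ℝ}, c < β → β < β' → (∀ i < m, qdig β 1 i = qdig β' 1 i) →
      β' - β ≤ c * (c ^ m)⁻¹ := by
    intro β β' hβ hlt h
    obtain ⟨m, rfl⟩ := Nat.exists_eq_succ_of_ne_zero hm.ne'
    refine (qdig_agree_sub_le (hc.trans hβ) hlt h).trans ?_
    have h0 : 0 < c := by linarith
    calc 1 / β ^ m ≤ 1 / c ^ m := by gcongr
      _ = c * (c ^ (m + 1))⁻¹ := by rw [pow_succ]; field_simp
  rcases lt_trichotomy β β' with hlt | rfl | hlt
  · rw [abs_sub_comm, abs_of_pos (by linarith)]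
    exact key hβ hlt h
  · have : 0 < c := by linarith
    simp only [sub_self, abs_zero]
    positivity
  · rw [abs_of_pos (by linarith)]
    exact key hβ' hlt fun i hi => (h i hi).symm

/-- Parameters for which the quasi-greedy orbit of `1` stays above the critical sequence form a set
of small dimension near every point at which prefixes are locally constant. -/
lemma exists_nhds_dimH_le {β : ℝ} (hβ : 1 < β)
    (hα : ∀ L : ℕ, ∀ᶠ β' in 𝓝 β, ∀ i < L, qdig β' 1 i = qdig β 1 i)
    (ha : ∀ L : ℕ, ∀ᶠ β' in 𝓝 β, ∀ i < L, qdig β' (tau β') i = qdig β (tau β) i) {s : ℝ}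
    (hs : 0 < s) {B : Set ℝ}
    (hB : ∀ β' ∈ B, ∀ n, toLex (qdig β' (tau β')) ≤ toLex (shiftn n (qdig β' 1))) :
    ∃ U ∈ 𝓝 β, dimH (B ∩ U) ≤ ENNReal.ofReal s := by
  obtain ⟨c, hc, hcβ⟩ := exists_between hβ
  have h0 : 0 < c := by linarith
  obtain ⟨n, hn, hcard⟩ := zeroGrowth_tau hβ (c ^ s) (Real.one_lt_rpow hc hs)
  have hcn : 1 < c ^ n := one_lt_pow₀ hc (by omega)
  refine ⟨_, (hα n).and ((ha n).and (Ioi_mem_nhds hcβ)), ?_⟩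
  refine dimH_le_of_blocks (admWords_finite (qdig β (tau β)) (qdig β 1) n)
    (fun x j => rpre (shiftn (j * n) (qdig x 1)) n) ?_ (C := c) (ρ := (c ^ n)⁻¹) h0.le
    (by positivity) (inv_lt_one_of_one_lt₀ hcn) hs ?_ ?_
  · rintro x ⟨hxB, hx1, hx2, hxc⟩ j
    obtain ⟨hlen, hadm⟩ := block_mem_admWords (hB x hxB)
      (shiftn_qdig_le (hc.trans hxc) one_mem_Ioc) (j * n) n
    exact ⟨hlen, adm_congr (fun i hi => hx2 i (hlen ▸ hi)) (fun i hi => hx1 i (hlen ▸ hi)) hadm⟩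
  · rintro x ⟨-, -, -, hxc⟩ y ⟨-, -, -, hyc⟩ k hk hxy
    rw [inv_pow, ← pow_mul, mul_comm n k]
    exact abs_sub_le_of_qdig_agree hc hxc hyc (Nat.mul_pos hk hn) (eq_of_blocks_eq hxy)
  · calc _ ≤ (c ^ s) ^ n * ((c ^ n)⁻¹) ^ s := by gcongr
      _ = 1 := by
        rw [Real.inv_rpow (by positivity), ← Real.rpow_natCast, ← Real.rpow_natCast,
          ← Real.rpow_mul h0.le, ← Real.rpow_mul h0.le, mul_comm (n : ℝ) s]
        exact mul_inv_cancel₀ (by positivity)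

lemma dimH_Ioi_diff_eventually_qdig_tau_eq :
    dimH (Ioi (1 : ℝ) \ {β | 1 < β ∧ ∀ᶠ β' in 𝓝 β, qdig β' (tau β') = qdig β (tau β)}) = 0 := by
  obtain ⟨N₁, hN₁, hα⟩ := exists_countable_eventually_agree isOpen_Ioi (F := fun β => qdig β 1)
    fun x hx y _ hxy => hxy.eq_or_lt.elim (fun h => h ▸ le_rfl)
      fun h => (qdig_one_strictMono hx h).le
  obtain ⟨N₂, hN₂, ha⟩ := exists_countable_eventually_agree isOpen_Ioi qdig_tau_monotoneOn
  set B : Set ℝ := {β | 1 < β ∧ β ∉ N₁ ∧ β ∉ N₂ ∧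
    ∀ n, toLex (qdig β (tau β)) ≤ toLex (shiftn n (qdig β 1))} with hB
  have hBdim : dimH B = 0 := by
    refine dimH_eq_zero_of_forall fun s hs => ?_
    by_contra! hlt
    obtain ⟨β, hβ, h⟩ := exists_mem_nhdsWithin_lt_dimH_of_lt_dimH hlt
    obtain ⟨U, hU, hle⟩ := exists_nhds_dimH_le hβ.1 (hα β hβ.1 hβ.2.1) (ha β hβ.1 hβ.2.2.1) hs
      fun β' (hβ' : β' ∈ B) => hβ'.2.2.2
    exact (h _ (inter_mem self_mem_nhdsWithin (mem_nhdsWithin_of_mem_nhds hU))).not_ge hle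
  have hsub : Ioi (1 : ℝ) \ {β | 1 < β ∧ ∀ᶠ β' in 𝓝 β, qdig β' (tau β') = qdig β (tau β)} ⊆
      (N₁ ∪ N₂) ∪ B := by
    rintro β ⟨hβ, hnot⟩
    by_contra hmem
    simp only [mem_union, not_or] at hmem
    obtain ⟨⟨h1, h2⟩, h3⟩ := hmem
    refine hnot ⟨hβ, ?_⟩
    have : ∃ n, ¬ toLex (qdig β (tau β)) ≤ toLex (shiftn n (qdig β 1)) := by
      by_contra! hall
      exact h3 ⟨hβ, h1, h2, hall⟩
    obtain ⟨n, hn⟩ := this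
    exact eventually_qdig_tau_eq hβ (hα β hβ h1) (ha β hβ h2) (lex_not_le.1 hn)
  refine le_antisymm ((dimH_mono hsub).trans ?_) zero_le
  rw [dimH_union, dimH_countable (hN₁.union hN₂), hBdim, max_self]

theorem tau_analytic_on_open_set :
    ∃ O : Set ℝ, IsOpen O ∧ O ⊆ Set.Ioi 1 ∧ dimH (Set.Ioi 1 \ O) = 0 ∧
      ∀ x ∈ O,
        AnalyticOnNhd ℝ tau (connectedComponentIn O x) ∧
        StrictConvexOn ℝ (connectedComponentIn O x) tau ∧
        StrictAntiOn tau (connectedComponentIn O x) := by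
  set O : Set ℝ := {β | 1 < β ∧ ∀ᶠ β' in 𝓝 β, qdig β' (tau β') = qdig β (tau β)} with hO
  have hopen : IsOpen O := by
    refine isOpen_iff_mem_nhds.2 fun β hβ => ?_
    filter_upwards [Ioi_mem_nhds hβ.1, hβ.2.eventually_nhds, hβ.2] with β' h1 h2 h3
    exact ⟨h1, h2.mono fun y hy => hy.trans h3.symm⟩
  refine ⟨O, hopen, fun β hβ => hβ.1, dimH_Ioi_diff_eventually_qdig_tau_eq, fun x hx => ?_⟩
  set C := connectedComponentIn O x with hC
  have hCO : C ⊆ O := connectedComponentIn_subset O x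
  have hC1 : C ⊆ Ioi 1 := fun β hβ => (hCO hβ).1
  have hxC : x ∈ C := mem_connectedComponentIn hx
  have hpre : IsPreconnected C := isPreconnected_connectedComponentIn
  have hconst : ∀ β ∈ C, qdig β (tau β) = qdig x (tau x) := fun β hβ =>
    hpre.induction₂ (fun y z => qdig y (tau y) = qdig z (tau z))
      (fun y hy => ((hCO hy).2.filter_mono nhdsWithin_le_nhds).mono fun z hz => hz.symm)
      (fun _ _ _ _ _ _ h1 h2 => h1.trans h2) (fun _ _ _ _ h => h.symm) hβ hxC
  have heq : EqOn (fun β => valSeq β (qdig x (tau x))) tau C := fun β hβ => by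
    simp only [← hconst β hβ, valSeq_qdig (hC1 hβ) (tau_mem (hC1 hβ))]
  have hbdd := qdig_le_ceil hx.1 (tau_mem hx.1)
  obtain ⟨i, hi⟩ := qdig_ne_zero hx.1 (tau_mem hx.1)
  exact ⟨((valSeq_analyticOnNhd hbdd).mono hC1).congr hopen.connectedComponentIn heq,
    ((valSeq_strictConvexOn hbdd hi).subset hC1 hpre.ordConnected.convex).congr heq,
    ((valSeq_strictAnti hbdd hi).mono hC1).congr heq⟩
end

section
/- Let s = s_1…s_m be an extended Farey word in F_e. Then (i) the lexicographically largest cyclic permutation of s is its reversal: L(s) = s_m s_{m−1} … s_1; and (ii) s^− is a palindrome, i.e. s_1 … s_{m−1}(s_m − 1) = (s_m − 1) s_{m−1} s_{m−2} … s_1. -/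
open Set Filter MeasureTheory Topology

/-- The word of length `n` whose letters are the increments of `f`. -/
def incrWord (f : ℕ → ℕ) (n : ℕ) : List ℕ := (List.range n).map fun i => f (i + 1) - f i

/-- The lower Christoffel word of slope `a / n`, with `n` letters summing to `a`. -/
def christoffel (a n : ℕ) : List ℕ := incrWord (fun i => a * i / n) n

/-- Pointwise larger partial sums give a lexicographically larger word. -/
theorem incrWord_le_incrWord {f g : ℕ → ℕ} (n : ℕ) (hf : Monotone f) (h0 : f 0 = g 0)
    (hfg : ∀ i, f i ≤ g i) : incrWord f n ≤ incrWord g n := by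
  induction n generalizing f g with
  | zero => exact le_of_eq rfl
  | succ n ih =>
    have tail : ∀ k : ℕ → ℕ,
        incrWord k (n + 1) = (k 1 - k 0) :: incrWord (fun i => k (i + 1)) n := by
      intro k
      simp [incrWord, List.range_succ_eq_map, Function.comp_def]
    rw [tail, tail]
    have h01 := hf (Nat.zero_le 1)
    rcases (hfg 1).lt_or_eq with h | h
    · exact le_of_lt (List.Lex.rel (by omega))
    · rw [h, h0]
      exact List.cons_le_cons _
        (ih (fun i j hij => hf (Nat.succ_le_succ hij)) h fun i => hfg (i + 1))

theorem foldl_max_eq {α : Type*} [LinearOrder α] {l : List α} {x M : α} (hx : x ≤ M)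
    (hM : M = x ∨ M ∈ l) (hl : ∀ y ∈ l, y ≤ M) : l.foldl max x = M := by
  induction l generalizing x with
  | nil => simpa using hM.elim Eq.symm (by simp)
  | cons y l ih =>
    have hy := hl y (by simp)
    refine ih (max_le hx hy) ?_ fun z hz => hl z (by simp [hz])
    rcases hM with rfl | hM
    · exact Or.inl (max_eq_left hy).symm
    · rcases List.mem_cons.1 hM with rfl | hM
      · exact Or.inl (max_eq_right hx).symm
      · exact Or.inr hM

theorem length_christoffel (a n : ℕ) : (christoffel a n).length = n := by
  simp [christoffel, incrWord]

theorem monotone_mul_add_div (a c n : ℕ) : Monotone fun i => (a * i + c) / n :=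
  fun _ _ h => Nat.div_le_div_right (Nat.add_le_add_right (Nat.mul_le_mul_left a h) c)

theorem christoffel_rotate {a n j : ℕ} (hn : 0 < n) (hj : j < n) :
    (christoffel a n).rotate j = incrWord (fun i => (a * i + a * j % n) / n) n := by
  refine List.ext_getElem (by simp [christoffel, incrWord]) fun i hi _ => ?_
  have hi : i < n := by simpa [length_christoffel] using hi
  rw [List.getElem_rotate]
  simp only [christoffel, incrWord, List.getElem_map, List.getElem_range, List.length_map,
    List.length_range]
  have shift : ∀ k, a * (k + j) / n = (a * k + a * j % n) / n + a * j / n := by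
    intro k
    rw [← Nat.add_mul_div_left _ _ hn, mul_add, add_assoc, Nat.mod_add_div]
  have key : a * ((i + j) % n + 1) / n - a * ((i + j) % n) / n
      = a * (i + 1 + j) / n - a * (i + j) / n := by
    rcases lt_or_ge (i + j) n with h | h
    · rw [Nat.mod_eq_of_lt h, add_right_comm]
    · obtain ⟨k, hk⟩ := Nat.exists_eq_add_of_le h
      have hkn : k < n := by omega
      have per : ∀ t, a * (n + t) / n = a * t / n + a := by
        intro t
        rw [← Nat.add_mul_div_left _ _ hn]
        ring_nf
      rw [show i + 1 + j = n + (k + 1) by omega, hk, Nat.add_mod_left, Nat.mod_eq_of_lt hkn,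
        per, per]
      omega
  rw [key, shift, shift]
  omega

/-- `⌊a (n - i) / n⌋ = a - ⌈a i / n⌉`. -/
theorem mul_sub_div_add {a n i : ℕ} (hn : 0 < n) (hi : i ≤ n) :
    a * (n - i) / n + (a * i + (n - 1)) / n = a := by
  obtain ⟨k, rfl⟩ := Nat.exists_eq_add_of_le hi
  rw [Nat.add_sub_cancel_left]
  have e : a * i + (i + k - 1) = (i + k) * a + (i + k - 1) - a * k := by
    rw [show (i + k) * a = a * i + a * k by ring]
    omega
  have hq := Nat.div_add_mod (a * k) (i + k)
  have hr := Nat.mod_lt (a * k) hn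
  have hqa : a * k / (i + k) ≤ a := Nat.div_le_of_le_mul (by nlinarith)
  generalize a * k / (i + k) = q at *
  generalize a * k % (i + k) = r at *
  obtain ⟨d, rfl⟩ := Nat.exists_eq_add_of_le hqa
  have : ((q + d) * i + (i + k - 1)) / (i + k) = d := by
    rw [mul_add] at e
    rw [Nat.div_eq_iff hn]
    have := mul_comm (i + k) d
    omega
  omega

theorem christoffel_reverse {a n : ℕ} (hn : 0 < n) :
    (christoffel a n).reverse = incrWord (fun i => (a * i + (n - 1)) / n) n := by
  refine List.ext_getElem (by simp [christoffel, incrWord]) fun i hi _ => ?_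
  have hi : i < n := by simpa [length_christoffel] using hi
  rw [List.getElem_reverse]
  simp only [christoffel, incrWord, List.getElem_map, List.getElem_range, List.length_map,
    List.length_range]
  have h₁ := mul_sub_div_add (a := a) hn hi.le
  have h₂ := mul_sub_div_add (a := a) hn (i := i + 1) hi
  rw [show n - 1 - i + 1 = n - i by omega, show n - 1 - i = n - (i + 1) by omega]
  have h₃ : a * (n - (i + 1)) / n ≤ a * (n - i) / n :=
    Nat.div_le_div_right (Nat.mul_le_mul_left a (by omega))
  omega

theorem maxCyc_christoffel {a n : ℕ} (hn : 0 < n) (h : a.Coprime n) :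
    maxCyc (christoffel a n) = (christoffel a n).reverse := by
  have hrot : ∀ j < n, (christoffel a n).rotate j ≤ (christoffel a n).reverse := by
    intro j hj
    rw [christoffel_rotate hn hj, christoffel_reverse hn]
    have hc := Nat.mod_lt (a * j) hn
    refine incrWord_le_incrWord n (monotone_mul_add_div a _ n) ?_ fun i =>
      Nat.div_le_div_right (by omega)
    simp only [mul_zero, zero_add]
    rw [Nat.div_eq_of_lt hc, Nat.div_eq_of_lt (by omega)]
  obtain ⟨j, hj, hjn⟩ : ∃ j < n, a * j % n = n - 1 := by
    obtain ⟨m, hm⟩ := Nat.exists_mul_mod_eq_of_coprime (n - 1) h hn.ne'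
    refine ⟨m % n, Nat.mod_lt _ hn, ?_⟩
    rw [Nat.mul_mod_mod, hm.2, Nat.mod_eq_of_lt (by omega)]
  have hmem : (christoffel a n).rotate j = (christoffel a n).reverse := by
    rw [christoffel_rotate hn hj, christoffel_reverse hn, hjn]
  refine foldl_max_eq (not_lt.1 (List.not_lt_nil _)) (Or.inr ?_) ?_
  · exact List.mem_map.2 ⟨j, by simpa [length_christoffel] using hj, hmem⟩
  · intro y hy
    obtain ⟨i, hi, rfl⟩ := List.mem_map.1 hy
    exact hrot i (by simpa [length_christoffel] using hi)

theorem ceil_eq_floor_add_one {a n i : ℕ} (h : a.Coprime n) (hi : 0 < i) (hin : i < n) :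
    (a * i + (n - 1)) / n = a * i / n + 1 := by
  have hn : 0 < n := hi.trans hin
  have hr : a * i % n ≠ 0 := fun h0 =>
    absurd (Nat.le_of_dvd hi (h.symm.dvd_of_dvd_mul_left (Nat.dvd_of_mod_eq_zero h0)))
      (by omega)
  have hlt := Nat.mod_lt (a * i) hn
  rw [← Nat.add_div_right _ hn]
  conv_lhs => rw [← Nat.div_add_mod (a * i) n]
  conv_rhs => rw [← Nat.div_add_mod (a * i) n]
  rw [add_assoc, add_assoc, Nat.mul_add_div hn, Nat.mul_add_div hn]
  congr 1
  rw [Nat.div_eq_of_lt_le (k := 1), Nat.div_eq_of_lt_le (k := 1)] <;> omega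

theorem wminus_christoffel {a n : ℕ} (hn : 0 < n) (h : a.Coprime n) :
    wminus (christoffel a n) = (wminus (christoffel a n)).reverse := by
  obtain ⟨m, rfl⟩ : ∃ m, n = m + 1 := ⟨n - 1, by omega⟩
  have hw : wminus (christoffel a (m + 1)) =
      incrWord (fun i => if i = m + 1 then a - 1 else a * i / (m + 1)) (m + 1) := by
    simp only [wminus, christoffel, incrWord, List.range_succ, List.map_append, List.map_cons,
      List.map_nil, List.dropLast_concat, List.getLast!_eq_getLast?_getD, List.getLast?_concat,
      Option.getD_some]
    congr 1
    · refine List.map_congr_left fun i hi => ?_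
      rw [List.mem_range] at hi
      rw [if_neg (by omega), if_neg (by omega)]
    · rw [if_pos trivial, if_neg (by omega), Nat.mul_div_cancel _ hn, Nat.sub_right_comm]
  rw [hw]
  refine List.ext_getElem (by simp [incrWord]) fun i hi _ => ?_
  have hi : i < m + 1 := by simpa [incrWord] using hi
  rw [List.getElem_reverse]
  simp only [incrWord, List.getElem_map, List.getElem_range, List.length_map,
    List.length_range]
  rcases Nat.eq_zero_or_pos m with rfl | hm
  · simp [show i = 0 by omega]
  have sym : ∀ k, 0 < k → k < m + 1 → a * (m + 1 - k) / (m + 1) + a * k / (m + 1) + 1 = a := by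
    intro k hk hkm
    have := mul_sub_div_add (a := a) hn hkm.le
    rw [ceil_eq_floor_add_one h hk hkm] at this
    omega
  have ends : ∀ k ≤ m + 1, (if m + 1 - k = m + 1 then a - 1 else a * (m + 1 - k) / (m + 1)) +
      (if k = m + 1 then a - 1 else a * k / (m + 1)) = a - 1 := by
    intro k hk
    rcases Nat.eq_zero_or_pos k with rfl | hk0
    · simp
    rcases hk.eq_or_lt with rfl | hkm
    · simp
    · rw [if_neg (by omega), if_neg (by omega)]
      exact Nat.eq_sub_of_add_eq (sym k hk0 hkm)
  have h₁ := ends i hi.le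
  have h₂ := ends (i + 1) hi
  rw [show m + 1 - 1 - i + 1 = m + 1 - i by omega,
    show m + 1 - 1 - i = m + 1 - (i + 1) by omega]
  omega

theorem add_mul_div_left_part {a n b m i : ℕ} (hm : 0 < m) (h : b * n = a * m + 1)
    (hn : 0 < n) (hi : i ≤ n) : (a + b) * i / (n + m) = a * i / n := by
  have hq := Nat.div_add_mod (a * i) n
  have hr := Nat.mod_lt (a * i) hn
  set q := a * i / n
  set r := a * i % n
  have key : n * ((a + b) * i) = n * ((n + m) * q) + ((n + m) * r + i) := by
    linear_combination i * h - (n + m) * hq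
  refine Nat.div_eq_of_lt_le ?_ ?_
  · refine Nat.le_of_mul_le_mul_left (c := n) ?_ hn
    rw [key, mul_comm q]
    exact Nat.le_add_right _ _
  · refine Nat.lt_of_mul_lt_mul_left (a := n) ?_
    nlinarith

theorem add_mul_div_right_part {a n b m i : ℕ} (hm : 0 < m) (h : b * n = a * m + 1)
    (hn : 0 < n) (hi : i ≤ m) : (a + b) * (n + i) / (n + m) = a + b * i / m := by
  have hq := Nat.div_add_mod (b * i) m
  have hr := Nat.mod_lt (b * i) hm
  set q := b * i / m
  set r := b * i % m
  have key : m * ((a + b) * (n + i)) + i = m * ((n + m) * (a + q)) + (m + (n + m) * r) := by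
    zify at h hq ⊢
    linear_combination (m - i) * h - (n + m) * hq
  refine Nat.div_eq_of_lt_le ?_ ?_
  · refine Nat.le_of_mul_le_mul_left (c := m) ?_ hm
    nlinarith
  · refine Nat.lt_of_mul_lt_mul_left (a := m) ?_
    nlinarith

theorem christoffel_append {a n b m : ℕ} (hn : 0 < n) (hm : 0 < m) (h : b * n = a * m + 1) :
    christoffel a n ++ christoffel b m = christoffel (a + b) (n + m) := by
  simp only [christoffel, incrWord, List.range_add, List.map_append, List.map_map]
  congr 1
  · refine List.map_congr_left fun i hi => ?_
    rw [List.mem_range] at hi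
    rw [add_mul_div_left_part hm h hn hi.le, add_mul_div_left_part hm h hn hi]
  · refine List.map_congr_left fun i hi => ?_
    rw [List.mem_range] at hi
    simp only [Function.comp_apply]
    rw [add_assoc n, add_mul_div_right_part hm h hn hi.le, add_mul_div_right_part hm h hn hi,
      Nat.add_sub_add_left]

theorem theta_christoffel {a n : ℕ} (hn : 0 < n) :
    theta (christoffel a n) = christoffel (a + n) n := by
  simp only [theta, christoffel, incrWord, List.map_map]
  refine List.map_congr_left fun i _ => ?_
  have hmono : a * i / n ≤ a * (i + 1) / n :=
    Nat.div_le_div_right (Nat.mul_le_mul_left a i.le_succ)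
  simp only [Function.comp_apply, add_mul a n, Nat.add_mul_div_left _ _ hn]
  omega

/-- A Christoffel word whose slope is in lowest terms. -/
def IsChristoffel (w : List ℕ) : Prop := ∃ a n, 0 < n ∧ a.Coprime n ∧ w = christoffel a n

/-- Christoffel words whose slopes are Farey neighbours. -/
def FareyNeighbours (u v : List ℕ) : Prop :=
  ∃ a n b m, 0 < n ∧ 0 < m ∧ b * n = a * m + 1 ∧ u = christoffel a n ∧ v = christoffel b m

theorem FareyNeighbours.append {u v : List ℕ} (h : FareyNeighbours u v) :
    FareyNeighbours u (u ++ v) ∧ FareyNeighbours (u ++ v) v := by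
  obtain ⟨a, n, b, m, hn, hm, h, rfl, rfl⟩ := h
  rw [christoffel_append hn hm h]
  exact ⟨⟨a, n, a + b, n + m, hn, by omega, by linarith, rfl, rfl⟩,
    ⟨a + b, n + m, b, m, by omega, hm, by linarith, rfl, rfl⟩⟩

theorem FareyNeighbours.isChristoffel_right {u v : List ℕ} (h : FareyNeighbours u v) :
    IsChristoffel v := by
  obtain ⟨a, n, b, m, -, hm, h, -, rfl⟩ := h
  refine ⟨b, m, hm, ?_, rfl⟩
  rw [← Nat.isCoprime_iff_coprime]
  exact ⟨n, -a, by zify at h; linear_combination h⟩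

theorem fareyInsert_cons_eq (w : List ℕ) (l : List (List ℕ)) :
    ∃ l', fareyInsert (w :: l) = w :: l' := by
  cases l <;> exact ⟨_, rfl⟩

theorem isChain_fareyInsert {l : List (List ℕ)} (h : l.IsChain FareyNeighbours) :
    (fareyInsert l).IsChain FareyNeighbours := by
  induction l using fareyInsert.induct with
  | case1 => exact h
  | case2 w => exact h
  | case3 w v rest ih =>
    rw [List.isChain_cons_cons] at h
    have := ih h.2
    obtain ⟨l', hl'⟩ := fareyInsert_cons_eq v rest
    rw [fareyInsert, hl', List.isChain_cons_cons, List.isChain_cons_cons]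
    rw [hl'] at this
    exact ⟨h.1.append.1, h.1.append.2, this⟩

theorem isChain_fareyLevel (n : ℕ) : (fareyLevel n).IsChain FareyNeighbours := by
  induction n with
  | zero =>
    simp only [fareyLevel, List.isChain_cons_cons, List.isChain_singleton, and_true]
    exact ⟨0, 1, 1, 1, by norm_num, by norm_num, by norm_num, by decide, by decide⟩
  | succ n ih => exact isChain_fareyInsert ih

theorem isChristoffel_of_mem_fareyInsert {l : List (List ℕ)} (h : l.IsChain FareyNeighbours)
    (hl : ∀ w ∈ l, IsChristoffel w) : ∀ w ∈ fareyInsert l, IsChristoffel w := by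
  induction l using fareyInsert.induct with
  | case1 => exact hl
  | case2 w => exact hl
  | case3 w v rest ih =>
    rw [List.isChain_cons_cons] at h
    have := ih h.2 fun x hx => hl x (List.mem_cons_of_mem _ hx)
    intro x hx
    rw [fareyInsert, List.mem_cons, List.mem_cons] at hx
    rcases hx with rfl | rfl | hx
    · exact hl _ List.mem_cons_self
    · exact h.1.append.1.isChristoffel_right
    · exact this x hx

theorem isChristoffel_of_mem_fareyLevel (n : ℕ) : ∀ w ∈ fareyLevel n, IsChristoffel w := by
  induction n with
  | zero =>
    simp only [fareyLevel, List.mem_cons, List.not_mem_nil, or_false, forall_eq_or_imp,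
      forall_eq]
    exact ⟨⟨0, 1, by norm_num, by norm_num, by decide⟩,
      ⟨1, 1, by norm_num, by norm_num, by decide⟩⟩
  | succ n ih => exact isChristoffel_of_mem_fareyInsert (isChain_fareyLevel n) ih

theorem isChristoffel_of_mem_fareyExt {s : List ℕ} (hs : s ∈ FareyExt) : IsChristoffel s := by
  obtain ⟨v, hv, k, rfl⟩ := hs
  have hv : IsChristoffel v := by
    rcases hv with ⟨⟨n, hn⟩, -⟩ | rfl
    · exact isChristoffel_of_mem_fareyLevel n v hn
    · exact isChristoffel_of_mem_fareyLevel 0 _ (by simp [fareyLevel])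
  induction k with
  | zero => exact hv
  | succ k ih =>
    rw [Function.iterate_succ_apply']
    obtain ⟨a, n, hn, h, hw⟩ := ih
    exact ⟨a + n, n, hn, by simpa using h, by rw [hw, theta_christoffel hn]⟩

/-- For an extended Farey word `s = s₁…s_m ∈ F_e`: (i) the
lexicographically largest cyclic permutation of `s` is its reversal, and (ii) `s⁻`
is a palindrome. -/
theorem fareyExt_palindrome (s : List ℕ) (hs : s ∈ FareyExt) :
    maxCyc s = s.reverse ∧ wminus s = (wminus s).reverse := by
  obtain ⟨a, n, hn, h, rfl⟩ := isChristoffel_of_mem_fareyExt hs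
  exact ⟨maxCyc_christoffel hn h, wminus_christoffel hn h⟩
end
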